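/- Theorem 1 (joint source-channel coding for the MARC, CPM to the relay and Slepian-Wolf coding to the destination): The source pair (S1, S2) can be reliably transmitted over the discrete memoryless MARC with relay side information W3 and receiver side information W if there exist finite sets 𝒱1, 𝒱2 and a joint pmf that factors as p(s1,s2,w3,w) p(v1) p(x1|s1,v1) p(v2) p(x2|s2,v2) p(x3|v1,v2) p(y3,y|x1,x2,x3) (where p(s1,s2,w3,w) is the given source distribution and p(y3,y|x1,x2,x3) is the given channel law) such that all of the following strict inequalities hold: H(S1|S2,W3) < I(X1;Y3|S2,X2,V1,X3,W3); H(S2|S1,W3) < I(X2;Y3|S1,X1,V2,X3,W3); H(S1,S2|W3) < I(X1,X2;Y3|V1,V2,X3,W3); H(S1|S2,W) < I(X1,X3;Y|S1,X2,V2); H(S2|S1,W) < I(X2,X3;Y|S2,X1,V1); H(S1,S2|W) < I(X1,X2,X3;Y|S1,S2). -/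

import Mathlib

open scoped BigOperators

/-- A probability mass function on a finite type. -/
def IsPmf {α : Type*} [Fintype α] (p : α → ℝ) : Prop :=
  (∀ a, 0 ≤ p a) ∧ ∑ a, p a = 1

/-- Shannon entropy (natural logarithm) of the push-forward of `μ` under `X`. -/
noncomputable def entropyOf {Ω α : Type*} [Fintype Ω] [Fintype α] [DecidableEq α]
    (μ : Ω → ℝ) (X : Ω → α) : ℝ :=
  ∑ a : α, Real.negMulLog (∑ ω : Ω, if X ω = a then μ ω else 0)

/-- Conditional Shannon entropy `H(X | Y)` under `μ`. -/
noncomputable def condEntropyOf {Ω α β : Type*} [Fintype Ω] [Fintype α] [Fintype β]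
    [DecidableEq α] [DecidableEq β] (μ : Ω → ℝ) (X : Ω → α) (Y : Ω → β) : ℝ :=
  entropyOf μ (fun ω => (X ω, Y ω)) - entropyOf μ Y

/-- Mutual information `I(X ; Y)` under `μ`. -/
noncomputable def mutualInfoOf {Ω α β : Type*} [Fintype Ω] [Fintype α] [Fintype β]
    [DecidableEq α] [DecidableEq β] (μ : Ω → ℝ) (X : Ω → α) (Y : Ω → β) : ℝ :=
  entropyOf μ X + entropyOf μ Y - entropyOf μ (fun ω => (X ω, Y ω))

/-- Conditional mutual information `I(X ; Y | Z)` under `μ`. -/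
noncomputable def condMutualInfoOf {Ω α β γ : Type*} [Fintype Ω] [Fintype α] [Fintype β]
    [Fintype γ] [DecidableEq α] [DecidableEq β] [DecidableEq γ]
    (μ : Ω → ℝ) (X : Ω → α) (Y : Ω → β) (Z : Ω → γ) : ℝ :=
  entropyOf μ (fun ω => (X ω, Z ω)) + entropyOf μ (fun ω => (Y ω, Z ω))
    - entropyOf μ (fun ω => (X ω, Y ω, Z ω)) - entropyOf μ Z

/-- Causality of the relay encoding functions: the channel input of the relay at time `k`
depends on the relay channel outputs only through those at times `j < k`. -/
def CausalRelay {n : ℕ} {Y3 W3 X3 : Type*}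
    (f3 : Fin n → (Fin n → Y3) → (Fin n → W3) → X3) : Prop :=
  ∀ (k : Fin n) (y y' : Fin n → Y3) (w : Fin n → W3),
    (∀ j : Fin n, j < k → y j = y' j) → f3 k y w = f3 k y' w

/-- Error probability of a blocklength-`n` source-channel code over the discrete memoryless
MARC with source/side-information pmf `pSrc` (i.i.d. across time) and channel law `Q`. -/
noncomputable def marcErrProb {S1 S2 W W3 X1 X2 X3 Y Y3 : Type*}
    [Fintype S1] [Fintype S2] [Fintype W] [Fintype W3] [Fintype Y] [Fintype Y3]
    [DecidableEq S1] [DecidableEq S2]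
    (pSrc : S1 × S2 × W × W3 → ℝ) (Q : X1 × X2 × X3 → Y × Y3 → ℝ) (n : ℕ)
    (f1 : (Fin n → S1) → Fin n → X1) (f2 : (Fin n → S2) → Fin n → X2)
    (f3 : Fin n → (Fin n → Y3) → (Fin n → W3) → X3)
    (g : (Fin n → Y) → (Fin n → W) → (Fin n → S1) × (Fin n → S2)) : ℝ :=
  ∑ s1 : Fin n → S1, ∑ s2 : Fin n → S2, ∑ w : Fin n → W, ∑ w3 : Fin n → W3,
    ∑ y : Fin n → Y, ∑ y3 : Fin n → Y3,
      if g y w ≠ (s1, s2) then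
        (∏ k : Fin n, pSrc (s1 k, s2 k, w k, w3 k)) *
          ∏ k : Fin n, Q (f1 s1 k, f2 s2 k, f3 k y3 w3) (y k, y3 k)
      else 0

/-- The sources `(S1, S2)` can be reliably transmitted over the DM MARC: codes with
arbitrarily small error probability exist. -/
def MarcReliablyTransmitted {S1 S2 W W3 X1 X2 X3 Y Y3 : Type*}
    [Fintype S1] [Fintype S2] [Fintype W] [Fintype W3] [Fintype Y] [Fintype Y3]
    [DecidableEq S1] [DecidableEq S2]
    (pSrc : S1 × S2 × W × W3 → ℝ) (Q : X1 × X2 × X3 → Y × Y3 → ℝ) : Prop :=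
  ∀ ε : ℝ, 0 < ε → ∃ n : ℕ, 0 < n ∧
    ∃ (f1 : (Fin n → S1) → Fin n → X1) (f2 : (Fin n → S2) → Fin n → X2)
      (f3 : Fin n → (Fin n → Y3) → (Fin n → W3) → X3)
      (g : (Fin n → Y) → (Fin n → W) → (Fin n → S1) × (Fin n → S2)),
      CausalRelay f3 ∧ marcErrProb pSrc Q n f1 f2 f3 g ≤ ε

/-- The single-letter joint distribution of Theorem 1:
`p(s1,s2,w3,w) p(v1) p(x1|s1,v1) p(v2) p(x2|s2,v2) p(x3|v1,v2) p(y3,y|x1,x2,x3)`. -/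
noncomputable def thm1Joint {S1 S2 W W3 X1 X2 X3 Y Y3 : Type*} (n1 n2 : ℕ)
    (pSrc : S1 × S2 × W × W3 → ℝ) (Q : X1 × X2 × X3 → Y × Y3 → ℝ)
    (pV1 : Fin n1 → ℝ) (pV2 : Fin n2 → ℝ)
    (pX1 : S1 → Fin n1 → X1 → ℝ) (pX2 : S2 → Fin n2 → X2 → ℝ)
    (pX3 : Fin n1 → Fin n2 → X3 → ℝ) :
    S1 × S2 × W3 × W × Fin n1 × Fin n2 × X1 × X2 × X3 × Y3 × Y → ℝ :=
  fun (s1, s2, w3, w, v1, v2, x1, x2, x3, y3, y) =>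
    pSrc (s1, s2, w, w3) * pV1 v1 * pX1 s1 v1 x1 * pV2 v2 * pX2 s2 v2 x2 *
      pX3 v1 v2 x3 * Q (x1, x2, x3) (y, y3)

/-!
Codewords are drawn at random in the superposition structure `p(v₁) p(x₁|s₁,v₁) p(v₂) p(x₂|s₂,v₂)
p(x₃|v₁,v₂)`, and typicality is avoided: the decoders maximize a posteriori probability, and a
wrong candidate is charged through `min a b ≤ a ^ (1 - t) * b ^ t`. For each decoder and each error
pattern this bounds the error probability by a Chernoff sum. Its derivative at `t = 0` is, by Gibbs'
inequality, at most the conditional entropy minus the mutual information of the corresponding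
condition, hence negative, so that the sum is less than `1` for some small `t`; and it is
multiplicative over independent letters, so that it decays exponentially for long blocks.

The transmission is block Markov: in each block the sources send the new message superimposed on
the previous one, which the relay has decoded and repeats. The relay decodes forward and the
destination backward. Up to the first error of either decoder everything agrees with a transmission
in which every decoder is told the correct neighbouring message, so a union bound over the
decodings of that transmission suffices.

The `B` message blocks occupy `B + 1` channel blocks, while source and channel sequences have equal
length. The surplus is absorbed by letters for which the channel is mute: with `B * r` channel uses
in each block, a message block has `B * r + r` source letters, the last `r` of them mute, and
`B * (B * r + r) = (B + 1) * (B * r)`. The mute letters increase the Chernoff sums by a factor that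
is the `r`-th power of a constant, which is beaten by the `B * r`-th power of a number below `1`.
-/

namespace MARC

/-! ### Expectations over product distributions -/

section PiSums

variable {ι α β : Type*} [Fintype ι] [DecidableEq ι] [Fintype β]

theorem sum_pi_prod (F : ι → β → ℝ) : ∑ f : ι → β, ∏ k, F k (f k) = ∏ k, ∑ b, F k b := by
  rw [Finset.prod_univ_sum, Fintype.piFinset_univ]

theorem isPmf_pi {P : ι → β → ℝ} (hP : ∀ i, IsPmf (P i)) :
    IsPmf (fun F : ι → β => ∏ k, P k (F k)) := by
  refine ⟨fun F => Finset.prod_nonneg fun k _ => (hP k).1 _, ?_⟩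
  rw [sum_pi_prod]
  exact Finset.prod_eq_one fun k _ => (hP k).2

theorem sum_pi_mul_split (P : ι → β → ℝ) (i : ι) (φ : β → ({j // j ≠ i} → β) → ℝ) :
    ∑ F : ι → β, (∏ k, P k (F k)) * φ (F i) (fun j => F j) =
      ∑ b, P i b * ∑ G : {j // j ≠ i} → β, (∏ k : {j // j ≠ i}, P k (G k)) * φ b G := by
  rw [Fintype.sum_equiv (Equiv.funSplitAt i β) _
    (fun x => (P i x.1 * ∏ k : {j // j ≠ i}, P k (x.2 k)) * φ x.1 x.2), Fintype.sum_prod_type]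
  · simp only [Finset.mul_sum, mul_assoc]
  · intro F
    rw [Fintype.prod_eq_mul_prod_subtype_ne _ i]
    rfl

theorem sum_pi_mul_apply {P : ι → β → ℝ} (hP : ∀ i, IsPmf (P i)) (i : ι) (φ : β → ℝ) :
    ∑ F : ι → β, (∏ k, P k (F k)) * φ (F i) = ∑ b, P i b * φ b := by
  rw [sum_pi_mul_split P i (fun b _ => φ b)]
  refine Finset.sum_congr rfl fun b _ => ?_
  rw [← Finset.sum_mul, (isPmf_pi (fun k : {j // j ≠ i} => hP k)).2, one_mul]

theorem sum_pi_mul_apply_apply_of_ne {P : ι → β → ℝ} (hP : ∀ i, IsPmf (P i)) {i j : ι}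
    (hij : i ≠ j) (φ : β → β → ℝ) :
    ∑ F : ι → β, (∏ k, P k (F k)) * φ (F i) (F j) = ∑ b, P i b * ∑ b', P j b' * φ b b' := by
  rw [sum_pi_mul_split P i (fun b G => φ b (G ⟨j, hij.symm⟩))]
  refine Finset.sum_congr rfl fun b _ => ?_
  rw [sum_pi_mul_apply (fun k : {j // j ≠ i} => hP k) ⟨j, hij.symm⟩ (φ b)]

open Classical in
/-- Conditional law of the second of two letters given that the first one is `b`: if they are the
same letter (`e`) it is a copy of `b`, otherwise an independent draw from `P`. -/
noncomputable def copyOrDraw (e : Prop) (P : α → ℝ) (b b' : α) : ℝ :=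
  if e then (if b' = b then 1 else 0) else P b'

theorem sum_copyOrDraw_true (P : β → ℝ) (b : β) (φ : β → ℝ) :
    ∑ b', copyOrDraw True P b b' * φ b' = φ b := by
  rw [Finset.sum_eq_single b (fun b' _ h => by simp [copyOrDraw, h]) (by simp)]
  simp [copyOrDraw]

theorem sum_copyOrDraw_false (P : β → ℝ) (b : β) (φ : β → ℝ) :
    ∑ b', copyOrDraw False P b b' * φ b' = ∑ b', P b' * φ b' := by
  simp [copyOrDraw]

theorem sum_pi_mul_apply_apply {P : ι → β → ℝ} (hP : ∀ i, IsPmf (P i)) (i j : ι)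
    (φ : β → β → ℝ) :
    ∑ F : ι → β, (∏ k, P k (F k)) * φ (F i) (F j) =
      ∑ b, P i b * ∑ b', copyOrDraw (i = j) (P j) b b' * φ b b' := by
  by_cases h : i = j
  · subst h
    simp only [sum_copyOrDraw_true]
    exact sum_pi_mul_apply hP i (fun b => φ b b)
  · simp only [h, sum_copyOrDraw_false]
    exact sum_pi_mul_apply_apply_of_ne hP h φ

theorem sum_mul_sum_mul_comm [Fintype α] (k : β → ℝ) (a : α → ℝ) (F : β → α → ℝ) :
    ∑ b, k b * ∑ c, a c * F b c = ∑ c, a c * ∑ b, k b * F b c := by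
  simp only [Finset.mul_sum]
  rw [Finset.sum_comm]
  exact Finset.sum_congr rfl fun _ _ => Finset.sum_congr rfl fun _ _ => mul_left_comm _ _ _

end PiSums

section Indicator

open Classical in
/-- Real-valued indicator of a proposition, decided classically. -/
noncomputable def ind (p : Prop) : ℝ := if p then 1 else 0

theorem ind_of {p : Prop} (h : p) : ind p = 1 := if_pos h

theorem ind_of_not {p : Prop} (h : ¬p) : ind p = 0 := if_neg h

theorem ind_nonneg (p : Prop) : 0 ≤ ind p := by
  unfold ind; split_ifs <;> norm_num

theorem ind_le_one (p : Prop) : ind p ≤ 1 := by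
  unfold ind; split_ifs <;> norm_num

end Indicator

/-! ### Random coding with maximum a posteriori decoding -/

theorem exists_mul_ind_ne_le_sum_min {I τ : Type*} [Fintype I] [Nonempty I] [Fintype τ]
    {R : τ → I → I → Prop} (hR : ∀ i j, i ≠ j → ∃ t, R t i j) {a : I → ℝ} (ha : ∀ i, 0 ≤ a i) :
    ∃ m, ∀ i, a i * ind (m ≠ i) ≤ ∑ t, min (a i) (∑ j, ind (R t i j) * a j) := by
  obtain ⟨m, hm⟩ := Finite.exists_max a
  refine ⟨m, fun i => ?_⟩
  have hterm : ∀ t j, 0 ≤ ind (R t i j) * a j := fun t j => mul_nonneg (ind_nonneg _) (ha j)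
  have hmin : ∀ t, 0 ≤ min (a i) (∑ j, ind (R t i j) * a j) := fun t =>
    le_min (ha i) (Finset.sum_nonneg fun j _ => hterm t j)
  by_cases hne : m = i
  · rw [ind_of_not (not_not.2 hne), mul_zero]
    exact Finset.sum_nonneg fun t _ => hmin t
  · obtain ⟨t, ht⟩ := hR i m (Ne.symm hne)
    have hcomp : a i ≤ ∑ j, ind (R t i j) * a j := calc
      a i ≤ ind (R t i m) * a m := by rw [ind_of ht, one_mul]; exact hm i
      _ ≤ ∑ j, ind (R t i j) * a j :=
        Finset.single_le_sum (fun j _ => hterm t j) (Finset.mem_univ m)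
    rw [ind_of hne, mul_one]
    calc a i = min (a i) (∑ j, ind (R t i j) * a j) := (min_eq_left hcomp).symm
      _ ≤ _ := Finset.single_le_sum (fun t _ => hmin t) (Finset.mem_univ t)

-- Test with the indicator of `{f ≤ N}`: on it keep `f`, off it keep `X`.
theorem sum_mul_min_le_of_condMean {Θ Z : Type*} [Fintype Θ] [Fintype Z] {π : Θ → ℝ}
    (hπ : ∀ θ, 0 ≤ π θ) {P : Z → ℝ} {z : Θ → Z}
    (hlaw : ∀ h : Z → ℝ, ∑ θ, π θ * h (z θ) = ∑ z, P z * h z) {X : Θ → ℝ} {N : Z → ℝ}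
    (hmean : ∀ h : Z → ℝ, ∑ θ, π θ * (h (z θ) * X θ) = ∑ z, P z * (h z * N z)) (f : Z → ℝ) :
    ∑ θ, π θ * min (f (z θ)) (X θ) ≤ ∑ z, P z * min (f z) (N z) := by
  calc ∑ θ, π θ * min (f (z θ)) (X θ)
      ≤ ∑ θ, π θ * (ind (f (z θ) ≤ N (z θ)) * f (z θ) + ind (¬f (z θ) ≤ N (z θ)) * X θ) := by
        gcongr with θ
        · exact hπ θ
        · by_cases h : f (z θ) ≤ N (z θ)
          · rw [ind_of h, ind_of_not (not_not.2 h), one_mul, zero_mul, add_zero]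
            exact min_le_left _ _
          · rw [ind_of_not h, ind_of h, one_mul, zero_mul, zero_add]
            exact min_le_right _ _
    _ = ∑ z, P z * (ind (f z ≤ N z) * f z + ind (¬f z ≤ N z) * N z) := by
        simp only [mul_add, Finset.sum_add_distrib]
        rw [hlaw (fun z => ind (f z ≤ N z) * f z), hmean (fun z => ind (¬f z ≤ N z))]
    _ = ∑ z, P z * min (f z) (N z) := by
        refine Finset.sum_congr rfl fun z _ => congrArg _ ?_
        by_cases h : f z ≤ N z
        · rw [ind_of h, ind_of_not (not_not.2 h), min_eq_left h]; ring
        · rw [ind_of_not h, ind_of h, min_eq_right (not_le.1 h).le]; ring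

section RandomCoding

variable {Θ I W Z Y τ : Type*} [Fintype Θ] [Fintype I] [Fintype W] [Fintype Z] [Fintype Y]
  [Fintype τ]

theorem sum_mul_min_le_of_competitors {π : Θ → ℝ} (hπ : ∀ θ, 0 ≤ π θ) {i : I} {p : I → ℝ}
    {K : Z → ℝ} {cw : Θ → I → Z} {P : Z → ℝ} (hP : ∀ z, 0 ≤ P z) {R : I → Prop} {N : I → Z → ℝ}
    (hlaw : ∀ h : Z → ℝ, ∑ θ, π θ * h (cw θ i) = ∑ z, P z * h z)
    (hmean : ∀ j, R j → ∀ h : Z → ℝ,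
      ∑ θ, π θ * (h (cw θ i) * K (cw θ j)) = ∑ z, P z * (h z * N j z))
    {M : Z → ℝ} (hM : ∀ z, ∑ j, ind (R j) * (p j * N j z) ≤ M z) :
    ∑ θ, π θ * min (p i * K (cw θ i)) (∑ j, ind (R j) * (p j * K (cw θ j))) ≤
      ∑ z, P z * min (p i * K z) (M z) := by
  have hmass : ∀ h : Z → ℝ, ∑ θ, π θ * (h (cw θ i) * ∑ j, ind (R j) * (p j * K (cw θ j))) =
      ∑ z, P z * (h z * ∑ j, ind (R j) * (p j * N j z)) := by
    intro h
    simp only [Finset.mul_sum]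
    rw [Finset.sum_comm, Finset.sum_comm (s := (Finset.univ : Finset Z))]
    refine Finset.sum_congr rfl fun j _ => ?_
    by_cases hj : R j
    · calc _ = p j * ∑ θ, π θ * (h (cw θ i) * K (cw θ j)) := by
            rw [Finset.mul_sum, ind_of hj]; exact Finset.sum_congr rfl fun θ _ => by ring
        _ = _ := by
            rw [hmean j hj, Finset.mul_sum, ind_of hj]
            exact Finset.sum_congr rfl fun z _ => by ring
    · simp [ind_of_not hj]
  refine (sum_mul_min_le_of_condMean hπ hlaw hmass fun z => p i * K z).trans ?_
  gcongr with z
  · exact hP z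
  · exact hM z

/-- `R t i j` says that `i` may be confused with `j` in the way `t`, and `N t j z` is then the mean
likelihood of the codeword of `j` when that of `i` is `z`. -/
theorem exists_decoder_sum_error_le [Nonempty I] {π : Θ → ℝ} (hπ : ∀ θ, 0 ≤ π θ)
    {p : I → W → ℝ} (hp : ∀ i w, 0 ≤ p i w) {K : Z → Y → ℝ} (hK : ∀ z y, 0 ≤ K z y)
    (cw : Θ → I → Z) {P : I → Z → ℝ} (hP : ∀ i z, 0 ≤ P i z)
    (R : τ → I → I → Prop) (hR : ∀ i j, i ≠ j → ∃ t, R t i j)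
    (N : τ → I → Z → Y → ℝ) (M : τ → I → W → Z → Y → ℝ)
    (hM : ∀ t i w z y, ∑ j, ind (R t i j) * (p j w * N t j z y) ≤ M t i w z y)
    (hlaw : ∀ i (h : Z → ℝ), ∑ θ, π θ * h (cw θ i) = ∑ z, P i z * h z)
    (hmean : ∀ t i j, R t i j → ∀ y (h : Z → ℝ),
      ∑ θ, π θ * (h (cw θ i) * K (cw θ j) y) = ∑ z, P i z * (h z * N t j z y)) :
    ∃ dec : Θ → Y → W → I,
      ∑ θ, π θ * ∑ i, ∑ w, ∑ y, p i w * K (cw θ i) y * ind (dec θ y w ≠ i) ≤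
        ∑ t, ∑ i, ∑ w, ∑ y, ∑ z, P i z * min (p i w * K z y) (M t i w z y) := by
  choose dec hdec using fun θ y w =>
    exists_mul_ind_ne_le_sum_min hR (a := fun i => p i w * K (cw θ i) y)
      fun i => mul_nonneg (hp i w) (hK _ y)
  refine ⟨dec, ?_⟩
  calc ∑ θ, π θ * ∑ i, ∑ w, ∑ y, p i w * K (cw θ i) y * ind (dec θ y w ≠ i)
      ≤ ∑ θ, π θ * ∑ i, ∑ w, ∑ y, ∑ t, min (p i w * K (cw θ i) y)
          (∑ j, ind (R t i j) * (p j w * K (cw θ j) y)) := by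
        gcongr with θ _ i _ w _ y _
        · exact hπ θ
        · exact hdec θ y w i
    _ = ∑ t, ∑ i, ∑ w, ∑ y, ∑ θ, π θ * min (p i w * K (cw θ i) y)
          (∑ j, ind (R t i j) * (p j w * K (cw θ j) y)) := by
        simp only [Finset.mul_sum (s := (Finset.univ : Finset I)),
          Finset.mul_sum (s := (Finset.univ : Finset W)),
          Finset.mul_sum (s := (Finset.univ : Finset Y)),
          Finset.mul_sum (s := (Finset.univ : Finset τ))]
        rw [Finset.sum_comm]
        simp only [Finset.sum_comm (s := (Finset.univ : Finset Θ))]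
        simp only [Finset.sum_comm (t := (Finset.univ : Finset τ))]
    _ ≤ _ := by
        gcongr with t _ i _ w _ y _
        exact sum_mul_min_le_of_competitors hπ (p := fun j => p j w) (K := fun z => K z y)
          (hP i) (hlaw i) (fun j hj => hmean t i j hj y) fun z => hM t i w z y

end RandomCoding

/-! ### The random superposition codebook -/

/-- Single-letter data of the coding scheme: the source law `pS`, its joint laws `pR`, `pD` with the
side information of the relay and of the destination, the auxiliary and input laws, and the
channels `QR`, `QD` to the relay and to the destination. -/
structure Kernels (S1 S2 W W3 V1 V2 X1 X2 X3 Y Y3 : Type*) where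
  pS : S1 × S2 → ℝ
  pR : S1 × S2 → W3 → ℝ
  pD : S1 × S2 → W → ℝ
  pV1 : V1 → ℝ
  pV2 : V2 → ℝ
  pX1 : S1 → V1 → X1 → ℝ
  pX2 : S2 → V2 → X2 → ℝ
  pX3 : V1 → V2 → X3 → ℝ
  QR : X1 × X2 × X3 → Y3 → ℝ
  QD : X1 × X2 × X3 → Y → ℝ

/-- A codebook: the auxiliary codewords, the source codewords indexed by the current and the
previous source block, and the relay codewords. -/
abbrev Codebook (S1 S2 V1 V2 X1 X2 X3 : Type*) :=
  (S1 → V1) × (S2 → V2) × (S1 × S1 → X1) × (S2 × S2 → X2) × (S1 × S2 → X3)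

/-- The letters `(v1, v2, x1, x2, x3)` sent in one channel block. -/
abbrev Inputs (V1 V2 X1 X2 X3 : Type*) := V1 × V2 × X1 × X2 × X3

/-- The codewords used with current sources `c` and previous sources `s`. -/
def codeword {S1 S2 V1 V2 X1 X2 X3 : Type*} (θ : Codebook S1 S2 V1 V2 X1 X2 X3)
    (c s : S1 × S2) : Inputs V1 V2 X1 X2 X3 :=
  (θ.1 s.1, θ.2.1 s.2, θ.2.2.1 (c.1, s.1), θ.2.2.2.1 (c.2, s.2), θ.2.2.2.2 s)

namespace Kernels

variable {S1 S2 W W3 V1 V2 X1 X2 X3 Y Y3 : Type*}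

/-- The conditional law of `(V1, V2, X1, X2, X3)` given the sources. -/
def law (D : Kernels S1 S2 W W3 V1 V2 X1 X2 X3 Y Y3) (c : S1 × S2)
    (z : Inputs V1 V2 X1 X2 X3) : ℝ :=
  D.pV1 z.1 * (D.pV2 z.2.1 * (D.pX1 c.1 z.1 z.2.2.1 * (D.pX2 c.2 z.2.1 z.2.2.2.1 *
    D.pX3 z.1 z.2.1 z.2.2.2.2)))

/-- The law of the random codebook: the auxiliary codewords are i.i.d., and given them all source
and relay codewords are independent. -/
def codebookLaw [Fintype S1] [Fintype S2] (D : Kernels S1 S2 W W3 V1 V2 X1 X2 X3 Y Y3)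
    (θ : Codebook S1 S2 V1 V2 X1 X2 X3) : ℝ :=
  (∏ s, D.pV1 (θ.1 s)) * ((∏ s, D.pV2 (θ.2.1 s)) *
    ((∏ i : S1 × S1, D.pX1 i.1 (θ.1 i.2) (θ.2.2.1 i)) *
    ((∏ i : S2 × S2, D.pX2 i.1 (θ.2.1 i.2) (θ.2.2.2.1 i)) *
      ∏ i : S1 × S2, D.pX3 (θ.1 i.1) (θ.2.1 i.2) (θ.2.2.2.2 i))))

variable [Fintype S1] [Fintype S2] [Fintype W] [Fintype W3] [Fintype V1] [Fintype V2]
  [Fintype X1] [Fintype X2] [Fintype X3] [Fintype Y] [Fintype Y3]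

/-- The single-letter data are probability laws, and `pR`, `pD` have the source marginal `pS`. -/
structure Valid (D : Kernels S1 S2 W W3 V1 V2 X1 X2 X3 Y Y3) : Prop where
  pS : IsPmf D.pS
  pR_nonneg : ∀ c w, 0 ≤ D.pR c w
  pR_sum : ∀ c, ∑ w, D.pR c w = D.pS c
  pD_nonneg : ∀ c w, 0 ≤ D.pD c w
  pD_sum : ∀ c, ∑ w, D.pD c w = D.pS c
  pV1 : IsPmf D.pV1
  pV2 : IsPmf D.pV2
  pX1 : ∀ s v, IsPmf (D.pX1 s v)
  pX2 : ∀ s v, IsPmf (D.pX2 s v)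
  pX3 : ∀ v1 v2, IsPmf (D.pX3 v1 v2)
  QR : ∀ x, IsPmf (D.QR x)
  QD : ∀ x, IsPmf (D.QD x)

namespace Valid

variable {D : Kernels S1 S2 W W3 V1 V2 X1 X2 X3 Y Y3}

theorem law_nonneg (hD : D.Valid) (c : S1 × S2) (z : Inputs V1 V2 X1 X2 X3) : 0 ≤ D.law c z :=
  mul_nonneg (hD.pV1.1 _) (mul_nonneg (hD.pV2.1 _) (mul_nonneg ((hD.pX1 _ _).1 _)
    (mul_nonneg ((hD.pX2 _ _).1 _) ((hD.pX3 _ _).1 _))))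

theorem sum_law (hD : D.Valid) (c : S1 × S2) : ∑ z, D.law c z = 1 := by
  simp only [law, Fintype.sum_prod_type, ← Finset.mul_sum, (hD.pX3 _ _).2, (hD.pX2 _ _).2,
    (hD.pX1 _ _).2, hD.pV2.2, hD.pV1.2, mul_one]

theorem codebookLaw_nonneg (hD : D.Valid) (θ : Codebook S1 S2 V1 V2 X1 X2 X3) :
    0 ≤ D.codebookLaw θ :=
  mul_nonneg (Finset.prod_nonneg fun _ _ => hD.pV1.1 _) <|
    mul_nonneg (Finset.prod_nonneg fun _ _ => hD.pV2.1 _) <|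
    mul_nonneg (Finset.prod_nonneg fun _ _ => (hD.pX1 _ _).1 _) <|
    mul_nonneg (Finset.prod_nonneg fun _ _ => (hD.pX2 _ _).1 _) <|
    Finset.prod_nonneg fun _ _ => (hD.pX3 _ _).1 _

variable [DecidableEq S1] [DecidableEq S2]

theorem sum_codebookLaw_mul_eq_iterated (hD : D.Valid) (c s c' s' : S1 × S2)
    (φ : Inputs V1 V2 X1 X2 X3 → Inputs V1 V2 X1 X2 X3 → ℝ) :
    ∑ θ, D.codebookLaw θ * φ (codeword θ c s) (codeword θ c' s') =
      ∑ v1, D.pV1 v1 * ∑ v1', copyOrDraw (s.1 = s'.1) D.pV1 v1 v1' *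
      ∑ v2, D.pV2 v2 * ∑ v2', copyOrDraw (s.2 = s'.2) D.pV2 v2 v2' *
      ∑ x1, D.pX1 c.1 v1 x1 *
        ∑ x1', copyOrDraw ((c.1, s.1) = (c'.1, s'.1)) (D.pX1 c'.1 v1') x1 x1' *
      ∑ x2, D.pX2 c.2 v2 x2 *
        ∑ x2', copyOrDraw ((c.2, s.2) = (c'.2, s'.2)) (D.pX2 c'.2 v2') x2 x2' *
      ∑ x3, D.pX3 v1 v2 x3 * ∑ x3', copyOrDraw (s = s') (D.pX3 v1' v2') x3 x3' *
        φ (v1, v2, x1, x2, x3) (v1', v2', x1', x2', x3') := by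
  simp only [codebookLaw, codeword, Fintype.sum_prod_type (α₁ := S1 → V1),
    Fintype.sum_prod_type (α₁ := S2 → V2), Fintype.sum_prod_type (α₁ := S1 × S1 → X1),
    Fintype.sum_prod_type (α₁ := S2 × S2 → X2), mul_assoc, ← Finset.mul_sum]
  rw [← sum_pi_mul_apply_apply (fun _ => hD.pV1) s.1 s'.1]
  refine Finset.sum_congr rfl fun F1 _ => congrArg _ ?_
  rw [← sum_pi_mul_apply_apply (fun _ => hD.pV2) s.2 s'.2]
  refine Finset.sum_congr rfl fun F2 _ => congrArg _ ?_
  rw [← sum_pi_mul_apply_apply (P := fun i : S1 × S1 => D.pX1 i.1 (F1 i.2)) (fun _ => hD.pX1 _ _)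
    (c.1, s.1) (c'.1, s'.1)]
  refine Finset.sum_congr rfl fun G1 _ => congrArg _ ?_
  rw [← sum_pi_mul_apply_apply (P := fun i : S2 × S2 => D.pX2 i.1 (F2 i.2)) (fun _ => hD.pX2 _ _)
    (c.2, s.2) (c'.2, s'.2)]
  refine Finset.sum_congr rfl fun G2 _ => congrArg _ ?_
  rw [← sum_pi_mul_apply_apply (P := fun i : S1 × S2 => D.pX3 (F1 i.1) (F2 i.2))
    (fun _ => hD.pX3 _ _) s s']

theorem sum_codebookLaw_mul_pair (hD : D.Valid) (c s c' s' : S1 × S2)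
    (φ : Inputs V1 V2 X1 X2 X3 → Inputs V1 V2 X1 X2 X3 → ℝ) :
    ∑ θ, D.codebookLaw θ * φ (codeword θ c s) (codeword θ c' s') =
      ∑ z, D.law c z * ∑ z' : Inputs V1 V2 X1 X2 X3,
        copyOrDraw (s.1 = s'.1) D.pV1 z.1 z'.1 * (copyOrDraw (s.2 = s'.2) D.pV2 z.2.1 z'.2.1 *
        (copyOrDraw ((c.1, s.1) = (c'.1, s'.1)) (D.pX1 c'.1 z'.1) z.2.2.1 z'.2.2.1 *
        (copyOrDraw ((c.2, s.2) = (c'.2, s'.2)) (D.pX2 c'.2 z'.2.1) z.2.2.2.1 z'.2.2.2.1 *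
        (copyOrDraw (s = s') (D.pX3 z'.1 z'.2.1) z.2.2.2.2 z'.2.2.2.2 * φ z z')))) := by
  rw [hD.sum_codebookLaw_mul_eq_iterated]
  simp only [law, Fintype.sum_prod_type, mul_assoc, ← Finset.mul_sum]
  refine Finset.sum_congr rfl fun v1 _ => congrArg _ ?_
  rw [sum_mul_sum_mul_comm]
  refine Finset.sum_congr rfl fun v2 _ => congrArg _ ?_
  conv_lhs => enter [2, v1', 2]; rw [sum_mul_sum_mul_comm]
  rw [sum_mul_sum_mul_comm]
  refine Finset.sum_congr rfl fun x1 _ => congrArg _ ?_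
  conv_lhs => enter [2, v1', 2, 2, v2', 2]; rw [sum_mul_sum_mul_comm]
  conv_lhs => enter [2, v1', 2]; rw [sum_mul_sum_mul_comm]
  rw [sum_mul_sum_mul_comm]
  refine Finset.sum_congr rfl fun x2 _ => congrArg _ ?_
  conv_lhs => enter [2, v1', 2, 2, v2', 2, 2, x1', 2]; rw [sum_mul_sum_mul_comm]
  conv_lhs => enter [2, v1', 2, 2, v2', 2]; rw [sum_mul_sum_mul_comm]
  conv_lhs => enter [2, v1', 2]; rw [sum_mul_sum_mul_comm]
  rw [sum_mul_sum_mul_comm]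

theorem sum_codebookLaw_mul (hD : D.Valid) (c s : S1 × S2) (φ : Inputs V1 V2 X1 X2 X3 → ℝ) :
    ∑ θ, D.codebookLaw θ * φ (codeword θ c s) = ∑ z, D.law c z * φ z := by
  rw [hD.sum_codebookLaw_mul_pair c s c s (fun z _ => φ z)]
  refine Finset.sum_congr rfl fun z _ => congrArg _ ?_
  simp only [Fintype.sum_prod_type, ← Finset.mul_sum, sum_copyOrDraw_true]

theorem isPmf_codebookLaw (hD : D.Valid) [Nonempty S1] [Nonempty S2] : IsPmf D.codebookLaw := by
  refine ⟨hD.codebookLaw_nonneg, ?_⟩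
  have c : S1 × S2 := Classical.arbitrary _
  simpa [hD.sum_law] using hD.sum_codebookLaw_mul c c fun _ => 1

end Valid

end Kernels

/-! ### The Chernoff functional -/

theorem min_le_rpow_mul_rpow {a b t : ℝ} (ha : 0 ≤ a) (hb : 0 ≤ b) (ht0 : 0 ≤ t) (ht1 : t ≤ 1) :
    min a b ≤ a ^ (1 - t) * b ^ t := by
  have hm : 0 ≤ min a b := le_min ha hb
  calc min a b = min a b ^ (1 - t) * min a b ^ t := by
        rw [← Real.rpow_add' hm (by simp), sub_add_cancel, Real.rpow_one]
    _ ≤ a ^ (1 - t) * b ^ t :=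
        mul_le_mul (Real.rpow_le_rpow hm (min_le_left _ _) (by linarith))
          (Real.rpow_le_rpow hm (min_le_right _ _) ht0) (Real.rpow_nonneg hm _)
          (Real.rpow_nonneg ha _)

section Chernoff

variable {Λ : Type*} [Fintype Λ]

/-- The Chernoff functional of the true score `a` and the competitor mass `M` under the weight
`q`; for `0 ≤ t ≤ 1` it dominates the mean of `min a M`. -/
noncomputable def chernoffSum (q a M : Λ → ℝ) (t : ℝ) : ℝ :=
  ∑ x, q x * (a x ^ (1 - t) * M x ^ t)

theorem sum_mul_min_le_chernoffSum {q a M : Λ → ℝ} {t : ℝ} (hq : ∀ x, 0 ≤ q x)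
    (ha : ∀ x, 0 ≤ a x) (hM : ∀ x, 0 ≤ M x) (ht0 : 0 ≤ t) (ht1 : t ≤ 1) :
    ∑ x, q x * min (a x) (M x) ≤ chernoffSum q a M t :=
  Finset.sum_le_sum fun x _ =>
    mul_le_mul_of_nonneg_left (min_le_rpow_mul_rpow (ha x) (hM x) ht0 ht1) (hq x)

theorem chernoffSum_nonneg {q a M : Λ → ℝ} (hq : ∀ x, 0 ≤ q x) (ha : ∀ x, 0 ≤ a x)
    (hM : ∀ x, 0 ≤ M x) (t : ℝ) : 0 ≤ chernoffSum q a M t :=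
  Finset.sum_nonneg fun x _ =>
    mul_nonneg (hq x) (mul_nonneg (Real.rpow_nonneg (ha x) _) (Real.rpow_nonneg (hM x) _))

theorem chernoffSum_comp_equiv {Λ' : Type*} [Fintype Λ'] (e : Λ ≃ Λ') (q a M : Λ' → ℝ) :
    chernoffSum (q ∘ e) (a ∘ e) (M ∘ e) = chernoffSum q a M :=
  funext fun _ => Fintype.sum_equiv e _ _ fun _ => rfl

end Chernoff

/-! ### Error patterns -/

/-- Which user's message a decoder gets wrong. -/
inductive ErrorPattern
  | fst | snd | both

namespace ErrorPattern

instance : Fintype ErrorPattern where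
  elems := ⟨{fst, snd, both}, by simp⟩
  complete k := by cases k <;> simp

variable {A B : Type*}

/-- The pair `j` differs from `i` exactly in the way described by the error pattern. -/
def Confuses : ErrorPattern → A × B → A × B → Prop
  | fst => fun i j => i.1 ≠ j.1 ∧ i.2 = j.2
  | snd => fun i j => i.1 = j.1 ∧ i.2 ≠ j.2
  | both => fun i j => i.1 ≠ j.1 ∧ i.2 ≠ j.2

theorem exists_confuses {i j : A × B} (h : i ≠ j) : ∃ k : ErrorPattern, k.Confuses i j := by
  by_cases h1 : i.1 = j.1
  · exact ⟨snd, h1, fun h2 => h (Prod.ext h1 h2)⟩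
  · by_cases h2 : i.2 = j.2
    · exact ⟨fst, h1, h2⟩
    · exact ⟨both, h1, h2⟩

end ErrorPattern

section SumIndicator

variable {A B : Type*} [Fintype A] [Fintype B]

theorem sum_ind_mul_le {g : A → ℝ} (hg : ∀ j, 0 ≤ g j) (R : A → Prop) :
    ∑ j, ind (R j) * g j ≤ ∑ j, g j :=
  Finset.sum_le_sum fun j _ => mul_le_of_le_one_left (hg j) (ind_le_one _)

theorem sum_ind_mul_le_fst {g : A × B → ℝ} (hg : ∀ j, 0 ≤ g j) {R : A × B → Prop} {b : B}
    (hR : ∀ j, R j → b = j.2) : ∑ j, ind (R j) * g j ≤ ∑ a, g (a, b) := by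
  rw [Fintype.sum_prod_type]
  refine Finset.sum_le_sum fun a _ => ?_
  rw [Finset.sum_eq_single b (fun b' _ hb' => ?_) (by simp)]
  · exact mul_le_of_le_one_left (hg _) (ind_le_one _)
  · rw [ind_of_not fun h => hb' (hR _ h).symm, zero_mul]

theorem sum_ind_mul_le_snd {g : A × B → ℝ} (hg : ∀ j, 0 ≤ g j) {R : A × B → Prop} {a : A}
    (hR : ∀ j, R j → a = j.1) : ∑ j, ind (R j) * g j ≤ ∑ b, g (a, b) := by
  rw [← Equiv.sum_comp (Equiv.prodComm B A)]
  exact sum_ind_mul_le_fst (g := fun j : B × A => g j.swap) (R := fun j => R j.swap)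
    (fun _ => hg _) fun _ h => hR _ h

end SumIndicator

/-! ### Scores and competitor masses of the two decoders -/

/-- The letters entering the decision of the relay: sources, side information, channel output,
channel inputs. -/
abbrev RelayLetter (S1 S2 W3 V1 V2 X1 X2 X3 Y3 : Type*) :=
  (S1 × S2) × W3 × Y3 × Inputs V1 V2 X1 X2 X3

/-- The letters entering the decision of the destination: current sources, previous sources, side
information on the latter, channel output, channel inputs. -/
abbrev DestLetter (S1 S2 W V1 V2 X1 X2 X3 Y : Type*) :=
  (S1 × S2) × (S1 × S2) × W × Y × Inputs V1 V2 X1 X2 X3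

namespace Kernels

variable {S1 S2 W W3 V1 V2 X1 X2 X3 Y Y3 : Type*}

section Scores

variable (D : Kernels S1 S2 W W3 V1 V2 X1 X2 X3 Y Y3)

/-- The probability, given the sources, of the channel inputs of a relay letter. -/
def relayWeight (x : RelayLetter S1 S2 W3 V1 V2 X1 X2 X3 Y3) : ℝ := D.law x.1 x.2.2.2

/-- The posterior weight that the relay maximizes. -/
def relayScore (x : RelayLetter S1 S2 W3 V1 V2 X1 X2 X3 Y3) : ℝ :=
  D.pR x.1 x.2.1 * D.QR x.2.2.2.2.2 x.2.2.1

/-- The probability of the current sources and the channel inputs of a destination letter. -/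
def destWeight (x : DestLetter S1 S2 W V1 V2 X1 X2 X3 Y) : ℝ := D.pS x.1 * D.law x.1 x.2.2.2.2

/-- The posterior weight that the destination maximizes. -/
def destScore (x : DestLetter S1 S2 W V1 V2 X1 X2 X3 Y) : ℝ :=
  D.pD x.2.1 x.2.2.1 * D.QD x.2.2.2.2.2.2 x.2.2.2.1

variable [Fintype S1] [Fintype S2] [Fintype V1] [Fintype V2]
  [Fintype X1] [Fintype X2] [Fintype X3]

/-- The mean likelihood, at the relay, of the codeword of a competing source pair `j` given the
inputs `z` of the true one. The relay codeword and the `v`s depend only on the previous sources,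
which the relay knows, so only `x1` and `x2` are redrawn. -/
def relayLikelihood (k : ErrorPattern) (j : S1 × S2) (z : Inputs V1 V2 X1 X2 X3) (y : Y3) : ℝ :=
  match k with
  | .fst => ∑ x1, D.pX1 j.1 z.1 x1 * D.QR (x1, z.2.2.2) y
  | .snd => ∑ x2, D.pX2 j.2 z.2.1 x2 * D.QR (z.2.2.1, x2, z.2.2.2.2) y
  | .both => ∑ x1, D.pX1 j.1 z.1 x1 * ∑ x2, D.pX2 j.2 z.2.1 x2 * D.QR (x1, x2, z.2.2.2.2) y

/-- The mean total score of the competitors at the relay. -/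
def relayMass (k : ErrorPattern) (x : RelayLetter S1 S2 W3 V1 V2 X1 X2 X3 Y3) : ℝ :=
  match k with
  | .fst => ∑ s1, D.pR (s1, x.1.2) x.2.1 * D.relayLikelihood .fst (s1, x.1.2) x.2.2.2 x.2.2.1
  | .snd => ∑ s2, D.pR (x.1.1, s2) x.2.1 * D.relayLikelihood .snd (x.1.1, s2) x.2.2.2 x.2.2.1
  | .both => ∑ s, D.pR s x.2.1 * D.relayLikelihood .both s x.2.2.2 x.2.2.1

/-- The mean likelihood, at the destination, of a competing previous source pair given the inputs
`z` of the true one. The destination knows the current sources `c`; every codeword that depends on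
a wrong previous source is redrawn, including that of the relay. -/
def destLikelihood (k : ErrorPattern) (c : S1 × S2) (z : Inputs V1 V2 X1 X2 X3) (y : Y) : ℝ :=
  match k with
  | .fst => ∑ v1, D.pV1 v1 * ∑ x1, D.pX1 c.1 v1 x1 *
      ∑ x3, D.pX3 v1 z.2.1 x3 * D.QD (x1, z.2.2.2.1, x3) y
  | .snd => ∑ v2, D.pV2 v2 * ∑ x2, D.pX2 c.2 v2 x2 *
      ∑ x3, D.pX3 z.1 v2 x3 * D.QD (z.2.2.1, x2, x3) y
  | .both => ∑ z', D.law c z' * D.QD z'.2.2 y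

/-- The total prior weight of the competitors at the destination. -/
def destPrior (k : ErrorPattern) (s : S1 × S2) (w : W) : ℝ :=
  match k with
  | .fst => ∑ s1, D.pD (s1, s.2) w
  | .snd => ∑ s2, D.pD (s.1, s2) w
  | .both => ∑ s', D.pD s' w

/-- The mean total score of the competitors at the destination. -/
def destMass (k : ErrorPattern) (x : DestLetter S1 S2 W V1 V2 X1 X2 X3 Y) : ℝ :=
  D.destPrior k x.2.1 x.2.2.1 * D.destLikelihood k x.1 x.2.2.2.2 x.2.2.2.1

/-- The Chernoff bound on the probability that the relay errs with pattern `k`. -/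
noncomputable def relayChernoff [Fintype W3] [Fintype Y3] (k : ErrorPattern) : ℝ → ℝ :=
  chernoffSum D.relayWeight D.relayScore (D.relayMass k)

/-- The Chernoff bound on the probability that the destination errs with pattern `k`. -/
noncomputable def destChernoff [Fintype W] [Fintype Y] (k : ErrorPattern) : ℝ → ℝ :=
  chernoffSum D.destWeight D.destScore (D.destMass k)

end Scores

variable {D : Kernels S1 S2 W W3 V1 V2 X1 X2 X3 Y Y3}
  [Fintype S1] [Fintype S2] [Fintype W] [Fintype W3] [Fintype V1] [Fintype V2]
  [Fintype X1] [Fintype X2] [Fintype X3] [Fintype Y] [Fintype Y3]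

namespace Valid

theorem relayWeight_nonneg (hD : D.Valid) (x : RelayLetter S1 S2 W3 V1 V2 X1 X2 X3 Y3) :
    0 ≤ D.relayWeight x := hD.law_nonneg _ _

theorem relayScore_nonneg (hD : D.Valid) (x : RelayLetter S1 S2 W3 V1 V2 X1 X2 X3 Y3) :
    0 ≤ D.relayScore x := mul_nonneg (hD.pR_nonneg _ _) ((hD.QR _).1 _)

theorem destWeight_nonneg (hD : D.Valid) (x : DestLetter S1 S2 W V1 V2 X1 X2 X3 Y) :
    0 ≤ D.destWeight x := mul_nonneg (hD.pS.1 _) (hD.law_nonneg _ _)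

theorem destScore_nonneg (hD : D.Valid) (x : DestLetter S1 S2 W V1 V2 X1 X2 X3 Y) :
    0 ≤ D.destScore x := mul_nonneg (hD.pD_nonneg _ _) ((hD.QD _).1 _)

theorem relayLikelihood_nonneg (hD : D.Valid) (k : ErrorPattern) (j : S1 × S2)
    (z : Inputs V1 V2 X1 X2 X3) (y : Y3) : 0 ≤ D.relayLikelihood k j z y := by
  have hX1 : ∀ s v x, 0 ≤ D.pX1 s v x := fun s v => (hD.pX1 s v).1
  have hX2 : ∀ s v x, 0 ≤ D.pX2 s v x := fun s v => (hD.pX2 s v).1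
  have hQR : ∀ x y, 0 ≤ D.QR x y := fun x => (hD.QR x).1
  cases k with
  | fst => exact Finset.sum_nonneg fun _ _ => mul_nonneg (hX1 _ _ _) (hQR _ _)
  | snd => exact Finset.sum_nonneg fun _ _ => mul_nonneg (hX2 _ _ _) (hQR _ _)
  | both =>
    exact Finset.sum_nonneg fun _ _ => mul_nonneg (hX1 _ _ _) <|
      Finset.sum_nonneg fun _ _ => mul_nonneg (hX2 _ _ _) (hQR _ _)

theorem relayMass_nonneg (hD : D.Valid) (k : ErrorPattern)
    (x : RelayLetter S1 S2 W3 V1 V2 X1 X2 X3 Y3) :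
    0 ≤ D.relayMass k x := by
  cases k <;> exact Finset.sum_nonneg fun _ _ =>
    mul_nonneg (hD.pR_nonneg _ _) (hD.relayLikelihood_nonneg _ _ _ _)

theorem destLikelihood_nonneg (hD : D.Valid) (k : ErrorPattern) (c : S1 × S2)
    (z : Inputs V1 V2 X1 X2 X3)
    (y : Y) : 0 ≤ D.destLikelihood k c z y := by
  have hX3QD : ∀ v1 v2 x1 x2, 0 ≤ ∑ x3, D.pX3 v1 v2 x3 * D.QD (x1, x2, x3) y := fun _ _ _ _ =>
    Finset.sum_nonneg fun _ _ => mul_nonneg ((hD.pX3 _ _).1 _) ((hD.QD _).1 _)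
  cases k with
  | fst =>
    exact Finset.sum_nonneg fun _ _ => mul_nonneg (hD.pV1.1 _) <|
      Finset.sum_nonneg fun _ _ => mul_nonneg ((hD.pX1 _ _).1 _) (hX3QD _ _ _ _)
  | snd =>
    exact Finset.sum_nonneg fun _ _ => mul_nonneg (hD.pV2.1 _) <|
      Finset.sum_nonneg fun _ _ => mul_nonneg ((hD.pX2 _ _).1 _) (hX3QD _ _ _ _)
  | both => exact Finset.sum_nonneg fun _ _ => mul_nonneg (hD.law_nonneg _ _) ((hD.QD _).1 _)

theorem destPrior_nonneg (hD : D.Valid) (k : ErrorPattern) (s : S1 × S2) (w : W) :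
    0 ≤ D.destPrior k s w := by
  cases k <;> exact Finset.sum_nonneg fun _ _ => hD.pD_nonneg _ _

theorem destMass_nonneg (hD : D.Valid) (k : ErrorPattern)
    (x : DestLetter S1 S2 W V1 V2 X1 X2 X3 Y) :
    0 ≤ D.destMass k x :=
  mul_nonneg (hD.destPrior_nonneg _ _ _) (hD.destLikelihood_nonneg _ _ _ _)

theorem relayChernoff_nonneg (hD : D.Valid) (k : ErrorPattern) (t : ℝ) : 0 ≤ D.relayChernoff k t :=
  chernoffSum_nonneg hD.relayWeight_nonneg hD.relayScore_nonneg (hD.relayMass_nonneg k) t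

theorem destChernoff_nonneg (hD : D.Valid) (k : ErrorPattern) (t : ℝ) : 0 ≤ D.destChernoff k t :=
  chernoffSum_nonneg hD.destWeight_nonneg hD.destScore_nonneg (hD.destMass_nonneg k) t

end Valid

/-! ### Existence of good codes -/

namespace Valid


theorem sum_confuses_relay_le (hD : D.Valid) (k : ErrorPattern) (i : S1 × S2) (w : W3)
    (z : Inputs V1 V2 X1 X2 X3) (y : Y3) :
    ∑ j, ind (k.Confuses i j) * (D.pR j w * D.relayLikelihood k j z y) ≤
      D.relayMass k (i, w, y, z) := by
  have hnn : ∀ j, 0 ≤ D.pR j w * D.relayLikelihood k j z y := fun j =>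
    mul_nonneg (hD.pR_nonneg _ _) (hD.relayLikelihood_nonneg _ _ _ _)
  cases k with
  | fst => exact sum_ind_mul_le_fst hnn fun _ h => h.2
  | snd => exact sum_ind_mul_le_snd hnn fun _ h => h.1
  | both => exact sum_ind_mul_le hnn _

theorem sum_confuses_dest_le (hD : D.Valid) (k : ErrorPattern) (c s : S1 × S2) (w : W)
    (z : Inputs V1 V2 X1 X2 X3) (y : Y) :
    ∑ j, ind (k.Confuses s j) * (D.pD j w * D.destLikelihood k c z y) ≤
      D.destMass k (c, s, w, y, z) := by
  have hnn : ∀ j, 0 ≤ D.pD j w * D.destLikelihood k c z y := fun j =>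
    mul_nonneg (hD.pD_nonneg _ _) (hD.destLikelihood_nonneg _ _ _ _)
  rw [destMass]
  cases k <;> rw [destPrior, Finset.sum_mul]
  · exact sum_ind_mul_le_fst hnn fun _ h => h.2
  · exact sum_ind_mul_le_snd hnn fun _ h => h.1
  · exact sum_ind_mul_le hnn _

variable [DecidableEq S1] [DecidableEq S2]

theorem sum_codebookLaw_mul_QR (hD : D.Valid) {k : ErrorPattern} {i j : S1 × S2}
    (hij : k.Confuses i j)
    (a : S1 × S2) (y : Y3) (h : Inputs V1 V2 X1 X2 X3 → ℝ) :
    ∑ θ, D.codebookLaw θ * (h (codeword θ i a) * D.QR (codeword θ j a).2.2 y) =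
      ∑ z, D.law i z * (h z * D.relayLikelihood k j z y) := by
  rw [hD.sum_codebookLaw_mul_pair i a j a (fun z z' => h z * D.QR z'.2.2 y)]
  refine Finset.sum_congr rfl fun z _ => congrArg _ ?_
  rcases k with _ | _ | _ <;> obtain ⟨h1, h2⟩ := hij <;>
    simp only [Fintype.sum_prod_type, ← Finset.mul_sum, Prod.mk.injEq, h1, h2, and_true,
      sum_copyOrDraw_true, sum_copyOrDraw_false, relayLikelihood] <;>
    simp only [mul_left_comm _ (h z), ← Finset.mul_sum]

theorem sum_codebookLaw_mul_QD (hD : D.Valid) {k : ErrorPattern} {i j : S1 × S2}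
    (hij : k.Confuses i j)
    (c : S1 × S2) (y : Y) (h : Inputs V1 V2 X1 X2 X3 → ℝ) :
    ∑ θ, D.codebookLaw θ * (h (codeword θ c i) * D.QD (codeword θ c j).2.2 y) =
      ∑ z, D.law c z * (h z * D.destLikelihood k c z y) := by
  rw [hD.sum_codebookLaw_mul_pair c i c j (fun z z' => h z * D.QD z'.2.2 y)]
  refine Finset.sum_congr rfl fun z _ => congrArg _ ?_
  have hne : i ≠ j := by
    rintro rfl
    cases k <;> simp [ErrorPattern.Confuses] at hij
  rcases k with _ | _ | _ <;> obtain ⟨h1, h2⟩ := hij <;>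
    simp only [Fintype.sum_prod_type, ← Finset.mul_sum, Prod.mk.injEq, h1, h2, hne, and_false,
      sum_copyOrDraw_true, sum_copyOrDraw_false, destLikelihood, law, mul_assoc] <;>
    simp only [mul_left_comm _ (h z), ← Finset.mul_sum]

theorem exists_relay_decoder (hD : D.Valid) [Nonempty S1] [Nonempty S2] (a : S1 × S2)
    {t : ErrorPattern → ℝ} (ht0 : ∀ k, 0 ≤ t k) (ht1 : ∀ k, t k ≤ 1) :
    ∃ dec : Codebook S1 S2 V1 V2 X1 X2 X3 → Y3 → W3 → S1 × S2,
      ∑ θ, D.codebookLaw θ * ∑ c, ∑ w, ∑ y, D.pR c w * D.QR (codeword θ c a).2.2 y *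
          ind (dec θ y w ≠ c) ≤ ∑ k, D.relayChernoff k (t k) := by
  obtain ⟨dec, hdec⟩ := exists_decoder_sum_error_le hD.codebookLaw_nonneg hD.pR_nonneg
    (K := fun z : Inputs V1 V2 X1 X2 X3 => D.QR z.2.2) (fun z y => (hD.QR _).1 y)
    (fun θ i => codeword θ i a) hD.law_nonneg ErrorPattern.Confuses
    (fun _ _ => ErrorPattern.exists_confuses) D.relayLikelihood
    (fun k i w z y => D.relayMass k (i, w, y, z)) hD.sum_confuses_relay_le
    (fun i h => hD.sum_codebookLaw_mul i a h) (fun _ _ _ hij => hD.sum_codebookLaw_mul_QR hij a)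
  refine ⟨dec, hdec.trans (Finset.sum_le_sum fun k _ => ?_)⟩
  refine le_of_eq_of_le ?_ (sum_mul_min_le_chernoffSum hD.relayWeight_nonneg
    hD.relayScore_nonneg (hD.relayMass_nonneg k) (ht0 k) (ht1 k))
  simp only [Fintype.sum_prod_type (α₁ := S1 × S2), Fintype.sum_prod_type (α₁ := W3),
    Fintype.sum_prod_type (α₁ := Y3), relayWeight, relayScore]

theorem exists_dest_decoder (hD : D.Valid) [Nonempty S1] [Nonempty S2]
    {t : ErrorPattern → ℝ} (ht0 : ∀ k, 0 ≤ t k) (ht1 : ∀ k, t k ≤ 1) :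
    ∃ dec : S1 × S2 → Codebook S1 S2 V1 V2 X1 X2 X3 → Y → W → S1 × S2,
      ∑ c, D.pS c * ∑ θ, D.codebookLaw θ * ∑ s, ∑ w, ∑ y,
        D.pD s w * D.QD (codeword θ c s).2.2 y * ind (dec c θ y w ≠ s) ≤
      ∑ k, D.destChernoff k (t k) := by
  choose dec hdec using fun c => exists_decoder_sum_error_le hD.codebookLaw_nonneg hD.pD_nonneg
    (K := fun z : Inputs V1 V2 X1 X2 X3 => D.QD z.2.2) (fun z y => (hD.QD _).1 y)
    (fun θ i => codeword θ c i) (fun _ => hD.law_nonneg c) ErrorPattern.Confuses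
    (fun _ _ => ErrorPattern.exists_confuses) (fun k _ => D.destLikelihood k c)
    (fun k s w z y => D.destMass k (c, s, w, y, z)) (fun k => hD.sum_confuses_dest_le k c)
    (fun i h => hD.sum_codebookLaw_mul c i h) (fun _ _ _ hij => hD.sum_codebookLaw_mul_QD hij c)
  refine ⟨dec, (Finset.sum_le_sum fun c _ =>
    mul_le_mul_of_nonneg_left (hdec c) (hD.pS.1 c)).trans ?_⟩
  simp only [Finset.mul_sum (s := (Finset.univ : Finset ErrorPattern))]
  rw [Finset.sum_comm]
  refine Finset.sum_le_sum fun k _ => ?_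
  refine le_of_eq_of_le ?_ (sum_mul_min_le_chernoffSum hD.destWeight_nonneg
    hD.destScore_nonneg (hD.destMass_nonneg k) (ht0 k) (ht1 k))
  simp only [Fintype.sum_prod_type (α₁ := S1 × S2), Fintype.sum_prod_type (α₁ := W),
    Fintype.sum_prod_type (α₁ := Y), Finset.mul_sum, destWeight, destScore, mul_assoc]

end Valid

end Kernels

/-! ### Block codes -/

theorem exists_le_of_sum_mul_le {α : Type*} [Fintype α] {p f : α → ℝ} {e : ℝ} (hp : IsPmf p)
    (h : ∑ x, p x * f x ≤ e) : ∃ x, f x ≤ e := by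
  by_contra! hcon
  obtain ⟨x, -, hx⟩ : ∃ x ∈ Finset.univ, 0 < p x := by
    apply Finset.exists_lt_of_sum_lt
    simp [hp.2]
  have hlt : ∑ x, p x * e < ∑ x, p x * f x := Finset.sum_lt_sum
    (fun x _ => mul_le_mul_of_nonneg_left (hcon x).le (hp.1 x))
    ⟨x, Finset.mem_univ _, mul_lt_mul_of_pos_left (hcon x) hx⟩
  rw [← Finset.sum_mul, hp.2, one_mul] at hlt
  exact hlt.not_ge h

/-- The encoders and decoders used in each block of the block-Markov scheme. The sources encode the
current and the previous source block, the relay the previous one. The relay decodes the current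
block from the previous one, the destination the previous block from the current one. -/
structure BlockCode (S1 S2 W W3 X1 X2 X3 Y Y3 : Type*) where
  enc1 : S1 → S1 → X1
  enc2 : S2 → S2 → X2
  encRelay : S1 × S2 → X3
  decRelay : S1 × S2 → Y3 → W3 → S1 × S2
  decDest : S1 × S2 → Y → W → S1 × S2

/-- The channel inputs for current sources `c` and previous sources `s`. -/
def BlockCode.send {S1 S2 W W3 X1 X2 X3 Y Y3 : Type*} (C : BlockCode S1 S2 W W3 X1 X2 X3 Y Y3)
    (c s : S1 × S2) : X1 × X2 × X3 :=
  (C.enc1 c.1 s.1, C.enc2 c.2 s.2, C.encRelay s)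

namespace Kernels

variable {S1 S2 W W3 V1 V2 X1 X2 X3 Y Y3 : Type*} [Fintype S1] [Fintype S2] [Fintype W]
  [Fintype W3] [Fintype Y] [Fintype Y3]

/-- The probability that the relay, knowing the previous sources `a`, errs on the current ones. -/
noncomputable def relayError (D : Kernels S1 S2 W W3 V1 V2 X1 X2 X3 Y Y3)
    (C : BlockCode S1 S2 W W3 X1 X2 X3 Y Y3) (a : S1 × S2) : ℝ :=
  ∑ c, ∑ w, ∑ y, D.pR c w * D.QR (C.send c a) y * ind (C.decRelay a y w ≠ c)

/-- The probability that the destination, knowing the current sources `c`, errs on the previous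
ones. -/
noncomputable def destError (D : Kernels S1 S2 W W3 V1 V2 X1 X2 X3 Y Y3)
    (C : BlockCode S1 S2 W W3 X1 X2 X3 Y Y3) (c : S1 × S2) : ℝ :=
  ∑ s, ∑ w, ∑ y, D.pD s w * D.QD (C.send c s) y * ind (C.decDest c y w ≠ s)

variable [Fintype V1] [Fintype V2] [Fintype X1] [Fintype X2] [Fintype X3]
  {D : Kernels S1 S2 W W3 V1 V2 X1 X2 X3 Y Y3}

namespace Valid

theorem relayError_nonneg (hD : D.Valid) (C : BlockCode S1 S2 W W3 X1 X2 X3 Y Y3)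
    (a : S1 × S2) : 0 ≤ D.relayError C a :=
  Finset.sum_nonneg fun _ _ => Finset.sum_nonneg fun _ _ => Finset.sum_nonneg fun _ _ =>
    mul_nonneg (mul_nonneg (hD.pR_nonneg _ _) ((hD.QR _).1 _)) (ind_nonneg _)

theorem destError_nonneg (hD : D.Valid) (C : BlockCode S1 S2 W W3 X1 X2 X3 Y Y3)
    (c : S1 × S2) : 0 ≤ D.destError C c :=
  Finset.sum_nonneg fun _ _ => Finset.sum_nonneg fun _ _ => Finset.sum_nonneg fun _ _ =>
    mul_nonneg (mul_nonneg (hD.pD_nonneg _ _) ((hD.QD _).1 _)) (ind_nonneg _)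

theorem exists_code [Nonempty S1] [Nonempty S2] (hD : D.Valid)
    {tR tD : ErrorPattern → ℝ} (hR0 : ∀ k, 0 ≤ tR k) (hR1 : ∀ k, tR k ≤ 1)
    (hD0 : ∀ k, 0 ≤ tD k) (hD1 : ∀ k, tD k ≤ 1) :
    ∃ C : BlockCode S1 S2 W W3 X1 X2 X3 Y Y3,
      ∑ a, D.pS a * D.relayError C a + ∑ c, D.pS c * D.destError C c ≤
        ∑ k, D.relayChernoff k (tR k) + ∑ k, D.destChernoff k (tD k) := by
  classical
  choose decR hdecR using fun a => hD.exists_relay_decoder a hR0 hR1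
  obtain ⟨decD, hdecD⟩ := hD.exists_dest_decoder hD0 hD1
  let C θ : BlockCode S1 S2 W W3 X1 X2 X3 Y Y3 :=
    { enc1 := fun c s => θ.2.2.1 (c, s)
      enc2 := fun c s => θ.2.2.2.1 (c, s)
      encRelay := θ.2.2.2.2
      decRelay := fun a => decR a θ
      decDest := fun c => decD c θ }
  have hrelay : ∑ θ, D.codebookLaw θ * ∑ a, D.pS a * D.relayError (C θ) a ≤
      ∑ k, D.relayChernoff k (tR k) := by
    rw [sum_mul_sum_mul_comm]
    calc _ ≤ ∑ a, D.pS a * ∑ k, D.relayChernoff k (tR k) :=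
          Finset.sum_le_sum fun a _ => mul_le_mul_of_nonneg_left (hdecR a) (hD.pS.1 a)
      _ = _ := by rw [← Finset.sum_mul, hD.pS.2, one_mul]
  have hdest : ∑ θ, D.codebookLaw θ * ∑ c, D.pS c * D.destError (C θ) c ≤
      ∑ k, D.destChernoff k (tD k) := by
    rw [sum_mul_sum_mul_comm]
    exact hdecD
  obtain ⟨θ, hθ⟩ := exists_le_of_sum_mul_le (p := D.codebookLaw)
    (f := fun θ => ∑ a, D.pS a * D.relayError (C θ) a + ∑ c, D.pS c * D.destError (C θ) c)
    hD.isPmf_codebookLaw (by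
      simp only [mul_add, Finset.sum_add_distrib]
      exact add_le_add hrelay hdest)
  exact ⟨C θ, hθ⟩

end Valid

end Kernels

/-! ### Products of single-letter data -/

section Pi

variable {T Λ Λ' : Type*} [Fintype T] [Fintype Λ] [Fintype Λ']

theorem sum_eq_prod_sum (e : (T → Λ) ≃ Λ') {φ : Λ' → ℝ} {ψ : T → Λ → ℝ}
    (h : ∀ F, φ (e F) = ∏ k, ψ k (F k)) : ∑ x, φ x = ∏ k, ∑ a, ψ k a := by
  classical
  rw [← sum_pi_prod ψ, ← Equiv.sum_comp e]
  exact Finset.sum_congr rfl fun F _ => h F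

theorem sum_prod_mul_prod [DecidableEq T] (A B : T → Λ → ℝ) :
    ∑ f : T → Λ, (∏ k, A k (f k)) * ∏ k, B k (f k) = ∏ k, ∑ a, A k a * B k a :=
  sum_eq_prod_sum (Equiv.refl _) fun _ => Finset.prod_mul_distrib.symm

theorem chernoffSum_eq_prod (e : (T → Λ) ≃ Λ') {q a M : Λ' → ℝ} {q' a' M' : T → Λ → ℝ}
    (hq : ∀ F, q (e F) = ∏ k, q' k (F k)) (ha : ∀ F, a (e F) = ∏ k, a' k (F k))
    (hM : ∀ F, M (e F) = ∏ k, M' k (F k)) (ha0 : ∀ k x, 0 ≤ a' k x) (hM0 : ∀ k x, 0 ≤ M' k x)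
    (t : ℝ) : chernoffSum q a M t = ∏ k, chernoffSum (q' k) (a' k) (M' k) t :=
  sum_eq_prod_sum e fun F => by
    rw [hq, ha, hM, ← Real.finsetProd_rpow _ _ fun k _ => ha0 k _,
      ← Real.finsetProd_rpow _ _ fun k _ => hM0 k _, ← Finset.prod_mul_distrib,
      ← Finset.prod_mul_distrib]

end Pi

namespace Kernels

variable {S1 S2 W W3 V1 V2 X1 X2 X3 Y Y3 T : Type*}

/-- The data for blocks of letters indexed by `T`, with independent letters. -/
def pi [Fintype T] (D : T → Kernels S1 S2 W W3 V1 V2 X1 X2 X3 Y Y3) :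
    Kernels (T → S1) (T → S2) (T → W) (T → W3) (T → V1) (T → V2) (T → X1) (T → X2) (T → X3)
      (T → Y) (T → Y3) where
  pS := fun c => ∏ k, (D k).pS (c.1 k, c.2 k)
  pR := fun c w => ∏ k, (D k).pR (c.1 k, c.2 k) (w k)
  pD := fun c w => ∏ k, (D k).pD (c.1 k, c.2 k) (w k)
  pV1 := fun v => ∏ k, (D k).pV1 (v k)
  pV2 := fun v => ∏ k, (D k).pV2 (v k)
  pX1 := fun s v x => ∏ k, (D k).pX1 (s k) (v k) (x k)
  pX2 := fun s v x => ∏ k, (D k).pX2 (s k) (v k) (x k)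
  pX3 := fun v1 v2 x => ∏ k, (D k).pX3 (v1 k) (v2 k) (x k)
  QR := fun x y => ∏ k, (D k).QR (x.1 k, x.2.1 k, x.2.2 k) (y k)
  QD := fun x y => ∏ k, (D k).QD (x.1 k, x.2.1 k, x.2.2 k) (y k)

/-- A block of channel inputs, read as the tuple of its component blocks. -/
def inputsPiEquiv (T V1 V2 X1 X2 X3 : Type*) : (T → Inputs V1 V2 X1 X2 X3) ≃
    Inputs (T → V1) (T → V2) (T → X1) (T → X2) (T → X3) where
  toFun F := (fun k => (F k).1, fun k => (F k).2.1, fun k => (F k).2.2.1,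
    fun k => (F k).2.2.2.1, fun k => (F k).2.2.2.2)
  invFun z k := (z.1 k, z.2.1 k, z.2.2.1 k, z.2.2.2.1 k, z.2.2.2.2 k)

/-- A block of relay letters, read as the tuple of its component blocks. -/
def relayLetterPiEquiv (T S1 S2 W3 V1 V2 X1 X2 X3 Y3 : Type*) :
    (T → RelayLetter S1 S2 W3 V1 V2 X1 X2 X3 Y3) ≃ RelayLetter (T → S1) (T → S2) (T → W3)
      (T → V1) (T → V2) (T → X1) (T → X2) (T → X3) (T → Y3) where
  toFun F := (Equiv.arrowProdEquivProdArrow T _ _ fun k => (F k).1, fun k => (F k).2.1,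
    fun k => (F k).2.2.1, inputsPiEquiv T V1 V2 X1 X2 X3 fun k => (F k).2.2.2)
  invFun x k := ((x.1.1 k, x.1.2 k), x.2.1 k, x.2.2.1 k,
    (inputsPiEquiv T V1 V2 X1 X2 X3).symm x.2.2.2 k)

/-- A block of destination letters, read as the tuple of its component blocks. -/
def destLetterPiEquiv (T S1 S2 W V1 V2 X1 X2 X3 Y : Type*) :
    (T → DestLetter S1 S2 W V1 V2 X1 X2 X3 Y) ≃ DestLetter (T → S1) (T → S2) (T → W)
      (T → V1) (T → V2) (T → X1) (T → X2) (T → X3) (T → Y) where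
  toFun F := (Equiv.arrowProdEquivProdArrow T _ _ fun k => (F k).1,
    Equiv.arrowProdEquivProdArrow T _ _ fun k => (F k).2.1, fun k => (F k).2.2.1,
    fun k => (F k).2.2.2.1, inputsPiEquiv T V1 V2 X1 X2 X3 fun k => (F k).2.2.2.2)
  invFun x k := ((x.1.1 k, x.1.2 k), (x.2.1.1 k, x.2.1.2 k), x.2.2.1 k, x.2.2.2.1 k,
    (inputsPiEquiv T V1 V2 X1 X2 X3).symm x.2.2.2.2 k)

variable [Fintype T]

theorem law_pi (D : T → Kernels S1 S2 W W3 V1 V2 X1 X2 X3 Y Y3) (c : (T → S1) × (T → S2))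
    (z : Inputs (T → V1) (T → V2) (T → X1) (T → X2) (T → X3)) :
    (pi D).law c z = ∏ k, (D k).law (c.1 k, c.2 k)
      (z.1 k, z.2.1 k, z.2.2.1 k, z.2.2.2.1 k, z.2.2.2.2 k) := by
  simp only [law, pi, Finset.prod_mul_distrib]

variable [DecidableEq T] {D : T → Kernels S1 S2 W W3 V1 V2 X1 X2 X3 Y Y3}

theorem destPrior_pi [Fintype S1] [Fintype S2] (k : ErrorPattern) (s : (T → S1) × (T → S2))
    (w : T → W) :
    (pi D).destPrior k s w = ∏ i, (D i).destPrior k (s.1 i, s.2 i) (w i) := by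
  cases k with
  | fst | snd => simp only [destPrior, ← sum_pi_prod]; rfl
  | both => exact sum_eq_prod_sum (Equiv.arrowProdEquivProdArrow T _ _) fun _ => rfl

variable [Fintype X1] [Fintype X2]

theorem relayLikelihood_pi (k : ErrorPattern) (j : (T → S1) × (T → S2))
    (z : T → Inputs V1 V2 X1 X2 X3) (y : T → Y3) :
    (pi D).relayLikelihood k j (inputsPiEquiv T V1 V2 X1 X2 X3 z) y =
      ∏ i, (D i).relayLikelihood k (j.1 i, j.2 i) (z i) (y i) := by
  cases k <;> simp only [relayLikelihood, ← sum_prod_mul_prod] <;> rfl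

theorem relayMass_pi [Fintype S1] [Fintype S2] (k : ErrorPattern) (s : (T → S1) × (T → S2))
    (w : T → W3) (y : T → Y3) (z : T → Inputs V1 V2 X1 X2 X3) :
    (pi D).relayMass k (s, w, y, inputsPiEquiv T V1 V2 X1 X2 X3 z) =
      ∏ i, (D i).relayMass k ((s.1 i, s.2 i), w i, y i, z i) := by
  cases k with
  | fst | snd => simp only [relayMass, relayLikelihood_pi, ← sum_prod_mul_prod]; rfl
  | both =>
    simp only [relayMass, relayLikelihood_pi]
    exact sum_eq_prod_sum (Equiv.arrowProdEquivProdArrow T _ _) fun _ =>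
      Finset.prod_mul_distrib.symm

variable [Fintype V1] [Fintype V2] [Fintype X3]

theorem destLikelihood_pi (k : ErrorPattern) (c : (T → S1) × (T → S2))
    (z : T → Inputs V1 V2 X1 X2 X3) (y : T → Y) :
    (pi D).destLikelihood k c (inputsPiEquiv T V1 V2 X1 X2 X3 z) y =
      ∏ i, (D i).destLikelihood k (c.1 i, c.2 i) (z i) (y i) := by
  cases k with
  | fst | snd => simp only [destLikelihood, ← sum_prod_mul_prod]; rfl
  | both =>
    simp only [destLikelihood, law_pi]
    exact sum_eq_prod_sum (inputsPiEquiv T V1 V2 X1 X2 X3) fun _ => Finset.prod_mul_distrib.symm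

variable [Fintype S1] [Fintype S2] [Fintype W] [Fintype W3] [Fintype Y] [Fintype Y3]

theorem Valid.pi (hD : ∀ k, (D k).Valid) : (pi D).Valid where
  pS := ⟨fun _ => Finset.prod_nonneg fun _ _ => (hD _).pS.1 _, by
    rw [sum_eq_prod_sum (Equiv.arrowProdEquivProdArrow T _ _) (φ := (Kernels.pi D).pS)
      (ψ := fun k => (D k).pS) fun _ => rfl]
    exact Finset.prod_eq_one fun k _ => (hD k).pS.2⟩
  pR_nonneg := fun _ _ => Finset.prod_nonneg fun _ _ => (hD _).pR_nonneg _ _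
  pR_sum := fun c => (sum_pi_prod fun k w => (D k).pR (c.1 k, c.2 k) w).trans
    (Finset.prod_congr rfl fun k _ => (hD k).pR_sum _)
  pD_nonneg := fun _ _ => Finset.prod_nonneg fun _ _ => (hD _).pD_nonneg _ _
  pD_sum := fun c => (sum_pi_prod fun k w => (D k).pD (c.1 k, c.2 k) w).trans
    (Finset.prod_congr rfl fun k _ => (hD k).pD_sum _)
  pV1 := isPmf_pi fun k => (hD k).pV1
  pV2 := isPmf_pi fun k => (hD k).pV2
  pX1 := fun _ _ => isPmf_pi fun k => (hD k).pX1 _ _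
  pX2 := fun _ _ => isPmf_pi fun k => (hD k).pX2 _ _
  pX3 := fun _ _ => isPmf_pi fun k => (hD k).pX3 _ _
  QR := fun _ => isPmf_pi fun k => (hD k).QR _
  QD := fun _ => isPmf_pi fun k => (hD k).QD _

theorem relayChernoff_pi (hD : ∀ k, (D k).Valid) (k : ErrorPattern) (t : ℝ) :
    (pi D).relayChernoff k t = ∏ i, (D i).relayChernoff k t :=
  chernoffSum_eq_prod (relayLetterPiEquiv _ _ _ _ _ _ _ _ _ _) (fun _ => law_pi D _ _)
    (fun _ => Finset.prod_mul_distrib.symm) (fun _ => relayMass_pi k _ _ _ _)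
    (fun i => (hD i).relayScore_nonneg) (fun i => (hD i).relayMass_nonneg k) t

theorem destChernoff_pi (hD : ∀ k, (D k).Valid) (k : ErrorPattern) (t : ℝ) :
    (pi D).destChernoff k t = ∏ i, (D i).destChernoff k t :=
  chernoffSum_eq_prod (destLetterPiEquiv _ _ _ _ _ _ _ _ _ _)
    (fun _ => (congrArg (_ * ·) (law_pi D _ _)).trans Finset.prod_mul_distrib.symm)
    (fun _ => Finset.prod_mul_distrib.symm)
    (fun _ => (congr_arg₂ (· * ·) (destPrior_pi k _ _) (destLikelihood_pi k _ _ _)).trans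
      Finset.prod_mul_distrib.symm)
    (fun i => (hD i).destScore_nonneg) (fun i => (hD i).destMass_nonneg k) t

end Kernels

/-! ### The block-Markov scheme -/

theorem sum_causal_prod {O : Type*} [Fintype O] [Nonempty O] :
    ∀ {n : ℕ} (q : Fin n → (Fin n → O) → O → ℝ), (∀ k o, ∑ a, q k o a = 1) →
      (∀ k o o', (∀ j < k, o j = o' j) → q k o = q k o') → ∑ o, ∏ k, q k o (o k) = 1
  | 0, _, _, _ => by simp
  | n + 1, q, hq, hc => by
    obtain ⟨a0⟩ := ‹Nonempty O›
    have hsnoc : ∀ (k : Fin (n + 1)) (o o' : Fin n → O) a a', (∀ j : Fin n, j.castSucc < k →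
        o j = o' j) →
      q k (Fin.snoc (α := fun _ => O) o a) = q k (Fin.snoc (α := fun _ => O) o' a') :=
      fun k o o' a a' h => hc _ _ _ <| Fin.lastCases
        (fun hj => absurd hj (Fin.le_last k).not_gt)
        (fun j hj => by simpa only [Fin.snoc_castSucc] using h j hj)
    have ih := sum_causal_prod (fun k o => q k.castSucc (Fin.snoc (α := fun _ => O) o a0))
      (fun _ _ => hq _ _) fun k o o' h => hsnoc _ _ _ _ _ fun j hj => h j hj
    rw [← Equiv.sum_comp (Fin.snocEquiv fun _ => O), Fintype.sum_prod_type_right, ← ih]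
    refine Finset.sum_congr rfl fun o _ => ?_
    have hlast : ∀ (k : Fin (n + 1)) a, q k (Fin.snoc (α := fun _ => O) o a) =
        q k (Fin.snoc (α := fun _ => O) o a0) := fun k a => hsnoc _ _ _ _ _ fun _ _ => rfl
    simp only [Fin.snocEquiv, Equiv.coe_fn_mk, Fin.prod_univ_castSucc, Fin.snoc_castSucc,
      Fin.snoc_last, hlast, ← Finset.mul_sum, hq, mul_one]

theorem mul_ind_le_sub_add_sum {J : Type*} [Fintype J] {A G : ℝ} (hA : 0 ≤ A) (hG : 0 ≤ G)
    {E : Prop} {R : J → Prop} (h : (∀ j, ¬R j) → A = G ∧ ¬E) :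
    A * ind E ≤ (A - G) + ∑ j, G * ind (R j) := by
  have hnonneg : ∀ j ∈ Finset.univ, 0 ≤ G * ind (R j) := fun j _ => mul_nonneg hG (ind_nonneg _)
  by_cases hR : ∀ j, ¬R j
  · rw [ind_of_not (h hR).2, (h hR).1, mul_zero, sub_self, zero_add]
    exact Finset.sum_nonneg hnonneg
  · obtain ⟨j, hj⟩ := not_forall_not.1 hR
    have hle := Finset.single_le_sum hnonneg (Finset.mem_univ j)
    rw [ind_of hj, mul_one] at hle
    linarith [mul_le_of_le_one_right hA (ind_le_one E)]

section Sequences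

variable {S Y Y3 W W3 : Type*} {B : ℕ}

/-- The sequence `a, s 0, …, s (B - 1), c, c, …`. -/
def withBoundary (a c : S) (s : Fin B → S) : ℕ → S
  | 0 => a
  | j + 1 => if h : j < B then s ⟨j, h⟩ else c

theorem withBoundary_succ (a c : S) (s : Fin B → S) (j : Fin B) :
    withBoundary a c s (j + 1) = s j := by
  simp [withBoundary]

theorem withBoundary_of_lt (a c : S) (s : Fin B → S) {j : ℕ} (h : B < j) :
    withBoundary a c s j = c := by
  cases j with
  | zero => exact absurd h (Nat.not_lt_zero B)
  | succ j => exact dif_neg (Nat.lt_succ_iff.1 h).not_gt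

theorem apply_withBoundary {S' : Type*} (f : S → S') (a c : S) (s : Fin B → S) (j : ℕ) :
    f (withBoundary a c s j) = withBoundary (f a) (f c) (fun i => f (s i)) j := by
  cases j with
  | zero => rfl
  | succ j => exact apply_dite f _ _ _

/-- The value `relayEst a gR y w j` is the relay's estimate, after channel block `j - 1`, of the
source block sent in that channel block; each estimate is used to form the next one. -/
def relayEst (a : S) (gR : S → Y3 → W3 → S) (y : Fin (B + 1) → Y3) (w : Fin B → W3) : ℕ → S
  | 0 => a
  | j + 1 => if h : j < B then
      gR (relayEst a gR y w j) (y (Fin.castSucc ⟨j, h⟩)) (w ⟨j, h⟩) else a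

/-- The value `destEst c gD y w k` is the destination's estimate of the source block `B - k`; the
blocks are decoded from the last one backwards. -/
def destEst (c : S) (gD : S → Y → W → S) (y : Fin (B + 1) → Y) (w : Fin B → W) : ℕ → S
  | 0 => c
  | k + 1 => if h : k < B then
      gD (destEst c gD y w k) (y (Fin.succ ⟨B - 1 - k, by lia⟩)) (w ⟨B - 1 - k, by lia⟩) else c

theorem relayEst_eq_withBoundary {a c : S} {gR : S → Y3 → W3 → S} {y : Fin (B + 1) → Y3}
    {w : Fin B → W3} {s : Fin B → S}
    (h : ∀ j : Fin B, gR (withBoundary a c s j) (y j.castSucc) (w j) = s j) :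
    ∀ j ≤ B, relayEst a gR y w j = withBoundary a c s j
  | 0, _ => rfl
  | j + 1, hj => by
    have hj' : j < B := hj
    rw [relayEst, dif_pos hj', relayEst_eq_withBoundary h j hj'.le, h ⟨j, hj'⟩]
    exact (withBoundary_succ a c s ⟨j, hj'⟩).symm

theorem destEst_eq_withBoundary {a c : S} {gD : S → Y → W → S} {y : Fin (B + 1) → Y}
    {w : Fin B → W} {s : Fin B → S}
    (h : ∀ j : Fin B, gD (withBoundary a c s (j + 2)) (y j.succ) (w j) = s j) :
    ∀ k ≤ B, destEst c gD y w k = withBoundary a c s (B + 1 - k)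
  | 0, _ => (withBoundary_of_lt a c s (Nat.lt_succ_self B)).symm
  | k + 1, hk => by
    have hk' : k < B := hk
    rw [destEst, dif_pos hk', destEst_eq_withBoundary h k hk'.le,
      show B + 1 - k = (B - 1 - k) + 2 by lia,
      show B + 1 - (k + 1) = (B - 1 - k) + 1 by lia, h ⟨B - 1 - k, by lia⟩]
    exact (withBoundary_succ a c s ⟨B - 1 - k, by lia⟩).symm

theorem relayEst_congr (a : S) (gR : S → Y3 → W3 → S) {y y' : Fin (B + 1) → Y3} (w : Fin B → W3) :
    ∀ j : ℕ, (∀ i : Fin (B + 1), (i : ℕ) < j → y i = y' i) →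
      relayEst a gR y w j = relayEst a gR y' w j
  | 0, _ => rfl
  | j + 1, h => by
    rw [relayEst, relayEst, relayEst_congr a gR w j fun i hi => h i (hi.trans j.lt_succ_self)]
    split_ifs with hj
    · rw [h (Fin.castSucc ⟨j, hj⟩) j.lt_succ_self]
    · rfl

theorem sum_withBoundary_le {Ω : Type*} [Fintype Ω] {p : Ω → ℝ} (hp : IsPmf p) (π : Ω → S)
    (φ : S → Ω → ℝ) {a c : S} {e : ℝ} {i : ℕ} {j : Fin B} (hij : i ≠ j + 1)
    (ha : i = 0 → ∑ ω, p ω * φ a ω ≤ e) (hc : B < i → ∑ ω, p ω * φ c ω ≤ e)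
    (hmid : ∑ ω', p ω' * ∑ ω, p ω * φ (π ω') ω ≤ e) :
    ∑ ω : Fin B → Ω, (∏ k, p (ω k)) * φ (withBoundary a c (fun k => π (ω k)) i) (ω j) ≤ e := by
  rcases i with _ | i
  · exact (sum_pi_mul_apply (fun _ => hp) j fun ω => φ a ω).trans_le (ha rfl)
  by_cases hi : i < B
  · have hne : (⟨i, hi⟩ : Fin B) ≠ j := fun h => hij (by rw [← h])
    simp only [withBoundary, dif_pos hi]
    exact (sum_pi_mul_apply_apply_of_ne (fun _ => hp) hne fun ω' ω => φ (π ω') ω).trans_le hmid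
  · simp only [withBoundary, dif_neg hi]
    exact (sum_pi_mul_apply (fun _ => hp) j fun ω => φ c ω).trans_le (hc (by lia))

end Sequences

/-- A code for the MARC that transmits `m` source letters in `n` uses of the channel. -/
structure MarcCode (S1 S2 W W3 X1 X2 X3 Y Y3 : Type*) (m n : ℕ) where
  enc1 : (Fin m → S1) → Fin n → X1
  enc2 : (Fin m → S2) → Fin n → X2
  encRelay : Fin n → (Fin n → Y3) → (Fin m → W3) → X3
  dec : (Fin n → Y) → (Fin m → W) → Fin m → S1 × S2
  causal : ∀ k y y' w, (∀ j < k, y j = y' j) → encRelay k y w = encRelay k y' w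

namespace MarcCode

variable {S1 S2 W W3 X1 X2 X3 Y Y3 : Type*} {m n : ℕ}

/-- The channel inputs at each time, when the relay observes `y`. -/
def inputs (C : MarcCode S1 S2 W W3 X1 X2 X3 Y Y3 m n) (ω : Fin m → S1 × S2 × W × W3)
    (y : Fin n → Y3) (j : Fin n) : X1 × X2 × X3 :=
  (C.enc1 (fun i => (ω i).1) j, C.enc2 (fun i => (ω i).2.1) j,
    C.encRelay j y fun i => (ω i).2.2.2)

/-- The law of the channel outputs given the sources. -/
def outputLaw (C : MarcCode S1 S2 W W3 X1 X2 X3 Y Y3 m n) (Q : X1 × X2 × X3 → Y × Y3 → ℝ)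
    (ω : Fin m → S1 × S2 × W × W3) (o : Fin n → Y × Y3) : ℝ :=
  ∏ j, Q (C.inputs ω (fun i => (o i).2) j) (o j)

/-- The event that the destination errs. -/
def Errs (C : MarcCode S1 S2 W W3 X1 X2 X3 Y Y3 m n) (ω : Fin m → S1 × S2 × W × W3)
    (o : Fin n → Y × Y3) : Prop :=
  C.dec (fun i => (o i).1) (fun i => (ω i).2.2.1) ≠ fun i => ((ω i).1, (ω i).2.1)

/-- The error probability for i.i.d. sources with law `p` over the memoryless channel `Q`. -/
noncomputable def errProb [Fintype S1] [Fintype S2] [Fintype W] [Fintype W3] [Fintype Y]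
    [Fintype Y3] (C : MarcCode S1 S2 W W3 X1 X2 X3 Y Y3 m n) (p : S1 × S2 × W × W3 → ℝ)
    (Q : X1 × X2 × X3 → Y × Y3 → ℝ) : ℝ :=
  ∑ ω : Fin m → S1 × S2 × W × W3, (∏ j, p (ω j)) * ∑ o, C.outputLaw Q ω o * ind (C.Errs ω o)

variable {Q : X1 × X2 × X3 → Y × Y3 → ℝ} [Fintype Y] [Fintype Y3]

theorem outputLaw_nonneg (C : MarcCode S1 S2 W W3 X1 X2 X3 Y Y3 m n) (hQ : ∀ x, IsPmf (Q x))
    (ω : Fin m → S1 × S2 × W × W3) (o : Fin n → Y × Y3) : 0 ≤ C.outputLaw Q ω o :=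
  Finset.prod_nonneg fun _ _ => (hQ _).1 _

theorem sum_outputLaw [Nonempty (Y × Y3)] (C : MarcCode S1 S2 W W3 X1 X2 X3 Y Y3 m n)
    (hQ : ∀ x, IsPmf (Q x)) (ω : Fin m → S1 × S2 × W × W3) : ∑ o, C.outputLaw Q ω o = 1 :=
  sum_causal_prod (fun j o => Q (C.inputs ω (fun i => (o i).2) j)) (fun _ _ => (hQ _).2)
    fun j o o' h => by
      simp only [inputs]
      rw [C.causal j _ (fun i => (o' i).2) _ fun i hi => congrArg Prod.snd (h i hi)]

end MarcCode

namespace BlockCode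

variable {S1 S2 W W3 X1 X2 X3 Y Y3 : Type*} (C : BlockCode S1 S2 W W3 X1 X2 X3 Y Y3)
  (a c : S1 × S2) {B : ℕ}

/-- The block-Markov code obtained by using `C` in `B + 1` channel blocks for `B` source blocks. The
source blocks before the first one and after the last one are fixed to `a` and `c`. -/
def toMarcCode (B : ℕ) : MarcCode S1 S2 W W3 X1 X2 X3 Y Y3 B (B + 1) where
  enc1 s j := C.enc1 (withBoundary a.1 c.1 s (j + 1)) (withBoundary a.1 c.1 s j)
  enc2 s j := C.enc2 (withBoundary a.2 c.2 s (j + 1)) (withBoundary a.2 c.2 s j)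
  encRelay j y w := C.encRelay (relayEst a C.decRelay y w j)
  dec y w j := destEst c C.decDest y w (B - j)
  causal k _ _ w h := congrArg C.encRelay (relayEst_congr a C.decRelay w k fun i hi => h i hi)

/-- The source blocks with their boundary values; block `j` of `ω` has index `j + 1`. -/
def sourceBlocks (ω : Fin B → S1 × S2 × W × W3) : ℕ → S1 × S2 :=
  withBoundary a c fun i => ((ω i).1, (ω i).2.1)

/-- The law of the channel outputs if the relay knew all previous source blocks. -/
def genieLaw (Q : X1 × X2 × X3 → Y × Y3 → ℝ) (ω : Fin B → S1 × S2 × W × W3)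
    (o : Fin (B + 1) → Y × Y3) : ℝ :=
  ∏ j : Fin (B + 1), Q (C.send (sourceBlocks a c ω (j + 1)) (sourceBlocks a c ω j)) (o j)

/-- The event that the relay, knowing the source block before block `j`, errs on block `j`. -/
def RelayErrs (ω : Fin B → S1 × S2 × W × W3) (o : Fin (B + 1) → Y × Y3) (j : Fin B) : Prop :=
  C.decRelay (sourceBlocks a c ω j) (o j.castSucc).2 (ω j).2.2.2 ≠ ((ω j).1, (ω j).2.1)

/-- The event that the destination, knowing the source block after block `j`, errs on block `j`. -/
def DestErrs (ω : Fin B → S1 × S2 × W × W3) (o : Fin (B + 1) → Y × Y3) (j : Fin B) : Prop :=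
  C.decDest (sourceBlocks a c ω (j + 2)) (o j.succ).1 (ω j).2.2.1 ≠ ((ω j).1, (ω j).2.1)

theorem outputLaw_eq_genieLaw (Q : X1 × X2 × X3 → Y × Y3 → ℝ) {ω : Fin B → S1 × S2 × W × W3}
    {o : Fin (B + 1) → Y × Y3} (h : ∀ j, ¬C.RelayErrs a c ω o j) :
    (C.toMarcCode a c B).outputLaw Q ω o = C.genieLaw a c Q ω o := by
  simp only [RelayErrs, not_not] at h
  have hest : ∀ j : Fin (B + 1), relayEst a C.decRelay (fun i => (o i).2)
      (fun i => (ω i).2.2.2) j = sourceBlocks a c ω j := fun j =>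
    relayEst_eq_withBoundary h j (Nat.lt_succ_iff.1 j.is_lt)
  simp only [MarcCode.outputLaw, MarcCode.inputs, toMarcCode, hest, genieLaw, send, sourceBlocks,
    apply_withBoundary Prod.fst, apply_withBoundary Prod.snd]

theorem not_errs_toMarcCode {ω : Fin B → S1 × S2 × W × W3} {o : Fin (B + 1) → Y × Y3}
    (h : ∀ j, ¬C.DestErrs a c ω o j) : ¬(C.toMarcCode a c B).Errs ω o := by
  simp only [DestErrs, not_not] at h
  refine not_not.2 (funext fun j => ?_)
  refine (destEst_eq_withBoundary h (B - j) (Nat.sub_le _ _)).trans ?_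
  rw [show B + 1 - (B - (j : ℕ)) = j + 1 by lia]
  exact withBoundary_succ _ _ _ j

variable {C a c}
variable {p : S1 × S2 × W × W3 → ℝ} {Q : X1 × X2 × X3 → Y × Y3 → ℝ} {e : ℝ} [Fintype Y]
  [Fintype Y3]

theorem sum_genieLaw_mul (hQ : ∀ x, IsPmf (Q x)) (ω : Fin B → S1 × S2 × W × W3) (j : Fin (B + 1))
    (φ : Y × Y3 → ℝ) : ∑ o, C.genieLaw a c Q ω o * φ (o j) =
      ∑ o, Q (C.send (sourceBlocks a c ω (j + 1)) (sourceBlocks a c ω j)) o * φ o :=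
  sum_pi_mul_apply (fun _ => hQ _) j φ

variable [Fintype S1] [Fintype S2] [Fintype W] [Fintype W3]

variable (C p Q) in
/-- The probability that the relay, knowing the previous source block `a`, errs on the current
one. -/
noncomputable def relayErr (a : S1 × S2) : ℝ :=
  ∑ ω, p ω * ∑ o, Q (C.send (ω.1, ω.2.1) a) o * ind (C.decRelay a o.2 ω.2.2.2 ≠ (ω.1, ω.2.1))

variable (C p Q) in
/-- The probability that the destination, knowing the current source block `c`, errs on the previous
one. -/
noncomputable def destErr (c : S1 × S2) : ℝ :=
  ∑ ω, p ω * ∑ o, Q (C.send c (ω.1, ω.2.1)) o * ind (C.decDest c o.1 ω.2.2.1 ≠ (ω.1, ω.2.1))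

theorem sum_genieLaw_relayErrs_le (hp : IsPmf p) (hQ : ∀ x, IsPmf (Q x))
    (ha : C.relayErr p Q a ≤ e) (hR : ∑ ω, p ω * C.relayErr p Q (ω.1, ω.2.1) ≤ e) (j : Fin B) :
    ∑ ω : Fin B → S1 × S2 × W × W3, (∏ i, p (ω i)) *
      ∑ o, C.genieLaw a c Q ω o * ind (C.RelayErrs a c ω o j) ≤ e := by
  refine (Finset.sum_congr rfl fun ω _ => congrArg _ ?_).trans_le
    (sum_withBoundary_le (i := j) (c := c) hp (fun ω => (ω.1, ω.2.1)) (fun s ω => ∑ o,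
      Q (C.send (ω.1, ω.2.1) s) o * ind (C.decRelay s o.2 ω.2.2.2 ≠ (ω.1, ω.2.1)))
      (Nat.succ_ne_self _).symm (fun _ => ha) (fun h => absurd h j.is_lt.not_gt) hR)
  refine (sum_genieLaw_mul hQ ω j.castSucc fun o => ind (C.decRelay (sourceBlocks a c ω j) o.2
    (ω j).2.2.2 ≠ ((ω j).1, (ω j).2.1))).trans ?_
  simp only [sourceBlocks, Fin.val_castSucc, withBoundary_succ]

theorem sum_genieLaw_destErrs_le (hp : IsPmf p) (hQ : ∀ x, IsPmf (Q x))
    (hc : C.destErr p Q c ≤ e) (hD : ∑ ω, p ω * C.destErr p Q (ω.1, ω.2.1) ≤ e) (j : Fin B) :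
    ∑ ω : Fin B → S1 × S2 × W × W3, (∏ i, p (ω i)) *
      ∑ o, C.genieLaw a c Q ω o * ind (C.DestErrs a c ω o j) ≤ e := by
  refine (Finset.sum_congr rfl fun ω _ => congrArg _ ?_).trans_le
    (sum_withBoundary_le (i := j + 2) (j := j) (a := a) hp (fun ω => (ω.1, ω.2.1)) (fun s ω => ∑ o,
      Q (C.send s (ω.1, ω.2.1)) o * ind (C.decDest s o.1 ω.2.2.1 ≠ (ω.1, ω.2.1)))
      (by lia) (fun h => absurd h (by lia)) (fun _ => hc) hD)
  refine (sum_genieLaw_mul hQ ω j.succ fun o => ind (C.decDest (sourceBlocks a c ω (j + 2)) o.1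
    (ω j).2.2.1 ≠ ((ω j).1, (ω j).2.1))).trans ?_
  simp only [sourceBlocks, Fin.val_succ, withBoundary_succ, add_assoc, Nat.reduceAdd]

-- Up to the first error of a decoder the actual scheme agrees with the genie-aided one, and both
-- output laws have total mass one.
theorem errProb_toMarcCode_le_sum [Nonempty (Y × Y3)] (hp : IsPmf p) (hQ : ∀ x, IsPmf (Q x)) :
    (C.toMarcCode a c B).errProb p Q ≤ ∑ j : Fin B ⊕ Fin B, ∑ ω, (∏ i, p (ω i)) *
      ∑ o, C.genieLaw a c Q ω o *
        ind (j.elim (C.RelayErrs a c ω o) (C.DestErrs a c ω o)) := by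
  have hgenie : ∀ ω, IsPmf (C.genieLaw (B := B) a c Q ω) := fun ω => isPmf_pi fun _ => hQ _
  rw [Finset.sum_comm]
  refine Finset.sum_le_sum fun ω _ => ?_
  rw [← Finset.mul_sum, Finset.sum_comm]
  refine mul_le_mul_of_nonneg_left ?_ ((isPmf_pi fun _ => hp).1 ω)
  calc _ ≤ ∑ o, (((C.toMarcCode a c B).outputLaw Q ω o - C.genieLaw a c Q ω o) +
        ∑ j : Fin B ⊕ Fin B, C.genieLaw a c Q ω o *
          ind (j.elim (C.RelayErrs a c ω o) (C.DestErrs a c ω o))) :=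
        Finset.sum_le_sum fun o _ => mul_ind_le_sub_add_sum (MarcCode.outputLaw_nonneg _ hQ ω o)
          ((hgenie ω).1 o) fun h => ⟨C.outputLaw_eq_genieLaw a c Q fun j => h (.inl j),
            C.not_errs_toMarcCode a c fun j => h (.inr j)⟩
    _ = _ := by
        rw [Finset.sum_add_distrib, Finset.sum_sub_distrib, MarcCode.sum_outputLaw _ hQ,
          (hgenie ω).2, sub_self, zero_add]

theorem exists_errProb_toMarcCode_le [Nonempty (Y × Y3)] (hp : IsPmf p) (hQ : ∀ x, IsPmf (Q x))
    (hR : ∑ ω, p ω * C.relayErr p Q (ω.1, ω.2.1) ≤ e)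
    (hD : ∑ ω, p ω * C.destErr p Q (ω.1, ω.2.1) ≤ e) (B : ℕ) :
    ∃ a c, (C.toMarcCode a c B).errProb p Q ≤ 2 * B * e := by
  obtain ⟨ωa, ha⟩ := exists_le_of_sum_mul_le hp hR
  obtain ⟨ωc, hc⟩ := exists_le_of_sum_mul_le hp hD
  refine ⟨(ωa.1, ωa.2.1), (ωc.1, ωc.2.1), (errProb_toMarcCode_le_sum hp hQ).trans ?_⟩
  calc _ ≤ ∑ _j : Fin B ⊕ Fin B, e := Finset.sum_le_sum fun j _ => by
        cases j with
        | inl j => exact sum_genieLaw_relayErrs_le hp hQ ha hR j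
        | inr j => exact sum_genieLaw_destErrs_le hp hQ hc hD j
    _ = 2 * B * e := by
        rw [Finset.sum_const, Finset.card_univ, Fintype.card_sum, Fintype.card_fin, nsmul_eq_mul]
        push_cast
        ring

end BlockCode

/-! ### Entropy and Gibbs' inequality -/

section Pushforward

variable {Ω Λ Λ' α : Type*} [Fintype Ω] [Fintype Λ] [Fintype Λ'] [DecidableEq α]

/-- The weights `ν` are the image of the weights `μ` under `π`. -/
def IsPushforward (μ : Ω → ℝ) (π : Ω → Λ) (ν : Λ → ℝ) : Prop :=
  ∀ φ : Λ → ℝ, ∑ ω, μ ω * φ (π ω) = ∑ x, ν x * φ x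

/-- The image of the weights `μ` under `X`; for a pmf, the law of the random variable `X`. -/
def pmfMap (μ : Ω → ℝ) (X : Ω → α) (a : α) : ℝ := ∑ ω, if X ω = a then μ ω else 0

theorem pmfMap_nonneg {μ : Ω → ℝ} (hμ : ∀ ω, 0 ≤ μ ω) (X : Ω → α) (a : α) : 0 ≤ pmfMap μ X a :=
  Finset.sum_nonneg fun ω _ => ite_nonneg (hμ ω) le_rfl

theorem pmfMap_pos {μ : Ω → ℝ} (hμ : ∀ ω, 0 ≤ μ ω) (X : Ω → α) {ω : Ω} (h : 0 < μ ω) :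
    0 < pmfMap μ X (X ω) :=
  Finset.sum_pos' (fun ω' _ => ite_nonneg (hμ ω') le_rfl)
    ⟨ω, Finset.mem_univ ω, by rwa [if_pos rfl]⟩

theorem pmfMap_of_injective (μ : Ω → ℝ) {X : Ω → α} (hX : X.Injective) (ω : Ω) :
    pmfMap μ X (X ω) = μ ω := by
  classical
  simp only [pmfMap, hX.eq_iff, Finset.sum_ite_eq', Finset.mem_univ, if_true]

theorem isPushforward_pmfMap [Fintype α] (μ : Ω → ℝ) (X : Ω → α) :
    IsPushforward μ X (pmfMap μ X) := fun φ => by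
  simp only [pmfMap, Finset.sum_mul, ite_mul, zero_mul]
  rw [Finset.sum_comm]
  simp only [Finset.sum_ite_eq, Finset.mem_univ, if_true]

theorem sum_pmfMap_prodMk {β : Type*} [DecidableEq β] [Fintype α] (μ : Ω → ℝ) (X : Ω → α)
    (Z : Ω → β) (z : β) : ∑ a, pmfMap μ (fun ω => (X ω, Z ω)) (a, z) = pmfMap μ Z z := by
  simp only [pmfMap, Prod.mk.injEq]
  rw [Finset.sum_comm]
  refine Finset.sum_congr rfl fun ω _ => ?_
  by_cases h : Z ω = z <;> simp [h]

variable {μ : Ω → ℝ} {ν : Λ → ℝ} {π : Ω → Λ}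

namespace IsPushforward

theorem trans (h : IsPushforward μ π ν) {π' : Λ → Λ'} {ν' : Λ' → ℝ}
    (h' : IsPushforward ν π' ν') : IsPushforward μ (fun ω => π' (π ω)) ν' :=
  fun φ => (h fun x => φ (π' x)).trans (h' φ)

theorem sum_eq (h : IsPushforward μ π ν) : ∑ ω, μ ω = ∑ x, ν x := by
  simpa only [mul_one] using h fun _ => 1

theorem pos (h : IsPushforward μ π ν) (hμ : ∀ ω, 0 ≤ μ ω) {ω : Ω} (hω : 0 < μ ω) :
    0 < ν (π ω) := by
  classical
  have hν : pmfMap μ π (π ω) = ν (π ω) := by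
    simpa [pmfMap] using h fun x => if x = π ω then 1 else 0
  exact hν ▸ pmfMap_pos hμ π hω

variable {β γ : Type*} [Fintype α] [Fintype β] [Fintype γ] [DecidableEq β] [DecidableEq γ]

theorem entropyOf_comp (h : IsPushforward μ π ν) (X : Λ → α) :
    entropyOf μ (fun ω => X (π ω)) = entropyOf ν X := by
  refine Finset.sum_congr rfl fun a _ => congrArg _ ?_
  simpa using h fun x => if X x = a then 1 else 0

theorem condEntropyOf_comp (h : IsPushforward μ π ν) (X : Λ → α) (Y : Λ → β) :
    condEntropyOf μ (fun ω => X (π ω)) (fun ω => Y (π ω)) = condEntropyOf ν X Y :=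
  congrArg₂ _ (h.entropyOf_comp fun x => (X x, Y x)) (h.entropyOf_comp Y)

theorem condMutualInfoOf_comp (h : IsPushforward μ π ν) (X : Λ → α) (Y : Λ → β) (Z : Λ → γ) :
    condMutualInfoOf μ (fun ω => X (π ω)) (fun ω => Y (π ω)) (fun ω => Z (π ω)) =
      condMutualInfoOf ν X Y Z := by
  rw [condMutualInfoOf, condMutualInfoOf, h.entropyOf_comp Z, h.entropyOf_comp fun x => (X x, Z x),
    h.entropyOf_comp fun x => (Y x, Z x), h.entropyOf_comp fun x => (X x, Y x, Z x)]

end IsPushforward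

end Pushforward

section Entropy

variable {Ω α β γ : Type*} [Fintype Ω] [Fintype α] [Fintype β] [Fintype γ]
  [DecidableEq α] [DecidableEq β] [DecidableEq γ]

theorem sum_mul_log_pmfMap (μ : Ω → ℝ) (X : Ω → α) :
    ∑ ω, μ ω * Real.log (pmfMap μ X (X ω)) = -entropyOf μ X := by
  rw [isPushforward_pmfMap μ X fun a => Real.log (pmfMap μ X a), entropyOf,
    ← Finset.sum_neg_distrib]
  exact Finset.sum_congr rfl fun a _ => by rw [Real.negMulLog, neg_mul, neg_neg, pmfMap]

theorem sum_mul_log_pmfMap_sub (μ : Ω → ℝ) (X : Ω → α) (Z : Ω → γ) :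
    ∑ ω, μ ω * (Real.log (pmfMap μ Z (Z ω)) -
      Real.log (pmfMap μ (fun ω => (X ω, Z ω)) (X ω, Z ω))) = condEntropyOf μ X Z := by
  simp only [mul_sub, Finset.sum_sub_distrib, sum_mul_log_pmfMap,
    sum_mul_log_pmfMap μ fun ω => (X ω, Z ω), condEntropyOf]
  ring

theorem entropyOf_comp_equiv (μ : Ω → ℝ) (X : Ω → α) (e : α ≃ β) :
    entropyOf μ (fun ω => e (X ω)) = entropyOf μ X := by
  rw [entropyOf, ← Equiv.sum_comp e]
  simp only [EmbeddingLike.apply_eq_iff_eq, entropyOf]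

theorem condMutualInfoOf_eq_sub (μ : Ω → ℝ) (X : Ω → α) (Y : Ω → β) (Z : Ω → γ) :
    condMutualInfoOf μ X Y Z = condEntropyOf μ Y Z - condEntropyOf μ Y fun ω => (X ω, Z ω) := by
  have hcomm : entropyOf μ (fun ω => (Y ω, X ω, Z ω)) = entropyOf μ fun ω => (X ω, Y ω, Z ω) :=
    entropyOf_comp_equiv μ (fun ω => (X ω, Y ω, Z ω))
      ⟨fun x => (x.2.1, x.1, x.2.2), fun x => (x.2.1, x.1, x.2.2), fun _ => rfl, fun _ => rfl⟩
  rw [condMutualInfoOf, condEntropyOf, condEntropyOf, hcomm]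
  ring

theorem sum_mul_log_nonpos {μ r : Ω → ℝ} (hμ : IsPmf μ) (hr : ∀ ω, 0 < μ ω → 0 < r ω)
    (h : ∑ ω, μ ω * r ω ≤ 1) : ∑ ω, μ ω * Real.log (r ω) ≤ 0 := by
  have hlog : ∑ ω, μ ω * Real.log (r ω) ≤ ∑ ω, μ ω * (r ω - 1) := by
    refine Finset.sum_le_sum fun ω _ => ?_
    rcases (hμ.1 ω).eq_or_lt with h0 | h0
    · rw [← h0, zero_mul, zero_mul]
    · exact mul_le_mul_of_nonneg_left (Real.log_le_sub_one_of_pos (hr ω h0)) h0.le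
  simp only [mul_sub, mul_one, Finset.sum_sub_distrib, hμ.2] at hlog
  linarith

theorem sum_mul_ratio_le_one {γ : Type*} [Finite γ] [DecidableEq γ] {μ : Ω → ℝ} (hμ : IsPmf μ)
    (Y : Ω → β) (Z : Ω → γ) {N : γ → β → ℝ} (hN : ∀ z y, 0 ≤ N z y) (hN1 : ∀ z, ∑ y, N z y ≤ 1) :
    ∑ ω, μ ω * (N (Z ω) (Y ω) * pmfMap μ Z (Z ω) /
      pmfMap μ (fun ω => (Y ω, Z ω)) (Y ω, Z ω)) ≤ 1 := by
  have := Fintype.ofFinite γ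
  set P := pmfMap μ fun ω => (Y ω, Z ω)
  calc _ = ∑ x : β × γ, P x * (N x.2 x.1 * pmfMap μ Z x.2 / P x) :=
        isPushforward_pmfMap μ (fun ω => (Y ω, Z ω)) fun x => N x.2 x.1 * pmfMap μ Z x.2 / P x
    _ ≤ ∑ x : β × γ, N x.2 x.1 * pmfMap μ Z x.2 := by
        refine Finset.sum_le_sum fun x _ => ?_
        rcases eq_or_ne (P x) 0 with hx | hx
        · rw [hx, zero_mul]
          exact mul_nonneg (hN _ _) (pmfMap_nonneg hμ.1 _ _)
        · exact (mul_div_cancel₀ _ hx).le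
    _ = ∑ z, (∑ y, N z y) * pmfMap μ Z z := by
        simp only [Fintype.sum_prod_type_right, Finset.sum_mul]
    _ ≤ ∑ z, pmfMap μ Z z := Finset.sum_le_sum fun z _ =>
        mul_le_of_le_one_left (pmfMap_nonneg hμ.1 _ _) (hN1 z)
    _ = 1 := by rw [← (isPushforward_pmfMap μ Z).sum_eq, hμ.2]

theorem sum_mul_log_le_neg_condEntropyOf {μ : Ω → ℝ} (hμ : IsPmf μ) (Y : Ω → β) (Z : Ω → γ)
    {N : γ → β → ℝ} (hN : ∀ z y, 0 ≤ N z y) (hN1 : ∀ z, ∑ y, N z y ≤ 1)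
    (hpos : ∀ ω, 0 < μ ω → 0 < N (Z ω) (Y ω)) :
    ∑ ω, μ ω * Real.log (N (Z ω) (Y ω)) ≤ -condEntropyOf μ Y Z := by
  have hZ : ∀ {ω}, 0 < μ ω → 0 < pmfMap μ Z (Z ω) := fun h => pmfMap_pos hμ.1 Z h
  have hYZ : ∀ {ω}, 0 < μ ω → 0 < pmfMap μ (fun ω => (Y ω, Z ω)) (Y ω, Z ω) := fun h =>
    pmfMap_pos hμ.1 (fun ω => (Y ω, Z ω)) h
  have hratio := sum_mul_log_nonpos hμ
    (fun ω h => div_pos (mul_pos (hpos ω h) (hZ h)) (hYZ h)) (sum_mul_ratio_le_one hμ Y Z hN hN1)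
  rw [le_neg_iff_add_nonpos_right, ← sum_mul_log_pmfMap_sub, ← Finset.sum_add_distrib]
  refine (Finset.sum_congr rfl fun ω _ => ?_).trans_le hratio
  rcases (hμ.1 ω).eq_or_lt with h0 | h0
  · simp only [← h0, zero_mul, add_zero]
  · rw [Real.log_div (mul_pos (hpos ω h0) (hZ h0)).ne' (hYZ h0).ne',
      Real.log_mul (hpos ω h0).ne' (hZ h0).ne']
    ring

theorem condEntropyOf_le_condEntropyOf_comp {μ : Ω → ℝ} (hμ : IsPmf μ) (Y : Ω → β) (Z : Ω → γ)
    (U : γ → α) : condEntropyOf μ Y Z ≤ condEntropyOf μ Y fun ω => U (Z ω) := by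
  set P := pmfMap μ fun ω => (Y ω, U (Z ω))
  set R := pmfMap μ fun ω => U (Z ω)
  have hR : ∀ {ω}, 0 < μ ω → 0 < R (U (Z ω)) := fun h => pmfMap_pos hμ.1 (fun ω => U (Z ω)) h
  have hP : ∀ {ω}, 0 < μ ω → 0 < P (Y ω, U (Z ω)) := fun h =>
    pmfMap_pos hμ.1 (fun ω => (Y ω, U (Z ω))) h
  have hGibbs := sum_mul_log_le_neg_condEntropyOf hμ Y Z
    (N := fun z y => P (y, U z) / R (U z))
    (fun _ _ => div_nonneg (pmfMap_nonneg hμ.1 _ _) (pmfMap_nonneg hμ.1 _ _))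
    (fun z => by rw [← Finset.sum_div, sum_pmfMap_prodMk]; exact div_self_le_one _)
    fun _ h => div_pos (hP h) (hR h)
  rw [← sum_mul_log_pmfMap_sub μ Y fun ω => U (Z ω)]
  refine (le_neg_of_le_neg hGibbs).trans_eq ?_
  rw [← Finset.sum_neg_distrib]
  refine Finset.sum_congr rfl fun ω _ => ?_
  rcases (hμ.1 ω).eq_or_lt with h0 | h0
  · rw [← h0, zero_mul, zero_mul, neg_zero]
  · rw [Real.log_div (hP h0).ne' (hR h0).ne']
    ring

theorem condEntropyOf_snd_fst_mul {τ : α → ℝ} (hτ : ∀ r, 0 ≤ τ r) {K : α → β → ℝ}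
    (hK : ∀ r, IsPmf (K r)) :
    condEntropyOf (fun x : α × β => τ x.1 * K x.1 x.2) Prod.snd Prod.fst =
      -∑ x : α × β, τ x.1 * K x.1 x.2 * Real.log (K x.1 x.2) := by
  set μ := fun x : α × β => τ x.1 * K x.1 x.2
  have hfst : ∀ r, pmfMap μ Prod.fst r = τ r := fun r => by
    simp only [pmfMap, Fintype.sum_prod_type_right, Finset.sum_ite_eq', Finset.mem_univ, if_true,
      μ, ← Finset.mul_sum, (hK r).2, mul_one]
  have hswap : ∀ x, pmfMap μ (fun x => (x.2, x.1)) (x.2, x.1) = μ x :=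
    pmfMap_of_injective μ Prod.swap_injective
  rw [← sum_mul_log_pmfMap_sub, ← Finset.sum_neg_distrib]
  refine Finset.sum_congr rfl fun x _ => ?_
  rcases (hτ x.1).eq_or_lt with h0 | h0
  · simp only [μ, ← h0, zero_mul, neg_zero]
  rcases ((hK x.1).1 x.2).eq_or_lt with h1 | h1
  · simp only [μ, ← h1, mul_zero, zero_mul, neg_zero]
  · rw [hfst, hswap, Real.log_mul h0.ne' h1.ne']
    ring

theorem sum_mul_log_div_le_neg_condMutualInfoOf {ρ : Type*} [Fintype ρ] {τ : ρ → ℝ} (hτ : IsPmf τ)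
    {K : ρ → β → ℝ} (hK : ∀ r, IsPmf (K r)) (U : ρ → α) (G : ρ → γ) {N : γ → β → ℝ}
    (hN : ∀ z y, 0 ≤ N z y) (hN1 : ∀ z, ∑ y, N z y ≤ 1)
    (hpos : ∀ r y, 0 < τ r * K r y → 0 < N (G r) y) :
    ∑ x : ρ × β, τ x.1 * K x.1 x.2 * (Real.log (N (G x.1) x.2) - Real.log (K x.1 x.2)) ≤
      -condMutualInfoOf (fun x : ρ × β => τ x.1 * K x.1 x.2) (fun x => U x.1) (fun x => x.2)
        fun x => G x.1 := by
  classical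
  have hμ : IsPmf fun x : ρ × β => τ x.1 * K x.1 x.2 :=
    ⟨fun x => mul_nonneg (hτ.1 _) ((hK _).1 _), by
      simp only [Fintype.sum_prod_type, ← Finset.mul_sum, (hK _).2, mul_one, hτ.2]⟩
  have hGibbs := sum_mul_log_le_neg_condEntropyOf hμ (fun x => x.2) (fun x => G x.1) hN hN1
    fun x hx => hpos x.1 x.2 hx
  have hcond := condEntropyOf_le_condEntropyOf_comp hμ Prod.snd Prod.fst fun r => (U r, G r)
  rw [condEntropyOf_snd_fst_mul hτ.1 hK] at hcond
  rw [condMutualInfoOf_eq_sub]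
  simp only [mul_sub, Finset.sum_sub_distrib]
  linarith

end Entropy

/-! ### The Chernoff exponent -/

section Exponent

variable {Λ : Type*} [Fintype Λ]

theorem rpow_one_sub_mul_rpow {a b : ℝ} (ha : 0 < a) (hb : 0 < b) (t : ℝ) :
    a ^ (1 - t) * b ^ t = a * Real.exp (t * (Real.log b - Real.log a)) := by
  rw [mul_sub, Real.exp_sub, Real.rpow_sub ha, Real.rpow_one, Real.rpow_def_of_pos ha,
    Real.rpow_def_of_pos hb, mul_comm (Real.log a), mul_comm (Real.log b), div_mul_eq_mul_div,
    mul_div_assoc]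

theorem chernoffSum_eq_sum_mul_exp {q a M : Λ → ℝ} (hq : ∀ x, 0 ≤ q x) (ha : ∀ x, 0 ≤ a x)
    (hM : ∀ x, 0 < q x * a x → 0 < M x) {t : ℝ} (ht : t < 1) :
    chernoffSum q a M t =
      ∑ x, q x * a x * Real.exp (t * (Real.log (M x) - Real.log (a x))) := by
  refine Finset.sum_congr rfl fun x _ => ?_
  rcases (hq x).eq_or_lt with h0 | h0
  · simp only [← h0, zero_mul]
  rcases (ha x).eq_or_lt with h1 | h1
  · simp only [← h1, Real.zero_rpow (sub_pos.2 ht).ne', zero_mul, mul_zero]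
  · rw [rpow_one_sub_mul_rpow h1 (hM x (mul_pos h0 h1)), mul_assoc]

theorem exists_sum_mul_exp_lt_one {w L : Λ → ℝ} (hw : ∑ x, w x = 1) (h : ∑ x, w x * L x < 0) :
    ∃ t, 0 < t ∧ t < 1 ∧ ∑ x, w x * Real.exp (t * L x) < 1 := by
  have hderiv : HasDerivAt (fun t : ℝ => ∑ x, w x * Real.exp (t * L x)) (∑ x, w x * L x) 0 :=
    HasDerivAt.fun_sum fun x _ => by
      simpa using (((hasDerivAt_id (0 : ℝ)).mul_const (L x)).exp).const_mul (w x)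
  obtain ⟨t, hslope, ht0, ht1⟩ := ((hderiv.tendsto_slope_zero_right.eventually_lt_const h).and
    (Ioo_mem_nhdsGT (zero_lt_one' ℝ))).exists
  refine ⟨t, ht0, ht1, ?_⟩
  simp only [zero_add, zero_mul, Real.exp_zero, mul_one, hw, smul_eq_mul] at hslope
  exact sub_neg.1 (neg_of_mul_neg_right hslope (inv_nonneg.2 ht0.le))

variable {σ ρ β ξ κ γ ζ : Type*} [Fintype σ] [Fintype ρ] [Fintype β] [Fintype ξ] [Fintype κ]
  [Fintype γ] [Fintype ζ] [DecidableEq β] [DecidableEq ξ] [DecidableEq κ] [DecidableEq γ]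
  [DecidableEq ζ]

theorem sum_mul_eq_condEntropyOf_add {w L : Λ → ℝ} (hw : ∀ x, 0 ≤ w x) {p : σ → ℝ} {ν D : ρ → ℝ}
    {πs : Λ → σ} {πc : Λ → ρ} (hs : IsPushforward w πs p) (hc : IsPushforward w πc ν) (X : σ → ζ)
    (V : σ → κ) (hXV : Function.Injective fun s => (X s, V s))
    (hL : ∀ x, 0 < w x →
      L x = Real.log (pmfMap p V (V (πs x))) - Real.log (p (πs x)) + D (πc x)) :
    ∑ x, w x * L x = condEntropyOf p X V + ∑ r, ν r * D r := by
  simp only [← hc D, ← sum_mul_log_pmfMap_sub, pmfMap_of_injective p hXV]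
  rw [← hs fun s => Real.log (pmfMap p V (V s)) - Real.log (p s), ← Finset.sum_add_distrib]
  refine Finset.sum_congr rfl fun x _ => ?_
  rcases (hw x).eq_or_lt with h0 | h0
  · simp only [← h0, zero_mul, add_zero]
  · rw [hL x h0, mul_add]

-- At `t = 0` the Chernoff functional equals `1` and, by Gibbs' inequality, its derivative is at
-- most `H(X | V) - I(U ; Y | G)`.
theorem exists_chernoffSum_lt_one {q a M : Λ → ℝ} (hq : ∀ x, 0 ≤ q x) (ha : ∀ x, 0 ≤ a x)
    {p : σ → ℝ} (hp : IsPmf p) {τ : ρ → ℝ} (hτ : IsPmf τ) {K : ρ → β → ℝ} (hK : ∀ r, IsPmf (K r))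
    {πs : Λ → σ} {πc : Λ → ρ × β} (hs : IsPushforward (fun x => q x * a x) πs p)
    (hc : IsPushforward (fun x => q x * a x) πc fun r => τ r.1 * K r.1 r.2)
    (hpK : ∀ x, a x = p (πs x) * K (πc x).1 (πc x).2) (X : σ → ζ) (V : σ → κ)
    (hXV : Function.Injective fun s => (X s, V s)) (U : ρ → ξ) (G : ρ → γ)
    {A : γ → β → ℝ} {B : γ → ℝ} (hA : ∀ z y, 0 ≤ A z y) (hAB : ∀ z, ∑ y, A z y = B z)
    (hApos : ∀ r y, 0 < τ r * K r y → 0 < A (G r) y)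
    (hM : ∀ x, M x * B (G (πc x).1) = pmfMap p V (V (πs x)) * A (G (πc x).1) (πc x).2)
    (h : condEntropyOf p X V < condMutualInfoOf (fun r : ρ × β => τ r.1 * K r.1 r.2)
      (fun r => U r.1) (fun r => r.2) fun r => G r.1) :
    ∃ t, 0 < t ∧ t < 1 ∧ chernoffSum q a M t < 1 := by
  have hqa : ∀ x, 0 ≤ q x * a x := fun x => mul_nonneg (hq x) (ha x)
  have hB : ∀ r y, 0 < τ r * K r y → 0 < B (G r) := fun r y hr =>
    (hApos r y hr).trans_le (hAB (G r) ▸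
      Finset.single_le_sum (fun y _ => hA (G r) y) (Finset.mem_univ y))
  have hMpos : ∀ x, 0 < q x * a x → 0 < M x := fun x hx => by
    have hr := hc.pos hqa hx
    exact pos_of_mul_pos_left (hM x ▸ mul_pos (pmfMap_pos hp.1 V (hs.pos hqa hx)) (hApos _ _ hr))
      (hB _ _ hr).le
  have hlog : ∑ x, q x * a x * (Real.log (M x) - Real.log (a x)) =
      condEntropyOf p X V + ∑ r : ρ × β, τ r.1 * K r.1 r.2 *
        (Real.log (A (G r.1) r.2 / B (G r.1)) - Real.log (K r.1 r.2)) := by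
    refine sum_mul_eq_condEntropyOf_add hqa hs hc X V hXV
      (D := fun r => Real.log (A (G r.1) r.2 / B (G r.1)) - Real.log (K r.1 r.2)) fun x hx => ?_
    have hr := hc.pos hqa hx
    have hp' := hs.pos hqa hx
    have hsum := congrArg Real.log (hM x)
    rw [Real.log_mul (hMpos x hx).ne' (hB _ _ hr).ne',
      Real.log_mul (pmfMap_pos hp.1 V hp').ne' (hApos _ _ hr).ne'] at hsum
    rw [hpK, Real.log_mul hp'.ne' (pos_of_mul_pos_right hr (hτ.1 _)).ne',
      Real.log_div (hApos _ _ hr).ne' (hB _ _ hr).ne']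
    linarith
  have hGibbs := sum_mul_log_div_le_neg_condMutualInfoOf hτ hK U G
    (N := fun z y => A z y / B z)
    (fun z y => div_nonneg (hA z y) (hAB z ▸ Finset.sum_nonneg fun y _ => hA z y))
    (fun z => by rw [← Finset.sum_div, hAB]; exact div_self_le_one _)
    fun r y hr => div_pos (hApos r y hr) (hB r y hr)
  obtain ⟨t, ht0, ht1, ht⟩ := exists_sum_mul_exp_lt_one (hs.sum_eq.trans hp.2)
    (hlog.trans_lt (by linarith) : ∑ x, q x * a x * (Real.log (M x) - Real.log (a x)) < 0)
  exact ⟨t, ht0, ht1, (chernoffSum_eq_sum_mul_exp hq ha hMpos ht1).trans_lt ht⟩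

end Exponent

/-! ### Single-letter conditions for the two decoders -/

section SumMul

variable {ι : Type*} [Fintype ι] {p f : ι → ℝ}

theorem sum_mul_nonneg (hp : ∀ i, 0 ≤ p i) (hf : ∀ i, 0 ≤ f i) : 0 ≤ ∑ i, p i * f i :=
  Finset.sum_nonneg fun i _ => mul_nonneg (hp i) (hf i)

theorem sum_mul_pos (hp : ∀ i, 0 ≤ p i) (hf : ∀ i, 0 ≤ f i) {i : ι} (hpi : 0 < p i)
    (hfi : 0 < f i) : 0 < ∑ i, p i * f i :=
  Finset.sum_pos' (fun i _ => mul_nonneg (hp i) (hf i)) ⟨i, Finset.mem_univ i, mul_pos hpi hfi⟩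

end SumMul

section PmfMapSnd

variable {α β γ : Type*} [Fintype α] [Fintype β] [Fintype γ] [DecidableEq β] [DecidableEq γ]

theorem pmfMap_snd (p : α × γ → ℝ) (c : γ) : pmfMap p Prod.snd c = ∑ a, p (a, c) := by
  simp [pmfMap, Fintype.sum_prod_type]

theorem pmfMap_fst_snd_prodMk_snd (p : (α × β) × γ → ℝ) (z : β × γ) :
    pmfMap p (fun x => (x.1.2, x.2)) z = ∑ a, p ((a, z.1), z.2) := by
  simp [pmfMap, Fintype.sum_prod_type, Prod.ext_iff, ite_and]

end PmfMapSnd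

namespace Kernels

variable {S1 S2 W W3 V1 V2 X1 X2 X3 Y Y3 : Type*}

section Laws

variable (D : Kernels S1 S2 W W3 V1 V2 X1 X2 X3 Y Y3)

/-- The joint law of the sources and the side information of the relay. -/
def relaySource (x : (S1 × S2) × W3) : ℝ := D.pR x.1 x.2

/-- The joint law of the sources and the side information of the destination. -/
def destSource (x : (S1 × S2) × W) : ℝ := D.pD x.1 x.2

/-- The joint law of the sources, the side information of the relay and the channel inputs. -/
def relayInput (r : (S1 × S2) × W3 × Inputs V1 V2 X1 X2 X3) : ℝ :=
  D.pR r.1 r.2.1 * D.law r.1 r.2.2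

/-- The joint law of the sources and the channel inputs. -/
def destInput (r : (S1 × S2) × Inputs V1 V2 X1 X2 X3) : ℝ := D.pS r.1 * D.law r.1 r.2

/-- The joint law of the inputs of `relayInput` and of the channel output at the relay. -/
def relayJoint (x : ((S1 × S2) × W3 × Inputs V1 V2 X1 X2 X3) × Y3) : ℝ :=
  D.relayInput x.1 * D.QR x.1.2.2.2.2 x.2

/-- The joint law of the inputs of `destInput` and of the channel output at the destination. -/
def destJoint (x : ((S1 × S2) × Inputs V1 V2 X1 X2 X3) × Y) : ℝ :=
  D.destInput x.1 * D.QD x.1.2.2.2 x.2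

end Laws

variable {D : Kernels S1 S2 W W3 V1 V2 X1 X2 X3 Y Y3}
  [Fintype S1] [Fintype S2] [Fintype W3] [Fintype V1] [Fintype V2]
  [Fintype X1] [Fintype X2] [Fintype X3] [Fintype Y3]

theorem isPushforward_relayJoint :
    IsPushforward (fun x => D.relayWeight x * D.relayScore x)
      (fun x => ((x.1, x.2.1, x.2.2.2), x.2.2.1)) D.relayJoint := fun φ => by
  refine Fintype.sum_equiv (⟨fun x => ((x.1, x.2.1, x.2.2.2), x.2.2.1),
    fun r => (r.1.1, r.1.2.1, r.2, r.1.2.2), fun _ => rfl, fun _ => rfl⟩ :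
      RelayLetter S1 S2 W3 V1 V2 X1 X2 X3 Y3 ≃
        ((S1 × S2) × W3 × Inputs V1 V2 X1 X2 X3) × Y3) _ _ fun x => ?_
  simp only [relayWeight, relayScore, relayJoint, relayInput, Equiv.coe_fn_mk]
  ring

variable [Fintype W] [Fintype Y]

namespace Valid


theorem isPmf_relaySource (hD : D.Valid) : IsPmf D.relaySource :=
  ⟨fun _ => hD.pR_nonneg _ _, by
    simp only [relaySource, Fintype.sum_prod_type (α₁ := S1 × S2), hD.pR_sum, hD.pS.2]⟩

theorem isPmf_destSource (hD : D.Valid) : IsPmf D.destSource :=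
  ⟨fun _ => hD.pD_nonneg _ _, by
    simp only [destSource, Fintype.sum_prod_type (α₁ := S1 × S2), hD.pD_sum, hD.pS.2]⟩

theorem isPmf_relayInput (hD : D.Valid) : IsPmf D.relayInput :=
  ⟨fun _ => mul_nonneg (hD.pR_nonneg _ _) (hD.law_nonneg _ _), by
    simp only [relayInput]
    rw [Fintype.sum_prod_type]
    simp only [Fintype.sum_prod_type (α₁ := W3), ← Finset.mul_sum, hD.sum_law, mul_one, hD.pR_sum,
      hD.pS.2]⟩

theorem isPmf_destInput (hD : D.Valid) : IsPmf D.destInput :=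
  ⟨fun _ => mul_nonneg (hD.pS.1 _) (hD.law_nonneg _ _), by
    simp only [destInput]
    rw [Fintype.sum_prod_type]
    simp only [← Finset.mul_sum, hD.sum_law, mul_one, hD.pS.2]⟩

theorem isPushforward_relaySource (hD : D.Valid) :
    IsPushforward (fun x => D.relayWeight x * D.relayScore x) (fun x => (x.1, x.2.1))
      D.relaySource := fun φ => by
  simp only [relayWeight, relayScore, relaySource]
  rw [Fintype.sum_prod_type, Fintype.sum_prod_type (α₁ := S1 × S2)]
  refine Finset.sum_congr rfl fun c _ => ?_
  rw [Fintype.sum_prod_type]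
  refine Finset.sum_congr rfl fun w _ => ?_
  rw [Fintype.sum_prod_type_right]
  have hfactor : ∀ (z : Inputs V1 V2 X1 X2 X3) (y : Y3),
      D.law c z * (D.pR c w * D.QR z.2.2 y) * φ (c, w) =
        (D.pR c w * φ (c, w)) * (D.law c z * D.QR z.2.2 y) := fun _ _ => by ring
  simp only [hfactor, ← Finset.mul_sum, (hD.QR _).2, mul_one, hD.sum_law]

theorem isPushforward_destSource (hD : D.Valid) :
    IsPushforward (fun x => D.destWeight x * D.destScore x) (fun x => (x.2.1, x.2.2.1))
      D.destSource := fun φ => by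
  simp only [destWeight, destScore, destSource]
  rw [Fintype.sum_prod_type_right, Fintype.sum_prod_type (α₁ := S1 × S2),
    Fintype.sum_prod_type (α₁ := S1 × S2)]
  refine Finset.sum_congr rfl fun s _ => ?_
  rw [Fintype.sum_prod_type]
  refine Finset.sum_congr rfl fun w _ => ?_
  rw [Fintype.sum_prod_type_right, Finset.sum_congr rfl fun _ _ => Finset.sum_comm,
    Finset.sum_comm]
  have hfactor : ∀ c (z : Inputs V1 V2 X1 X2 X3) (y : Y),
      D.pS c * D.law c z * (D.pD s w * D.QD z.2.2 y) * φ (s, w) =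
        (D.pD s w * φ (s, w)) * (D.pS c * (D.law c z * D.QD z.2.2 y)) := fun _ _ _ => by ring
  simp only [hfactor, ← Finset.mul_sum, (hD.QD _).2, mul_one, hD.sum_law, hD.pS.2]

theorem isPushforward_destJoint (hD : D.Valid) :
    IsPushforward (fun x => D.destWeight x * D.destScore x)
      (fun x => ((x.1, x.2.2.2.2), x.2.2.2.1)) D.destJoint := fun φ => by
  simp only [destWeight, destScore, destJoint, destInput]
  rw [Fintype.sum_prod_type, Fintype.sum_prod_type (γ := ℝ) (α₁ := (S1 × S2) × _),
    Fintype.sum_prod_type (α₁ := S1 × S2) (α₂ := Inputs V1 V2 X1 X2 X3)]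
  refine Finset.sum_congr rfl fun c _ => ?_
  simp only [Fintype.sum_prod_type (α₁ := W), Fintype.sum_prod_type (α₁ := S1 × S2),
    Fintype.sum_prod_type_right (α₁ := Y)]
  have hfactor : ∀ s w y (z : Inputs V1 V2 X1 X2 X3),
      D.pS c * D.law c z * (D.pD s w * D.QD z.2.2 y) * φ ((c, z), y) =
        D.pD s w * (D.pS c * D.law c z * D.QD z.2.2 y * φ ((c, z), y)) := fun _ _ _ _ => by ring
  simp only [hfactor, ← Finset.mul_sum, ← Finset.sum_mul, hD.pD_sum, hD.pS.2, one_mul]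

theorem pos_of_law_pos (hD : D.Valid) {c : S1 × S2} {z : Inputs V1 V2 X1 X2 X3}
    (h : 0 < D.law c z) :
    0 < D.pV1 z.1 ∧ 0 < D.pX1 c.1 z.1 z.2.2.1 ∧ 0 < D.pX2 c.2 z.2.1 z.2.2.2.1 ∧
      0 < D.pX3 z.1 z.2.1 z.2.2.2.2 := by
  have hne := h.ne'
  simp only [law, mul_ne_zero_iff] at hne
  obtain ⟨hV1, -, hX1, hX2, hX3⟩ := hne
  exact ⟨(hD.pV1.1 _).lt_of_ne' hV1, ((hD.pX1 _ _).1 _).lt_of_ne' hX1,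
    ((hD.pX2 _ _).1 _).lt_of_ne' hX2, ((hD.pX3 _ _).1 _).lt_of_ne' hX3⟩

theorem pos_of_relayJoint_pos (hD : D.Valid) {x : ((S1 × S2) × W3 × Inputs V1 V2 X1 X2 X3) × Y3}
    (h : 0 < D.relayJoint x) :
    0 < D.pR x.1.1 x.1.2.1 ∧ 0 < D.law x.1.1 x.1.2.2 ∧ 0 < D.QR x.1.2.2.2.2 x.2 :=
  have hInput := pos_of_mul_pos_left h ((hD.QR _).1 _)
  ⟨pos_of_mul_pos_left hInput (hD.law_nonneg _ _),
    pos_of_mul_pos_right hInput (hD.pR_nonneg _ _),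
    pos_of_mul_pos_right h (hD.isPmf_relayInput.1 _)⟩

theorem pos_of_destJoint_pos (hD : D.Valid) {x : ((S1 × S2) × Inputs V1 V2 X1 X2 X3) × Y}
    (h : 0 < D.destJoint x) : 0 < D.law x.1.1 x.1.2 ∧ 0 < D.QD x.1.2.2.2 x.2 :=
  ⟨pos_of_mul_pos_right (pos_of_mul_pos_left h ((hD.QD _).1 _)) (hD.pS.1 _),
    pos_of_mul_pos_right h (hD.isPmf_destInput.1 _)⟩

section RelayExponents

variable [DecidableEq S1] [DecidableEq S2] [DecidableEq W3] [DecidableEq V1] [DecidableEq X1]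
  [DecidableEq X2] [DecidableEq X3] [DecidableEq Y3]

theorem exists_relayChernoff_fst_lt_one (hD : D.Valid)
    (h : condEntropyOf D.relaySource (fun x => x.1.1) (fun x => (x.1.2, x.2)) <
      condMutualInfoOf D.relayJoint (fun x => x.1.2.2.2.2.1) (fun x => x.2)
        fun x => (x.1.1.2, x.1.2.2.2.2.2.1, x.1.2.2.1, x.1.2.2.2.2.2.2, x.1.2.1)) :
    ∃ t, 0 < t ∧ t < 1 ∧ D.relayChernoff .fst t < 1 := by
  have hlik : ∀ (s1 : S1) (z : S2 × X2 × V1 × X3 × W3) (y : Y3),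
      0 ≤ ∑ x1, D.pX1 s1 z.2.2.1 x1 * D.QR (x1, z.2.1, z.2.2.2.1) y := fun _ _ _ =>
    sum_mul_nonneg (hD.pX1 _ _).1 fun _ => (hD.QR _).1 _
  refine exists_chernoffSum_lt_one hD.relayWeight_nonneg hD.relayScore_nonneg
    hD.isPmf_relaySource hD.isPmf_relayInput (K := fun r => D.QR r.2.2.2.2) (fun r => hD.QR _)
    hD.isPushforward_relaySource isPushforward_relayJoint (fun x => rfl) (fun x => x.1.1)
    (fun x => (x.1.2, x.2)) (fun x y hxy => ?_) (fun r => r.2.2.2.2.1)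
    (fun r => (r.1.2, r.2.2.2.2.2.1, r.2.2.1, r.2.2.2.2.2.2, r.2.1))
    (A := fun z y => ∑ s1, D.pR (s1, z.1) z.2.2.2.2 *
      ∑ x1, D.pX1 s1 z.2.2.1 x1 * D.QR (x1, z.2.1, z.2.2.2.1) y)
    (B := fun z => ∑ s1, D.pR (s1, z.1) z.2.2.2.2)
    (fun z y => sum_mul_nonneg (fun _ => hD.pR_nonneg _ _) fun s1 => hlik s1 z y)
    (fun z => ?_) (fun r y hr => ?_) (fun x => ?_) h
  · simp only [Prod.mk.injEq] at hxy
    exact Prod.ext (Prod.ext hxy.1 hxy.2.1) hxy.2.2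
  · simp only [Finset.sum_comm (s := (Finset.univ : Finset Y3)), ← Finset.mul_sum, (hD.QR _).2,
      (hD.pX1 _ _).2, mul_one]
  · obtain ⟨hR, hlaw, hQR⟩ := hD.pos_of_relayJoint_pos (x := (r, y)) hr
    exact sum_mul_pos (fun _ => hD.pR_nonneg _ _) (fun s1 => hlik s1 _ y) hR <|
      sum_mul_pos (hD.pX1 _ _).1 (fun _ => (hD.QR _).1 _) (hD.pos_of_law_pos hlaw).2.1 hQR
  · rw [pmfMap_fst_snd_prodMk_snd, mul_comm]
    rfl

theorem exists_relayChernoff_both_lt_one (hD : D.Valid) [DecidableEq V2]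
    (h : condEntropyOf D.relaySource (fun x => x.1) (fun x => x.2) <
      condMutualInfoOf D.relayJoint (fun x => (x.1.2.2.2.2.1, x.1.2.2.2.2.2.1)) (fun x => x.2)
        fun x => (x.1.2.2.1, x.1.2.2.2.1, x.1.2.2.2.2.2.2, x.1.2.1)) :
    ∃ t, 0 < t ∧ t < 1 ∧ D.relayChernoff .both t < 1 := by
  have hlikX2 : ∀ (s2 : S2) (x1 : X1) (z : V1 × V2 × X3 × W3) (y : Y3),
      0 ≤ ∑ x2, D.pX2 s2 z.2.1 x2 * D.QR (x1, x2, z.2.2.1) y := fun _ _ _ _ =>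
    sum_mul_nonneg (hD.pX2 _ _).1 fun _ => (hD.QR _).1 _
  have hlik : ∀ (s : S1 × S2) (z : V1 × V2 × X3 × W3) (y : Y3),
      0 ≤ ∑ x1, D.pX1 s.1 z.1 x1 * ∑ x2, D.pX2 s.2 z.2.1 x2 * D.QR (x1, x2, z.2.2.1) y :=
    fun s z y => sum_mul_nonneg (hD.pX1 _ _).1 fun x1 => hlikX2 s.2 x1 z y
  refine exists_chernoffSum_lt_one hD.relayWeight_nonneg hD.relayScore_nonneg
    hD.isPmf_relaySource hD.isPmf_relayInput (K := fun r => D.QR r.2.2.2.2) (fun r => hD.QR _)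
    hD.isPushforward_relaySource isPushforward_relayJoint (fun x => rfl) Prod.fst Prod.snd
    Function.injective_id (fun r => (r.2.2.2.2.1, r.2.2.2.2.2.1))
    (fun r => (r.2.2.1, r.2.2.2.1, r.2.2.2.2.2.2, r.2.1))
    (A := fun z y => ∑ s, D.pR s z.2.2.2 *
      ∑ x1, D.pX1 s.1 z.1 x1 * ∑ x2, D.pX2 s.2 z.2.1 x2 * D.QR (x1, x2, z.2.2.1) y)
    (B := fun z => ∑ s, D.pR s z.2.2.2)
    (fun z y => sum_mul_nonneg (fun _ => hD.pR_nonneg _ _) fun s => hlik s z y)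
    (fun z => ?_) (fun r y hr => ?_) (fun x => ?_) h
  · simp only [Finset.sum_comm (s := (Finset.univ : Finset Y3)), ← Finset.mul_sum, (hD.QR _).2,
      (hD.pX1 _ _).2, (hD.pX2 _ _).2, mul_one]
  · obtain ⟨hR, hlaw, hQR⟩ := hD.pos_of_relayJoint_pos (x := (r, y)) hr
    obtain ⟨-, hX1, hX2, -⟩ := hD.pos_of_law_pos hlaw
    exact sum_mul_pos (fun _ => hD.pR_nonneg _ _) (fun s => hlik s _ y) hR <|
      sum_mul_pos (hD.pX1 _ _).1 (fun x1 => hlikX2 r.1.2 x1 _ y) hX1 <|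
      sum_mul_pos (hD.pX2 _ _).1 (fun _ => (hD.QR _).1 _) hX2 hQR
  · rw [pmfMap_snd, mul_comm]
    rfl

end RelayExponents

section DestExponents

variable [DecidableEq S1] [DecidableEq S2] [DecidableEq W] [DecidableEq X1] [DecidableEq X2]
  [DecidableEq X3] [DecidableEq Y]

theorem exists_destChernoff_fst_lt_one (hD : D.Valid) [DecidableEq V2]
    (h : condEntropyOf D.destSource (fun x => x.1.1) (fun x => (x.1.2, x.2)) <
      condMutualInfoOf D.destJoint (fun x => (x.1.2.2.2.1, x.1.2.2.2.2.2)) (fun x => x.2)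
        fun x => (x.1.1.1, x.1.2.2.2.2.1, x.1.2.2.1)) :
    ∃ t, 0 < t ∧ t < 1 ∧ D.destChernoff .fst t < 1 := by
  have hlikX3 : ∀ (v1 : V1) (x1 : X1) (z : S1 × X2 × V2) (y : Y),
      0 ≤ ∑ x3, D.pX3 v1 z.2.2 x3 * D.QD (x1, z.2.1, x3) y := fun _ _ _ _ =>
    sum_mul_nonneg (hD.pX3 _ _).1 fun _ => (hD.QD _).1 _
  have hlik : ∀ (v1 : V1) (z : S1 × X2 × V2) (y : Y),
      0 ≤ ∑ x1, D.pX1 z.1 v1 x1 * ∑ x3, D.pX3 v1 z.2.2 x3 * D.QD (x1, z.2.1, x3) y :=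
    fun v1 z y => sum_mul_nonneg (hD.pX1 _ _).1 fun x1 => hlikX3 v1 x1 z y
  refine exists_chernoffSum_lt_one hD.destWeight_nonneg hD.destScore_nonneg
    hD.isPmf_destSource hD.isPmf_destInput (K := fun r => D.QD r.2.2.2) (fun r => hD.QD _)
    hD.isPushforward_destSource hD.isPushforward_destJoint (fun x => rfl) (fun x => x.1.1)
    (fun x => (x.1.2, x.2)) (fun x y hxy => ?_) (fun r => (r.2.2.2.1, r.2.2.2.2.2))
    (fun r => (r.1.1, r.2.2.2.2.1, r.2.2.1))
    (A := fun z y => ∑ v1, D.pV1 v1 *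
      ∑ x1, D.pX1 z.1 v1 x1 * ∑ x3, D.pX3 v1 z.2.2 x3 * D.QD (x1, z.2.1, x3) y)
    (B := fun _ => 1) (fun z y => sum_mul_nonneg hD.pV1.1 fun v1 => hlik v1 z y)
    (fun z => ?_) (fun r y hr => ?_) (fun x => ?_) h
  · simp only [Prod.mk.injEq] at hxy
    exact Prod.ext (Prod.ext hxy.1 hxy.2.1) hxy.2.2
  · simp only [Finset.sum_comm (s := (Finset.univ : Finset Y)), ← Finset.mul_sum, (hD.QD _).2,
      (hD.pX1 _ _).2, (hD.pX3 _ _).2, hD.pV1.2, mul_one]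
  · obtain ⟨hlaw, hQD⟩ := hD.pos_of_destJoint_pos (x := (r, y)) hr
    obtain ⟨hV1, hX1, -, hX3⟩ := hD.pos_of_law_pos hlaw
    exact sum_mul_pos hD.pV1.1 (fun v1 => hlik v1 _ y) hV1 <|
      sum_mul_pos (hD.pX1 _ _).1 (fun x1 => hlikX3 r.2.1 x1 _ y) hX1 <|
      sum_mul_pos (hD.pX3 _ _).1 (fun _ => (hD.QD _).1 _) hX3 hQD
  · rw [pmfMap_fst_snd_prodMk_snd, mul_one]
    rfl

theorem exists_destChernoff_both_lt_one (hD : D.Valid)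
    (h : condEntropyOf D.destSource (fun x => x.1) (fun x => x.2) <
      condMutualInfoOf D.destJoint (fun x => x.1.2.2.2) (fun x => x.2) fun x => x.1.1) :
    ∃ t, 0 < t ∧ t < 1 ∧ D.destChernoff .both t < 1 := by
  refine exists_chernoffSum_lt_one hD.destWeight_nonneg hD.destScore_nonneg
    hD.isPmf_destSource hD.isPmf_destInput (K := fun r => D.QD r.2.2.2) (fun r => hD.QD _)
    hD.isPushforward_destSource hD.isPushforward_destJoint (fun x => rfl) Prod.fst Prod.snd
    Function.injective_id (fun r => r.2.2.2) Prod.fst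
    (A := fun c y => ∑ z, D.law c z * D.QD z.2.2 y) (B := fun _ => 1)
    (fun c y => sum_mul_nonneg (hD.law_nonneg c) fun _ => (hD.QD _).1 _)
    (fun c => ?_) (fun r y hr => ?_) (fun x => ?_) h
  · rw [Finset.sum_comm]
    simp only [← Finset.mul_sum, (hD.QD _).2, mul_one, hD.sum_law]
  · obtain ⟨hlaw, hQD⟩ := hD.pos_of_destJoint_pos (x := (r, y)) hr
    exact sum_mul_pos (hD.law_nonneg _) (fun _ => (hD.QD _).1 _) hlaw hQD
  · rw [pmfMap_snd, mul_one]
    rfl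

end DestExponents

end Valid

end Kernels

/-! ### Exchanging the roles of the two sources -/

namespace Kernels

section Swap

variable {S1 S2 W W3 V1 V2 X1 X2 X3 Y Y3 : Type*}

/-- The data with the roles of the two sources exchanged. -/
def swap (D : Kernels S1 S2 W W3 V1 V2 X1 X2 X3 Y Y3) :
    Kernels S2 S1 W W3 V2 V1 X2 X1 X3 Y Y3 where
  pS c := D.pS c.swap
  pR c := D.pR c.swap
  pD c := D.pD c.swap
  pV1 := D.pV2
  pV2 := D.pV1
  pX1 := D.pX2
  pX2 := D.pX1
  pX3 v2 v1 := D.pX3 v1 v2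
  QR x := D.QR (x.2.1, x.1, x.2.2)
  QD x := D.QD (x.2.1, x.1, x.2.2)

/-- The letters of one channel block with the roles of the two sources exchanged. -/
def inputsSwap (V1 V2 X1 X2 X3 : Type*) : Inputs V1 V2 X1 X2 X3 ≃ Inputs V2 V1 X2 X1 X3 :=
  ⟨fun z => (z.2.1, z.1, z.2.2.2.1, z.2.2.1, z.2.2.2.2),
    fun z => (z.2.1, z.1, z.2.2.2.1, z.2.2.1, z.2.2.2.2), fun _ => rfl, fun _ => rfl⟩

variable {D : Kernels S1 S2 W W3 V1 V2 X1 X2 X3 Y Y3}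

theorem law_swap (c : S1 × S2) (z : Inputs V1 V2 X1 X2 X3) :
    D.swap.law c.swap (inputsSwap V1 V2 X1 X2 X3 z) = D.law c z := by
  simp only [law, swap, inputsSwap, Equiv.coe_fn_mk, Prod.fst_swap, Prod.snd_swap]
  ring

variable [Fintype S1] [Fintype S2]

theorem isPushforward_swap_relaySource [Fintype W3] :
    IsPushforward D.relaySource (fun x => (x.1.swap, x.2)) D.swap.relaySource := fun _ =>
  Fintype.sum_equiv ((Equiv.prodComm S1 S2).prodCongr (Equiv.refl W3)) _ _ fun _ => rfl

theorem isPushforward_swap_destSource [Fintype W] :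
    IsPushforward D.destSource (fun x => (x.1.swap, x.2)) D.swap.destSource := fun _ =>
  Fintype.sum_equiv ((Equiv.prodComm S1 S2).prodCongr (Equiv.refl W)) _ _ fun _ => rfl

variable [Fintype V1] [Fintype V2] [Fintype X1] [Fintype X2] [Fintype X3]

section Relay

variable [Fintype W3] [Fintype Y3]

theorem relayChernoff_snd (t : ℝ) : D.relayChernoff .snd t = D.swap.relayChernoff .fst t := by
  let e : RelayLetter S1 S2 W3 V1 V2 X1 X2 X3 Y3 ≃ RelayLetter S2 S1 W3 V2 V1 X2 X1 X3 Y3 :=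
    (Equiv.prodComm S1 S2).prodCongr ((Equiv.refl W3).prodCongr
      ((Equiv.refl Y3).prodCongr (inputsSwap V1 V2 X1 X2 X3)))
  have hweight : D.relayWeight = D.swap.relayWeight ∘ e := funext fun x => (law_swap _ _).symm
  rw [relayChernoff, relayChernoff, ← chernoffSum_comp_equiv e, hweight]
  rfl

theorem isPushforward_swap_relayJoint :
    IsPushforward D.relayJoint (fun x => ((x.1.1.swap, x.1.2.1, inputsSwap _ _ _ _ _ x.1.2.2), x.2))
      D.swap.relayJoint := fun _ =>
  Fintype.sum_equiv (((Equiv.prodComm S1 S2).prodCongr ((Equiv.refl W3).prodCongr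
    (inputsSwap V1 V2 X1 X2 X3))).prodCongr (Equiv.refl Y3)) _ _ fun x => by
      rw [relayJoint, relayInput, ← law_swap]
      rfl

end Relay

section Dest

variable [Fintype Y]

theorem isPushforward_swap_destJoint :
    IsPushforward D.destJoint (fun x => ((x.1.1.swap, inputsSwap _ _ _ _ _ x.1.2), x.2))
      D.swap.destJoint := fun _ =>
  Fintype.sum_equiv (((Equiv.prodComm S1 S2).prodCongr
    (inputsSwap V1 V2 X1 X2 X3)).prodCongr (Equiv.refl Y)) _ _ fun x => by
      rw [destJoint, destInput, ← law_swap]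
      rfl

variable [Fintype W]

theorem destChernoff_snd (t : ℝ) : D.destChernoff .snd t = D.swap.destChernoff .fst t := by
  let e : DestLetter S1 S2 W V1 V2 X1 X2 X3 Y ≃ DestLetter S2 S1 W V2 V1 X2 X1 X3 Y :=
    (Equiv.prodComm S1 S2).prodCongr ((Equiv.prodComm S1 S2).prodCongr
      ((Equiv.refl W).prodCongr ((Equiv.refl Y).prodCongr (inputsSwap V1 V2 X1 X2 X3))))
  have hweight : D.destWeight = D.swap.destWeight ∘ e :=
    funext fun x => congrArg _ (law_swap _ _).symm
  rw [destChernoff, destChernoff, ← chernoffSum_comp_equiv e, hweight]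
  rfl

end Dest

namespace Valid

variable [Fintype W] [Fintype W3] [Fintype Y] [Fintype Y3]

theorem swap (hD : D.Valid) : D.swap.Valid where
  pS := ⟨fun _ => hD.pS.1 _, ((Equiv.prodComm S2 S1).sum_comp D.pS).trans hD.pS.2⟩
  pR_nonneg _ _ := hD.pR_nonneg _ _
  pR_sum _ := hD.pR_sum _
  pD_nonneg _ _ := hD.pD_nonneg _ _
  pD_sum _ := hD.pD_sum _
  pV1 := hD.pV2
  pV2 := hD.pV1
  pX1 := hD.pX2
  pX2 := hD.pX1
  pX3 _ _ := hD.pX3 _ _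
  QR _ := hD.QR _
  QD _ := hD.QD _

variable [DecidableEq S1] [DecidableEq S2] [DecidableEq X1] [DecidableEq X2] [DecidableEq X3]

theorem exists_relayChernoff_snd_lt_one (hD : D.Valid) [DecidableEq W3] [DecidableEq V2]
    [DecidableEq Y3]
    (h : condEntropyOf D.relaySource (fun x => x.1.2) (fun x => (x.1.1, x.2)) <
      condMutualInfoOf D.relayJoint (fun x => x.1.2.2.2.2.2.1) (fun x => x.2)
        fun x => (x.1.1.1, x.1.2.2.2.2.1, x.1.2.2.2.1, x.1.2.2.2.2.2.2, x.1.2.1)) :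
    ∃ t, 0 < t ∧ t < 1 ∧ D.relayChernoff .snd t < 1 := by
  simp only [relayChernoff_snd]
  refine hD.swap.exists_relayChernoff_fst_lt_one ?_
  rwa [← isPushforward_swap_relaySource.condEntropyOf_comp,
    ← isPushforward_swap_relayJoint.condMutualInfoOf_comp]

theorem exists_destChernoff_snd_lt_one (hD : D.Valid) [DecidableEq W] [DecidableEq V1]
    [DecidableEq Y]
    (h : condEntropyOf D.destSource (fun x => x.1.2) (fun x => (x.1.1, x.2)) <
      condMutualInfoOf D.destJoint (fun x => (x.1.2.2.2.2.1, x.1.2.2.2.2.2)) (fun x => x.2)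
        fun x => (x.1.1.2, x.1.2.2.2.1, x.1.2.1)) :
    ∃ t, 0 < t ∧ t < 1 ∧ D.destChernoff .snd t < 1 := by
  simp only [destChernoff_snd]
  refine hD.swap.exists_destChernoff_fst_lt_one ?_
  rwa [← isPushforward_swap_destSource.condEntropyOf_comp,
    ← isPushforward_swap_destJoint.condMutualInfoOf_comp]

end Valid

end Swap

/-! ### Single-letter data of a source pmf and a channel -/

section OfLaw

variable {S1 S2 W W3 V1 V2 X1 X2 X3 Y Y3 : Type*} [Fintype W] [Fintype W3] [Fintype Y]
  [Fintype Y3]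

/-- The single-letter data derived from a source pmf, a channel and the input distributions. -/
def ofLaw (p : S1 × S2 × W × W3 → ℝ)
    (Q : X1 × X2 × X3 → Y × Y3 → ℝ) (pV1 : V1 → ℝ) (pV2 : V2 → ℝ) (pX1 : S1 → V1 → X1 → ℝ)
    (pX2 : S2 → V2 → X2 → ℝ) (pX3 : V1 → V2 → X3 → ℝ) :
    Kernels S1 S2 W W3 V1 V2 X1 X2 X3 Y Y3 where
  pS c := ∑ w, ∑ w3, p (c.1, c.2, w, w3)
  pR c w3 := ∑ w, p (c.1, c.2, w, w3)
  pD c w := ∑ w3, p (c.1, c.2, w, w3)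
  pV1 := pV1
  pV2 := pV2
  pX1 := pX1
  pX2 := pX2
  pX3 := pX3
  QR x y3 := ∑ y, Q x (y, y3)
  QD x y := ∑ y3, Q x (y, y3)

variable [Fintype S1] [Fintype S2] {p : S1 × S2 × W × W3 → ℝ} {Q : X1 × X2 × X3 → Y × Y3 → ℝ}
  {pV1 : V1 → ℝ} {pV2 : V2 → ℝ} {pX1 : S1 → V1 → X1 → ℝ} {pX2 : S2 → V2 → X2 → ℝ}
  {pX3 : V1 → V2 → X3 → ℝ}

theorem isPushforward_ofLaw_relaySource :
    IsPushforward p (fun x => ((x.1, x.2.1), x.2.2.2))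
      (ofLaw p Q pV1 pV2 pX1 pX2 pX3).relaySource := fun φ => by
  simp only [Fintype.sum_prod_type, relaySource, ofLaw, Finset.sum_mul]
  exact Finset.sum_congr rfl fun _ _ => Finset.sum_congr rfl fun _ _ => Finset.sum_comm

theorem isPushforward_ofLaw_destSource :
    IsPushforward p (fun x => ((x.1, x.2.1), x.2.2.1))
      (ofLaw p Q pV1 pV2 pX1 pX2 pX3).destSource := fun φ => by
  simp only [Fintype.sum_prod_type, destSource, ofLaw, Finset.sum_mul]

variable [Fintype X1] [Fintype X2] [Fintype X3]

theorem valid_ofLaw [Fintype V1] [Fintype V2] (hp : IsPmf p) (hQ : ∀ x, IsPmf (Q x))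
    (hV1 : IsPmf pV1) (hV2 : IsPmf pV2) (hX1 : ∀ s v, IsPmf (pX1 s v))
    (hX2 : ∀ s v, IsPmf (pX2 s v)) (hX3 : ∀ v1 v2, IsPmf (pX3 v1 v2)) :
    (ofLaw p Q pV1 pV2 pX1 pX2 pX3).Valid where
  pS := ⟨fun _ => Finset.sum_nonneg fun _ _ => Finset.sum_nonneg fun _ _ => hp.1 _, by
    simpa only [ofLaw, Fintype.sum_prod_type] using hp.2⟩
  pR_nonneg _ _ := Finset.sum_nonneg fun _ _ => hp.1 _
  pR_sum _ := Finset.sum_comm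
  pD_nonneg _ _ := Finset.sum_nonneg fun _ _ => hp.1 _
  pD_sum _ := rfl
  pV1 := hV1
  pV2 := hV2
  pX1 := hX1
  pX2 := hX2
  pX3 := hX3
  QR x := ⟨fun _ => Finset.sum_nonneg fun _ _ => (hQ x).1 _,
    (Fintype.sum_prod_type_right _).symm.trans (hQ x).2⟩
  QD x := ⟨fun _ => Finset.sum_nonneg fun _ _ => (hQ x).1 _,
    (Fintype.sum_prod_type _).symm.trans (hQ x).2⟩

end OfLaw

section Thm1Joint

variable {S1 S2 W W3 X1 X2 X3 Y Y3 : Type*} [Fintype S1] [Fintype S2] [Fintype W] [Fintype W3]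
  [Fintype X1] [Fintype X2] [Fintype X3] [Fintype Y] [Fintype Y3] {p : S1 × S2 × W × W3 → ℝ}
  {Q : X1 × X2 × X3 → Y × Y3 → ℝ} {n1 n2 : ℕ} {pV1 : Fin n1 → ℝ} {pV2 : Fin n2 → ℝ}
  {pX1 : S1 → Fin n1 → X1 → ℝ} {pX2 : S2 → Fin n2 → X2 → ℝ} {pX3 : Fin n1 → Fin n2 → X3 → ℝ}

theorem isPushforward_thm1Joint_source (hD : (ofLaw p Q pV1 pV2 pX1 pX2 pX3).Valid)
    (hQ : ∀ x, IsPmf (Q x)) :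
    IsPushforward (thm1Joint n1 n2 p Q pV1 pV2 pX1 pX2 pX3)
      (fun ω => (ω.1, ω.2.1, ω.2.2.2.1, ω.2.2.1)) p := fun φ => by
  let e : S1 × S2 × W3 × W × Fin n1 × Fin n2 × X1 × X2 × X3 × Y3 × Y ≃
      (S1 × S2 × W × W3) × (Inputs (Fin n1) (Fin n2) X1 X2 X3 × (Y × Y3)) :=
    ⟨fun (s1, s2, w3, w, v1, v2, x1, x2, x3, y3, y) =>
        ((s1, s2, w, w3), ((v1, v2, x1, x2, x3), (y, y3))),
      fun ((s1, s2, w, w3), ((v1, v2, x1, x2, x3), (y, y3))) =>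
        (s1, s2, w3, w, v1, v2, x1, x2, x3, y3, y), fun _ => rfl, fun _ => rfl⟩
  rw [← e.symm.sum_comp, Fintype.sum_prod_type]
  refine Finset.sum_congr rfl fun x _ => ?_
  calc _ = ∑ z, ∑ y, p x * φ x * ((ofLaw p Q pV1 pV2 pX1 pX2 pX3).law (x.1, x.2.1) z *
        Q z.2.2 y) := by
        rw [Fintype.sum_prod_type]
        refine Finset.sum_congr rfl fun w _ => Finset.sum_congr rfl fun y _ => ?_
        simp only [e, thm1Joint, Equiv.coe_fn_symm_mk, law, ofLaw]
        ring
    _ = _ := by simp only [← Finset.mul_sum, (hQ _).2, mul_one, hD.sum_law]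

theorem isPushforward_thm1Joint_relaySource (hD : (ofLaw p Q pV1 pV2 pX1 pX2 pX3).Valid)
    (hQ : ∀ x, IsPmf (Q x)) :
    IsPushforward (thm1Joint n1 n2 p Q pV1 pV2 pX1 pX2 pX3)
      (fun ω => ((ω.1, ω.2.1), ω.2.2.1)) (ofLaw p Q pV1 pV2 pX1 pX2 pX3).relaySource :=
  (isPushforward_thm1Joint_source hD hQ).trans isPushforward_ofLaw_relaySource

theorem isPushforward_thm1Joint_destSource (hD : (ofLaw p Q pV1 pV2 pX1 pX2 pX3).Valid)
    (hQ : ∀ x, IsPmf (Q x)) :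
    IsPushforward (thm1Joint n1 n2 p Q pV1 pV2 pX1 pX2 pX3)
      (fun ω => ((ω.1, ω.2.1), ω.2.2.2.1)) (ofLaw p Q pV1 pV2 pX1 pX2 pX3).destSource :=
  (isPushforward_thm1Joint_source hD hQ).trans isPushforward_ofLaw_destSource

variable (p Q pV1 pV2 pX1 pX2 pX3)

theorem isPushforward_thm1Joint_relayJoint :
    IsPushforward (thm1Joint n1 n2 p Q pV1 pV2 pX1 pX2 pX3)
      (fun ω => (((ω.1, ω.2.1), ω.2.2.1, ω.2.2.2.2.1, ω.2.2.2.2.2.1, ω.2.2.2.2.2.2.1,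
        ω.2.2.2.2.2.2.2.1, ω.2.2.2.2.2.2.2.2.1), ω.2.2.2.2.2.2.2.2.2.1))
      (ofLaw p Q pV1 pV2 pX1 pX2 pX3).relayJoint := fun φ => by
  let e : S1 × S2 × W3 × W × Fin n1 × Fin n2 × X1 × X2 × X3 × Y3 × Y ≃
      (((S1 × S2) × W3 × Inputs (Fin n1) (Fin n2) X1 X2 X3) × Y3) × (W × Y) :=
    ⟨fun (s1, s2, w3, w, v1, v2, x1, x2, x3, y3, y) =>
        ((((s1, s2), w3, (v1, v2, x1, x2, x3)), y3), (w, y)),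
      fun ((((s1, s2), w3, (v1, v2, x1, x2, x3)), y3), (w, y)) =>
        (s1, s2, w3, w, v1, v2, x1, x2, x3, y3, y), fun _ => rfl, fun _ => rfl⟩
  rw [← e.symm.sum_comp, Fintype.sum_prod_type]
  refine Finset.sum_congr rfl fun x _ => ?_
  calc _ = ∑ w : W, ∑ y : Y, p (x.1.1.1, x.1.1.2, w, x.1.2.1) * (Q x.1.2.2.2.2 (y, x.2) *
        ((ofLaw p Q pV1 pV2 pX1 pX2 pX3).law x.1.1 x.1.2.2 * φ x)) := by
        rw [Fintype.sum_prod_type]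
        refine Finset.sum_congr rfl fun w _ => Finset.sum_congr rfl fun y _ => ?_
        simp only [e, thm1Joint, Equiv.coe_fn_symm_mk, law, ofLaw]
        ring
    _ = _ := by
        rw [← Finset.sum_mul_sum, ← Finset.sum_mul]
        simp only [relayJoint, relayInput, law, ofLaw]
        ring

theorem isPushforward_thm1Joint_destJoint :
    IsPushforward (thm1Joint n1 n2 p Q pV1 pV2 pX1 pX2 pX3)
      (fun ω => (((ω.1, ω.2.1), ω.2.2.2.2.1, ω.2.2.2.2.2.1, ω.2.2.2.2.2.2.1,
        ω.2.2.2.2.2.2.2.1, ω.2.2.2.2.2.2.2.2.1), ω.2.2.2.2.2.2.2.2.2.2))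
      (ofLaw p Q pV1 pV2 pX1 pX2 pX3).destJoint := fun φ => by
  let e : S1 × S2 × W3 × W × Fin n1 × Fin n2 × X1 × X2 × X3 × Y3 × Y ≃
      (((S1 × S2) × Inputs (Fin n1) (Fin n2) X1 X2 X3) × Y) × ((W × W3) × Y3) :=
    ⟨fun (s1, s2, w3, w, v1, v2, x1, x2, x3, y3, y) =>
        ((((s1, s2), (v1, v2, x1, x2, x3)), y), ((w, w3), y3)),
      fun ((((s1, s2), (v1, v2, x1, x2, x3)), y), ((w, w3), y3)) =>
        (s1, s2, w3, w, v1, v2, x1, x2, x3, y3, y), fun _ => rfl, fun _ => rfl⟩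
  rw [← e.symm.sum_comp, Fintype.sum_prod_type]
  refine Finset.sum_congr rfl fun x _ => ?_
  calc _ = ∑ v : W × W3, ∑ y3 : Y3, p (x.1.1.1, x.1.1.2, v.1, v.2) * (Q x.1.2.2.2 (x.2, y3) *
        ((ofLaw p Q pV1 pV2 pX1 pX2 pX3).law x.1.1 x.1.2 * φ x)) := by
        rw [Fintype.sum_prod_type]
        refine Finset.sum_congr rfl fun w _ => Finset.sum_congr rfl fun y _ => ?_
        simp only [e, thm1Joint, Equiv.coe_fn_symm_mk, law, ofLaw]
        ring
    _ = _ := by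
        rw [← Finset.sum_mul_sum, ← Finset.sum_mul, Fintype.sum_prod_type]
        simp only [destJoint, destInput, law, ofLaw]
        ring

end Thm1Joint

end Kernels

/-! ### Blocks of source letters and of channel uses -/

section Blocks

variable {S1 S2 W W3 X1 X2 X3 Y Y3 T M K : Type*}

/-- A block of source letters, read as the tuple of its component blocks. -/
def sourcePiEquiv (T S1 S2 W W3 : Type*) :
    (T → S1 × S2 × W × W3) ≃ (T → S1) × (T → S2) × (T → W) × (T → W3) where
  toFun F := (fun k => (F k).1, fun k => (F k).2.1, fun k => (F k).2.2.1, fun k => (F k).2.2.2)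
  invFun ω k := (ω.1 k, ω.2.1 k, ω.2.2.1 k, ω.2.2.2 k)

variable [Fintype T] [Fintype M]

/-- The law of a block of independent source letters. -/
def piSource (T : Type*) [Fintype T] (p : S1 × S2 × W × W3 → ℝ)
    (ω : (T → S1) × (T → S2) × (T → W) × (T → W3)) : ℝ :=
  ∏ k, p (ω.1 k, ω.2.1 k, ω.2.2.1 k, ω.2.2.2 k)

/-- The product of the channels `Q k`, acting on blocks of inputs. -/
def piChannel (Q : T → X1 × X2 × X3 → Y × Y3 → ℝ) (x : (T → X1) × (T → X2) × (T → X3))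
    (o : (T → Y) × (T → Y3)) : ℝ :=
  ∏ k, Q k (x.1 k, x.2.1 k, x.2.2 k) (o.1 k, o.2 k)

theorem isPmf_piSource [Fintype S1] [Fintype S2] [Fintype W] [Fintype W3] [DecidableEq T]
    {p : S1 × S2 × W × W3 → ℝ} (hp : IsPmf p) : IsPmf (piSource T p) := by
  refine ⟨fun _ => Finset.prod_nonneg fun _ _ => hp.1 _, ?_⟩
  rw [sum_eq_prod_sum (sourcePiEquiv T S1 S2 W W3) (ψ := fun _ => p) fun _ => rfl]
  exact Finset.prod_eq_one fun _ _ => hp.2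

variable [Fintype Y] [Fintype Y3]

theorem isPmf_piChannel [DecidableEq T] {Q : T → X1 × X2 × X3 → Y × Y3 → ℝ}
    (hQ : ∀ k x, IsPmf (Q k x)) (x : (T → X1) × (T → X2) × (T → X3)) :
    IsPmf (piChannel Q x) := by
  refine ⟨fun _ => Finset.prod_nonneg fun _ _ => (hQ _ _).1 _, ?_⟩
  rw [sum_eq_prod_sum (Equiv.arrowProdEquivProdArrow T _ _)
    (ψ := fun k => Q k (x.1 k, x.2.1 k, x.2.2 k)) fun _ => rfl]
  exact Finset.prod_eq_one fun _ _ => (hQ _ _).2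

/-- The constant channel, whose output is always `o`. -/
def muteChannel {X O : Type*} [DecidableEq O] (o : O) (_ : X) : O → ℝ :=
  Pi.single o 1

theorem isPmf_muteChannel {X O : Type*} [Fintype O] [DecidableEq O] (o : O) (x : X) :
    IsPmf (muteChannel o x) :=
  ⟨(Pi.single_nonneg.2 zero_le_one : (0 : O → ℝ) ≤ Pi.single o 1), Fintype.sum_pi_single' _ _⟩

/-- The channels for a block of letters `M ⊕ K`: the letters in `M` use `Q`, those in `K` are
mute. -/
def paddedChannel [DecidableEq Y] [DecidableEq Y3] (M K : Type*) (Q : X1 × X2 × X3 → Y × Y3 → ℝ)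
    (o : Y × Y3) : M ⊕ K → X1 × X2 × X3 → Y × Y3 → ℝ :=
  Sum.elim (fun _ => Q) fun _ => muteChannel o

theorem sum_piChannel_paddedChannel_mul [Fintype K] [DecidableEq M] [DecidableEq K] [DecidableEq Y]
    [DecidableEq Y3] (Q : X1 × X2 × X3 → Y × Y3 → ℝ) (o : Y × Y3)
    (x : (M ⊕ K → X1) × (M ⊕ K → X2) × (M ⊕ K → X3))
    (φ : (M ⊕ K → Y) × (M ⊕ K → Y3) → ℝ) :
    ∑ y, piChannel (paddedChannel M K Q o) x y * φ y =
      ∑ y, piChannel (fun _ : M => Q) (x.1 ∘ .inl, x.2.1 ∘ .inl, x.2.2 ∘ .inl) y *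
        φ (Sum.elim y.1 fun _ => o.1, Sum.elim y.2 fun _ => o.2) := by
  let e : (M → Y × Y3) × (K → Y × Y3) ≃ (M ⊕ K → Y) × (M ⊕ K → Y3) :=
    (Equiv.sumArrowEquivProdArrow M K (Y × Y3)).symm.trans (Equiv.arrowProdEquivProdArrow _ _ _)
  rw [← e.sum_comp, Fintype.sum_prod_type, ← (Equiv.arrowProdEquivProdArrow M _ _).sum_comp]
  refine Finset.sum_congr rfl fun y _ => ?_
  rw [Fintype.sum_eq_single fun _ => o]
  · have hmute : ∏ k : K, muteChannel o (x.1 (.inr k), x.2.1 (.inr k), x.2.2 (.inr k)) o = 1 :=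
      Finset.prod_eq_one fun _ _ => Pi.single_eq_same _ _
    have hmul := mul_one (∏ j, Q (x.1 (.inl j), x.2.1 (.inl j), x.2.2 (.inl j)) (y j))
    rw [piChannel, Fintype.prod_sum_type]
    exact congrArg₂ _ ((congrArg _ hmute).trans hmul) (congrArg φ (Prod.ext
      (funext (Sum.rec (fun _ => rfl) fun _ => rfl))
      (funext (Sum.rec (fun _ => rfl) fun _ => rfl))))
  · intro z hz
    obtain ⟨k, hk⟩ := Function.ne_iff.1 hz
    rw [piChannel, Fintype.prod_sum_type, Finset.prod_eq_zero (i := k) (Finset.mem_univ k)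
      (Pi.single_eq_of_ne hk _), mul_zero, zero_mul]

end Blocks

namespace Kernels

variable {S1 S2 W W3 V1 V2 X1 X2 X3 Y Y3 T : Type*} [Fintype W] [Fintype W3] [Fintype Y]
  [Fintype Y3]

theorem pi_ofLaw [Fintype T] [DecidableEq T] (p : S1 × S2 × W × W3 → ℝ)
    (Q : T → X1 × X2 × X3 → Y × Y3 → ℝ) (pV1 : V1 → ℝ) (pV2 : V2 → ℝ) (pX1 : S1 → V1 → X1 → ℝ)
    (pX2 : S2 → V2 → X2 → ℝ) (pX3 : V1 → V2 → X3 → ℝ) :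
    pi (fun k => ofLaw p (Q k) pV1 pV2 pX1 pX2 pX3) =
      ofLaw (piSource T p) (piChannel Q) (fun v => ∏ k, pV1 (v k)) (fun v => ∏ k, pV2 (v k))
        (fun s v x => ∏ k, pX1 (s k) (v k) (x k)) (fun s v x => ∏ k, pX2 (s k) (v k) (x k))
        fun v1 v2 x => ∏ k, pX3 (v1 k) (v2 k) (x k) := by
  simp only [pi, ofLaw, ← sum_pi_prod]
  rfl

variable [Fintype S1] [Fintype S2] {p : S1 × S2 × W × W3 → ℝ} {Q : X1 × X2 × X3 → Y × Y3 → ℝ}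
  {pV1 : V1 → ℝ} {pV2 : V2 → ℝ} {pX1 : S1 → V1 → X1 → ℝ} {pX2 : S2 → V2 → X2 → ℝ}
  {pX3 : V1 → V2 → X3 → ℝ}

theorem sum_pS_ofLaw_mul (φ : S1 × S2 → ℝ) :
    ∑ c, (ofLaw p Q pV1 pV2 pX1 pX2 pX3).pS c * φ c = ∑ ω, p ω * φ (ω.1, ω.2.1) := by
  simp only [ofLaw, Fintype.sum_prod_type, Finset.sum_mul]

theorem relayError_ofLaw (C : BlockCode S1 S2 W W3 X1 X2 X3 Y Y3) (a : S1 × S2) :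
    (ofLaw p Q pV1 pV2 pX1 pX2 pX3).relayError C a = C.relayErr p Q a := by
  simp only [BlockCode.relayErr, Fintype.sum_prod_type_right (α₁ := Y), ← Finset.sum_mul]
  simp only [relayError, ofLaw, mul_assoc, ← Finset.mul_sum]
  simp only [Fintype.sum_prod_type, Finset.sum_mul]
  exact Finset.sum_congr rfl fun _ _ => Finset.sum_congr rfl fun _ _ => Finset.sum_comm

theorem destError_ofLaw (C : BlockCode S1 S2 W W3 X1 X2 X3 Y Y3) (c : S1 × S2) :
    (ofLaw p Q pV1 pV2 pX1 pX2 pX3).destError C c = C.destErr p Q c := by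
  simp only [BlockCode.destErr, Fintype.sum_prod_type (α₁ := Y), ← Finset.sum_mul]
  simp only [destError, ofLaw, mul_assoc, ← Finset.mul_sum]
  simp only [Fintype.sum_prod_type, Finset.sum_mul]

end Kernels

/-! ### From block codes to letter codes -/

namespace BlockCode

variable {S1 S2 W W3 X1 X2 X3 Y Y3 X1' X2' X3' Y' Y3' : Type*}
  (C : BlockCode S1 S2 W W3 X1 X2 X3 Y Y3) {θ1 : X1 → X1'} {θ2 : X2 → X2'} {θ3 : X3 → X3'}
  {ηD : Y' → Y} {ηR : Y3' → Y3}

/-- The code `C` used over another channel, by transforming the inputs and the outputs. -/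
def mapChannel (θ1 : X1 → X1') (θ2 : X2 → X2') (θ3 : X3 → X3') (ηD : Y' → Y) (ηR : Y3' → Y3) :
    BlockCode S1 S2 W W3 X1' X2' X3' Y' Y3' where
  enc1 c s := θ1 (C.enc1 c s)
  enc2 c s := θ2 (C.enc2 c s)
  encRelay s := θ3 (C.encRelay s)
  decRelay a y := C.decRelay a (ηR y)
  decDest c y := C.decDest c (ηD y)

variable [Fintype S1] [Fintype S2] [Fintype W] [Fintype W3] [Fintype Y] [Fintype Y3] [Fintype Y']
  [Fintype Y3'] {p : S1 × S2 × W × W3 → ℝ} {Q : X1 × X2 × X3 → Y × Y3 → ℝ}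
  {Q' : X1' × X2' × X3' → Y' × Y3' → ℝ}

theorem relayErr_mapChannel (h : ∀ x (φ : Y × Y3 → ℝ), ∑ o, Q x o * φ o =
      ∑ o, Q' (θ1 x.1, θ2 x.2.1, θ3 x.2.2) o * φ (ηD o.1, ηR o.2)) (a : S1 × S2) :
    (C.mapChannel θ1 θ2 θ3 ηD ηR).relayErr p Q' a = C.relayErr p Q a :=
  Finset.sum_congr rfl fun ω _ => congrArg _ (h (C.send (ω.1, ω.2.1) a)
    fun o => ind (C.decRelay a o.2 ω.2.2.2 ≠ (ω.1, ω.2.1))).symm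

theorem destErr_mapChannel (h : ∀ x (φ : Y × Y3 → ℝ), ∑ o, Q x o * φ o =
      ∑ o, Q' (θ1 x.1, θ2 x.2.1, θ3 x.2.2) o * φ (ηD o.1, ηR o.2)) (c : S1 × S2) :
    (C.mapChannel θ1 θ2 θ3 ηD ηR).destErr p Q' c = C.destErr p Q c :=
  Finset.sum_congr rfl fun ω _ => congrArg _ (h (C.send c (ω.1, ω.2.1))
    fun o => ind (C.decDest c o.1 ω.2.2.1 ≠ (ω.1, ω.2.1))).symm

end BlockCode

namespace MarcCode

variable {S1 S2 W W3 X1 X2 X3 Y Y3 T M : Type*} {m n b b' : ℕ}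

/-- A code for blocks of source letters and of channel uses, spelled out letter by letter. Here `ε`
and `κ` give the block and the position within the block of a source letter and of a channel
use. -/
def unblock (C : MarcCode (T → S1) (T → S2) (T → W) (T → W3) (M → X1) (M → X2) (M → X3) (M → Y)
    (M → Y3) b b') (ε : Fin m ≃ Fin b × T) (κ : Fin n ≃ Fin b' × M)
    (hκ : ∀ i j, (κ j).1 < (κ i).1 → j < i) : MarcCode S1 S2 W W3 X1 X2 X3 Y Y3 m n where
  enc1 s i := C.enc1 (fun j t => s (ε.symm (j, t))) (κ i).1 (κ i).2
  enc2 s i := C.enc2 (fun j t => s (ε.symm (j, t))) (κ i).1 (κ i).2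
  encRelay i y w :=
    C.encRelay (κ i).1 (fun j l => y (κ.symm (j, l))) (fun j t => w (ε.symm (j, t))) (κ i).2
  dec y w i :=
    let d := C.dec (fun j l => y (κ.symm (j, l))) (fun j t => w (ε.symm (j, t))) (ε i).1
    (d.1 (ε i).2, d.2 (ε i).2)
  causal i y y' w h := congrFun (C.causal _ _ _ _ fun j hj => funext fun l => h _ (hκ _ _ (by
    rwa [κ.apply_symm_apply]))) _

/-- A sequence of letters, read as a sequence of blocks. Here `κ` gives the block and the position
within the block of a letter, and `e` the encoding of a block. -/
def blocksEquiv {A B : Type*} (κ : Fin n ≃ Fin b × M) (e : (M → A) ≃ B) :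
    (Fin n → A) ≃ (Fin b → B) :=
  (κ.arrowCongr (Equiv.refl A)).trans ((Equiv.curry _ _ _).trans (Equiv.piCongrRight fun _ => e))

variable {p : S1 × S2 × W × W3 → ℝ} {Q : X1 × X2 × X3 → Y × Y3 → ℝ}
  {C : MarcCode (T → S1) (T → S2) (T → W) (T → W3) (M → X1) (M → X2) (M → X3) (M → Y) (M → Y3) b b'}
  {ε : Fin m ≃ Fin b × T} {κ : Fin n ≃ Fin b' × M} {hκ : ∀ i j, (κ j).1 < (κ i).1 → j < i}

theorem outputLaw_unblock [Fintype M] (ω : Fin m → S1 × S2 × W × W3) (o : Fin n → Y × Y3) :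
    (C.unblock ε κ hκ).outputLaw Q ω o =
      C.outputLaw (piChannel fun _ : M => Q) (blocksEquiv ε (sourcePiEquiv T S1 S2 W W3) ω)
        (blocksEquiv κ (Equiv.arrowProdEquivProdArrow M _ _) o) := by
  rw [outputLaw, ← κ.symm.prod_comp, Fintype.prod_prod_type]
  simp only [inputs, unblock, κ.apply_symm_apply]
  rfl

theorem errs_unblock_iff (ω : Fin m → S1 × S2 × W × W3) (o : Fin n → Y × Y3) :
    (C.unblock ε κ hκ).Errs ω o ↔ C.Errs (blocksEquiv ε (sourcePiEquiv T S1 S2 W W3) ω)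
      (blocksEquiv κ (Equiv.arrowProdEquivProdArrow M _ _) o) := by
  refine not_congr ⟨fun h => funext fun j => Prod.ext (funext fun t => ?_) (funext fun t => ?_),
    fun h => funext fun i => ?_⟩
  · have ht := congrArg Prod.fst (congrFun h (ε.symm (j, t)))
    simp only [unblock, ε.apply_symm_apply] at ht
    exact ht
  · have ht := congrArg Prod.snd (congrFun h (ε.symm (j, t)))
    simp only [unblock, ε.apply_symm_apply] at ht
    exact ht
  · have hi := congrFun h (ε i).1
    calc _ = ((ω (ε.symm (ε i))).1, (ω (ε.symm (ε i))).2.1) :=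
          Prod.ext (congrFun (congrArg Prod.fst hi) (ε i).2 :)
            (congrFun (congrArg Prod.snd hi) (ε i).2 :)
      _ = _ := by rw [ε.symm_apply_apply]

theorem errProb_unblock [Fintype S1] [Fintype S2] [Fintype W] [Fintype W3] [Fintype Y] [Fintype Y3]
    [Fintype T] [Fintype M] [DecidableEq T] [DecidableEq M] :
    (C.unblock ε κ hκ).errProb p Q = C.errProb (piSource T p) (piChannel fun _ : M => Q) := by
  rw [errProb, errProb, ← (blocksEquiv ε (sourcePiEquiv T S1 S2 W W3)).sum_comp]
  refine Finset.sum_congr rfl fun ω _ => congrArg₂ _ ?_ ?_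
  · rw [← ε.symm.prod_comp, Fintype.prod_prod_type]
    rfl
  · rw [← (blocksEquiv κ (Equiv.arrowProdEquivProdArrow M _ _)).sum_comp]
    simp only [outputLaw_unblock, errs_unblock_iff]

theorem marcErrProb_eq_errProb [Fintype S1] [Fintype S2] [Fintype W] [Fintype W3] [Fintype Y]
    [Fintype Y3] [DecidableEq S1] [DecidableEq S2] (C : MarcCode S1 S2 W W3 X1 X2 X3 Y Y3 n n) :
    marcErrProb p Q n C.enc1 C.enc2 C.encRelay
      (fun y w => (fun i => (C.dec y w i).1, fun i => (C.dec y w i).2)) = C.errProb p Q := by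
  rw [errProb, ← (sourcePiEquiv (Fin n) S1 S2 W W3).symm.sum_comp]
  simp only [← (Equiv.arrowProdEquivProdArrow (Fin n) (fun _ => Y) fun _ => Y3).symm.sum_comp,
    Fintype.sum_prod_type, Finset.mul_sum]
  refine Finset.sum_congr rfl fun s1 _ => Finset.sum_congr rfl fun s2 _ =>
    Finset.sum_congr rfl fun w _ => Finset.sum_congr rfl fun w3 _ =>
    Finset.sum_congr rfl fun y _ => Finset.sum_congr rfl fun y3 _ => ?_
  have hErrs : C.Errs ((sourcePiEquiv (Fin n) S1 S2 W W3).symm (s1, s2, w, w3))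
      ((Equiv.arrowProdEquivProdArrow (Fin n) (fun _ => Y) fun _ => Y3).symm (y, y3)) ↔
      (fun i => (C.dec y w i).1, fun i => (C.dec y w i).2) ≠ (s1, s2) :=
    not_congr ((Equiv.arrowProdEquivProdArrow (Fin n) (fun _ => S1) fun _ => S2).eq_symm_apply
      (y := C.dec y w) (x := (s1, s2)))
  split_ifs with h
  · rw [ind_of (hErrs.2 h), mul_one]
    rfl
  · rw [ind_of_not (mt hErrs.1 h), mul_zero, mul_zero]

theorem marcReliablyTransmitted_of_errProb_le [Fintype S1] [Fintype S2] [Fintype W] [Fintype W3]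
    [Fintype Y] [Fintype Y3] [DecidableEq S1] [DecidableEq S2]
    (h : ∀ δ > 0, ∃ n > 0, ∃ C : MarcCode S1 S2 W W3 X1 X2 X3 Y Y3 n n, C.errProb p Q ≤ δ) :
    MarcReliablyTransmitted p Q := fun δ hδ => by
  obtain ⟨n, hn, C, hC⟩ := h δ hδ
  exact ⟨n, hn, C.enc1, C.enc2, C.encRelay, _, C.causal, C.marcErrProb_eq_errProb.trans_le hC⟩

end MarcCode

/-! ### Reliable transmission from small Chernoff sums -/

theorem nonempty_of_isPmf {α : Type*} [Fintype α] {p : α → ℝ} (hp : IsPmf p) : Nonempty α := by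
  by_contra h
  rw [not_nonempty_iff] at h
  simpa using hp.2

theorem exists_mul_sum_pow_mul_pow_le {ι : Type*} [Fintype ι] {f g : ι → ℝ} (hf : ∀ i, 0 ≤ f i)
    (hf1 : ∀ i, f i < 1) (hg : ∀ i, 0 ≤ g i) {δ : ℝ} (hδ : 0 < δ) :
    ∃ B r : ℕ, 0 < B ∧ 0 < r ∧ 2 * B * ∑ i, f i ^ (B * r) * g i ^ r ≤ δ := by
  have hB : ∀ᶠ B : ℕ in Filter.atTop, ∀ i, f i ^ B * g i < 1 := by
    refine Filter.eventually_all.2 fun i => ?_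
    have h := (tendsto_pow_atTop_nhds_zero_of_lt_one (hf i) (hf1 i)).mul_const (g i)
    rw [zero_mul] at h
    exact h.eventually (gt_mem_nhds one_pos)
  obtain ⟨B, hlt, hB0⟩ := (hB.and (Filter.eventually_gt_atTop 0)).exists
  have hr : Filter.Tendsto (fun r : ℕ => 2 * (B : ℝ) * ∑ i, (f i ^ B * g i) ^ r) Filter.atTop
      (nhds (2 * B * ∑ _i : ι, 0)) :=
    (tendsto_finsetSum _ fun i _ => tendsto_pow_atTop_nhds_zero_of_lt_one
      (mul_nonneg (pow_nonneg (hf i) _) (hg i)) (hlt i)).const_mul _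
  rw [Finset.sum_const_zero, mul_zero] at hr
  obtain ⟨r, hle, hr0⟩ :=
    ((hr.eventually (gt_mem_nhds hδ)).and (Filter.eventually_gt_atTop 0)).exists
  refine ⟨B, r, hB0, hr0, ?_⟩
  simp only [pow_mul, ← mul_pow]
  exact hle.le

namespace Kernels

variable {S1 S2 W W3 V1 V2 X1 X2 X3 Y Y3 : Type*}
  [Fintype S1] [Fintype S2] [Fintype W] [Fintype W3] [Fintype V1] [Fintype V2]
  [Fintype X1] [Fintype X2] [Fintype X3] [Fintype Y] [Fintype Y3]

/-- The Chernoff sums of the six events considered in the theorem: the three error patterns at the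
relay (`inl`) and at the destination (`inr`). -/
noncomputable def chernoff (D : Kernels S1 S2 W W3 V1 V2 X1 X2 X3 Y Y3) :
    ErrorPattern ⊕ ErrorPattern → ℝ → ℝ :=
  Sum.elim D.relayChernoff D.destChernoff

theorem Valid.chernoff_nonneg {D : Kernels S1 S2 W W3 V1 V2 X1 X2 X3 Y Y3} (hD : D.Valid)
    (i : ErrorPattern ⊕ ErrorPattern) (t : ℝ) : 0 ≤ D.chernoff i t :=
  i.rec (hD.relayChernoff_nonneg · t) (hD.destChernoff_nonneg · t)

theorem chernoff_pi {T : Type*} [Fintype T] [DecidableEq T]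
    {D : T → Kernels S1 S2 W W3 V1 V2 X1 X2 X3 Y Y3} (hD : ∀ k, (D k).Valid)
    (i : ErrorPattern ⊕ ErrorPattern) (t : ℝ) : (pi D).chernoff i t = ∏ k, (D k).chernoff i t :=
  i.rec (relayChernoff_pi hD · t) (destChernoff_pi hD · t)

variable {p : S1 × S2 × W × W3 → ℝ}
  {Q : X1 × X2 × X3 → Y × Y3 → ℝ} {pV1 : V1 → ℝ} {pV2 : V2 → ℝ} {pX1 : S1 → V1 → X1 → ℝ}
  {pX2 : S2 → V2 → X2 → ℝ} {pX3 : V1 → V2 → X3 → ℝ} {t : ErrorPattern ⊕ ErrorPattern → ℝ}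

theorem Valid.exists_blockCode [Nonempty S1] [Nonempty S2]
    (hD : (ofLaw p Q pV1 pV2 pX1 pX2 pX3).Valid) (ht0 : ∀ i, 0 ≤ t i) (ht1 : ∀ i, t i ≤ 1) :
    ∃ C : BlockCode S1 S2 W W3 X1 X2 X3 Y Y3,
      ∑ ω, p ω * C.relayErr p Q (ω.1, ω.2.1) ≤
        ∑ i, (ofLaw p Q pV1 pV2 pX1 pX2 pX3).chernoff i (t i) ∧
      ∑ ω, p ω * C.destErr p Q (ω.1, ω.2.1) ≤
        ∑ i, (ofLaw p Q pV1 pV2 pX1 pX2 pX3).chernoff i (t i) := by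
  obtain ⟨C, hC⟩ := hD.exists_code (fun k => ht0 (.inl k)) (fun k => ht1 (.inl k))
    (fun k => ht0 (.inr k)) fun k => ht1 (.inr k)
  have hR := sum_mul_nonneg hD.pS.1 (hD.relayError_nonneg C)
  have hD' := sum_mul_nonneg hD.pS.1 (hD.destError_nonneg C)
  simp only [sum_pS_ofLaw_mul, relayError_ofLaw, destError_ofLaw] at hR hD' hC
  rw [Fintype.sum_sum_type]
  exact ⟨C, (le_add_of_nonneg_right hD').trans hC, (le_add_of_nonneg_left hR).trans hC⟩

theorem Valid.exists_blockCode_padded {M K : Type*} [Fintype M] [Fintype K] [DecidableEq M]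
    [DecidableEq K] [DecidableEq Y] [DecidableEq Y3] [Nonempty S1] [Nonempty S2] (hp : IsPmf p)
    (hQ : ∀ x, IsPmf (Q x)) (hD : (ofLaw p Q pV1 pV2 pX1 pX2 pX3).Valid) (ht0 : ∀ i, 0 ≤ t i)
    (ht1 : ∀ i, t i ≤ 1) (o : Y × Y3) {e : ℝ}
    (he : ∑ i, (ofLaw p Q pV1 pV2 pX1 pX2 pX3).chernoff i (t i) ^ Fintype.card M *
      (ofLaw p (muteChannel o) pV1 pV2 pX1 pX2 pX3).chernoff i (t i) ^ Fintype.card K ≤ e) :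
    ∃ C : BlockCode (M ⊕ K → S1) (M ⊕ K → S2) (M ⊕ K → W) (M ⊕ K → W3) (M → X1) (M → X2) (M → X3)
        (M → Y) (M → Y3),
      ∑ ω, piSource (M ⊕ K) p ω *
          C.relayErr (piSource (M ⊕ K) p) (piChannel fun _ => Q) (ω.1, ω.2.1) ≤ e ∧
      ∑ ω, piSource (M ⊕ K) p ω *
          C.destErr (piSource (M ⊕ K) p) (piChannel fun _ => Q) (ω.1, ω.2.1) ≤ e := by
  have hvalid (k : M ⊕ K) : (ofLaw p (paddedChannel M K Q o k) pV1 pV2 pX1 pX2 pX3).Valid :=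
    valid_ofLaw hp (k.rec (fun _ => hQ) fun _ => isPmf_muteChannel o) hD.pV1 hD.pV2 hD.pX1 hD.pX2
      hD.pX3
  have hchernoff : ∑ i,
      (Kernels.pi fun k => ofLaw p (paddedChannel M K Q o k) pV1 pV2 pX1 pX2 pX3).chernoff i (t i) ≤
      e := by
    simp only [chernoff_pi hvalid, Fintype.prod_sum_type]
    simpa only [paddedChannel, Sum.elim_inl, Sum.elim_inr, Finset.prod_const, Finset.card_univ]
  have hpi := Valid.pi hvalid
  rw [pi_ofLaw] at hpi hchernoff
  obtain ⟨C, hR, hD'⟩ := hpi.exists_blockCode ht0 ht1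
  have hmute := sum_piChannel_paddedChannel_mul (M := M) (K := K) Q o
  refine ⟨C.mapChannel (· ∘ .inl) (· ∘ .inl) (· ∘ .inl) (Sum.elim · fun _ => o.1)
    (Sum.elim · fun _ => o.2), Eq.trans_le ?_ (hR.trans hchernoff),
    Eq.trans_le ?_ (hD'.trans hchernoff)⟩
  · exact Finset.sum_congr rfl fun ω _ => congrArg _ (C.relayErr_mapChannel hmute _)
  · exact Finset.sum_congr rfl fun ω _ => congrArg _ (C.destErr_mapChannel hmute _)

theorem Valid.marcReliablyTransmitted [DecidableEq S1] [DecidableEq S2] (hp : IsPmf p)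
    (hQ : ∀ x, IsPmf (Q x)) (hD : (ofLaw p Q pV1 pV2 pX1 pX2 pX3).Valid)
    (h : ∀ i, ∃ t, 0 < t ∧ t < 1 ∧ (ofLaw p Q pV1 pV2 pX1 pX2 pX3).chernoff i t < 1) :
    MarcReliablyTransmitted p Q := by
  classical
  choose t ht0 ht1 ht using h
  refine MarcCode.marcReliablyTransmitted_of_errProb_le fun δ hδ => ?_
  obtain ⟨s1, s2, -, -⟩ := nonempty_of_isPmf hp
  obtain ⟨v1⟩ := nonempty_of_isPmf hD.pV1
  obtain ⟨v2⟩ := nonempty_of_isPmf hD.pV2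
  obtain ⟨x1⟩ := nonempty_of_isPmf (hD.pX1 s1 v1)
  obtain ⟨x2⟩ := nonempty_of_isPmf (hD.pX2 s2 v2)
  obtain ⟨x3⟩ := nonempty_of_isPmf (hD.pX3 v1 v2)
  obtain ⟨o⟩ := nonempty_of_isPmf (hQ (x1, x2, x3))
  have : Nonempty S1 := ⟨s1⟩
  have : Nonempty S2 := ⟨s2⟩
  have : Nonempty (Y × Y3) := ⟨o⟩
  have hmute := valid_ofLaw hp (isPmf_muteChannel o) hD.pV1 hD.pV2 hD.pX1 hD.pX2 hD.pX3
  obtain ⟨B, r, hB, hr, hδ⟩ := exists_mul_sum_pow_mul_pow_le (fun i => hD.chernoff_nonneg i (t i))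
    ht (fun i => hmute.chernoff_nonneg i (t i)) hδ
  obtain ⟨C, hCR, hCD⟩ := hD.exists_blockCode_padded (M := Fin (B * r)) (K := Fin r) hp hQ
    (fun i => (ht0 i).le) (fun i => (ht1 i).le) o le_rfl
  simp only [Fintype.card_fin] at hCR hCD
  have : Nonempty ((Fin (B * r) → Y) × (Fin (B * r) → Y3)) := ⟨fun _ => o.1, fun _ => o.2⟩
  obtain ⟨a, c, hC⟩ := C.exists_errProb_toMarcCode_le (isPmf_piSource hp)
    (isPmf_piChannel fun _ => hQ) hCR hCD B
  have hcard : (B + 1) * (B * r) = Fintype.card (Fin B × (Fin (B * r) ⊕ Fin r)) := by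
    simp only [Fintype.card_prod, Fintype.card_sum, Fintype.card_fin]
    ring
  have horder (i j : Fin ((B + 1) * (B * r)))
      (hij : (finProdFinEquiv.symm j).1 < (finProdFinEquiv.symm i).1) : j < i := by
    by_contra! hle
    exact hij.not_ge (Nat.div_le_div_right hle)
  refine ⟨(B + 1) * (B * r), by positivity,
    (C.toMarcCode a c B).unblock (Fintype.equivOfCardEq ((Fintype.card_fin _).trans hcard))
      finProdFinEquiv.symm horder, ?_⟩
  rw [MarcCode.errProb_unblock]
  exact hC.trans hδ

end Kernels

end MARC

open MARC MARC.Kernels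

/-- **Theorem 1** (joint source-channel coding for the MARC; CPM to the relay and
Slepian-Wolf coding to the destination). -/
theorem marc_cpm_relay_sw_destination
    {S1 S2 W W3 X1 X2 X3 Y Y3 : Type*}
    [Fintype S1] [Fintype S2] [Fintype W] [Fintype W3]
    [Fintype X1] [Fintype X2] [Fintype X3] [Fintype Y] [Fintype Y3]
    [DecidableEq S1] [DecidableEq S2] [DecidableEq W] [DecidableEq W3]
    [DecidableEq X1] [DecidableEq X2] [DecidableEq X3] [DecidableEq Y] [DecidableEq Y3]
    (pSrc : S1 × S2 × W × W3 → ℝ) (hSrc : IsPmf pSrc)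
    (Q : X1 × X2 × X3 → Y × Y3 → ℝ) (hQ : ∀ x, IsPmf (Q x))
    (h : ∃ (n1 n2 : ℕ) (pV1 : Fin n1 → ℝ) (pV2 : Fin n2 → ℝ)
        (pX1 : S1 → Fin n1 → X1 → ℝ) (pX2 : S2 → Fin n2 → X2 → ℝ)
        (pX3 : Fin n1 → Fin n2 → X3 → ℝ),
        IsPmf pV1 ∧ IsPmf pV2 ∧
        (∀ s v, IsPmf (pX1 s v)) ∧ (∀ s v, IsPmf (pX2 s v)) ∧
        (∀ v1 v2, IsPmf (pX3 v1 v2)) ∧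
        (let μ := thm1Joint n1 n2 pSrc Q pV1 pV2 pX1 pX2 pX3
        -- H(S1|S2,W3) < I(X1;Y3|S2,X2,V1,X3,W3)
        (condEntropyOf μ (fun (s1,_,_,_,_,_,_,_,_,_,_) => s1)
            (fun (_,s2,w3,_,_,_,_,_,_,_,_) => (s2, w3)) <
          condMutualInfoOf μ (fun (_,_,_,_,_,_,x1,_,_,_,_) => x1)
            (fun (_,_,_,_,_,_,_,_,_,y3,_) => y3)
            (fun (_,s2,w3,_,v1,_,_,x2,x3,_,_) => (s2, x2, v1, x3, w3))) ∧
        -- H(S2|S1,W3) < I(X2;Y3|S1,X1,V2,X3,W3)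
        (condEntropyOf μ (fun (_,s2,_,_,_,_,_,_,_,_,_) => s2)
            (fun (s1,_,w3,_,_,_,_,_,_,_,_) => (s1, w3)) <
          condMutualInfoOf μ (fun (_,_,_,_,_,_,_,x2,_,_,_) => x2)
            (fun (_,_,_,_,_,_,_,_,_,y3,_) => y3)
            (fun (s1,_,w3,_,_,v2,x1,_,x3,_,_) => (s1, x1, v2, x3, w3))) ∧
        -- H(S1,S2|W3) < I(X1,X2;Y3|V1,V2,X3,W3)
        (condEntropyOf μ (fun (s1,s2,_,_,_,_,_,_,_,_,_) => (s1, s2))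
            (fun (_,_,w3,_,_,_,_,_,_,_,_) => w3) <
          condMutualInfoOf μ (fun (_,_,_,_,_,_,x1,x2,_,_,_) => (x1, x2))
            (fun (_,_,_,_,_,_,_,_,_,y3,_) => y3)
            (fun (_,_,w3,_,v1,v2,_,_,x3,_,_) => (v1, v2, x3, w3))) ∧
        -- H(S1|S2,W) < I(X1,X3;Y|S1,X2,V2)
        (condEntropyOf μ (fun (s1,_,_,_,_,_,_,_,_,_,_) => s1)
            (fun (_,s2,_,w,_,_,_,_,_,_,_) => (s2, w)) <
          condMutualInfoOf μ (fun (_,_,_,_,_,_,x1,_,x3,_,_) => (x1, x3))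
            (fun (_,_,_,_,_,_,_,_,_,_,y) => y)
            (fun (s1,_,_,_,_,v2,_,x2,_,_,_) => (s1, x2, v2))) ∧
        -- H(S2|S1,W) < I(X2,X3;Y|S2,X1,V1)
        (condEntropyOf μ (fun (_,s2,_,_,_,_,_,_,_,_,_) => s2)
            (fun (s1,_,_,w,_,_,_,_,_,_,_) => (s1, w)) <
          condMutualInfoOf μ (fun (_,_,_,_,_,_,_,x2,x3,_,_) => (x2, x3))
            (fun (_,_,_,_,_,_,_,_,_,_,y) => y)
            (fun (_,s2,_,_,v1,_,x1,_,_,_,_) => (s2, x1, v1))) ∧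
        -- H(S1,S2|W) < I(X1,X2,X3;Y|S1,S2)
        (condEntropyOf μ (fun (s1,s2,_,_,_,_,_,_,_,_,_) => (s1, s2))
            (fun (_,_,_,w,_,_,_,_,_,_,_) => w) <
          condMutualInfoOf μ (fun (_,_,_,_,_,_,x1,x2,x3,_,_) => (x1, x2, x3))
            (fun (_,_,_,_,_,_,_,_,_,_,y) => y)
            (fun (s1,s2,_,_,_,_,_,_,_,_,_) => (s1, s2))))) :
    MarcReliablyTransmitted pSrc Q := by
  obtain ⟨n1, n2, pV1, pV2, pX1, pX2, pX3, hV1, hV2, hX1, hX2, hX3, hR1, hR2, hR12, hD1, hD2,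
    hD12⟩ := h
  have hvalid := valid_ofLaw hSrc hQ hV1 hV2 hX1 hX2 hX3
  have hRs := isPushforward_thm1Joint_relaySource hvalid hQ
  have hDs := isPushforward_thm1Joint_destSource hvalid hQ
  have hRj := isPushforward_thm1Joint_relayJoint pSrc Q pV1 pV2 pX1 pX2 pX3
  have hDj := isPushforward_thm1Joint_destJoint pSrc Q pV1 pV2 pX1 pX2 pX3
  refine hvalid.marcReliablyTransmitted hSrc hQ ?_
  rintro ((_ | _ | _) | (_ | _ | _))
  · exact hvalid.exists_relayChernoff_fst_lt_one
      (by rwa [← hRs.condEntropyOf_comp, ← hRj.condMutualInfoOf_comp])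
  · exact hvalid.exists_relayChernoff_snd_lt_one
      (by rwa [← hRs.condEntropyOf_comp, ← hRj.condMutualInfoOf_comp])
  · exact hvalid.exists_relayChernoff_both_lt_one
      (by rwa [← hRs.condEntropyOf_comp, ← hRj.condMutualInfoOf_comp])
  · exact hvalid.exists_destChernoff_fst_lt_one
      (by rwa [← hDs.condEntropyOf_comp, ← hDj.condMutualInfoOf_comp])
  · exact hvalid.exists_destChernoff_snd_lt_one
      (by rwa [← hDs.condEntropyOf_comp, ← hDj.condMutualInfoOf_comp])
  · exact hvalid.exists_destChernoff_both_lt_one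
      (by rwa [← hDs.condEntropyOf_comp, ← hDj.condMutualInfoOf_comp])
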